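/- arXiv:1811.03693 — 2 statements merged into one kernel-verified Lean document; each statement's English description precedes it below -/
import Mathlib

section
/- Let d ∈ {2,3}. For every α ∈ (0,1) there exists a constant C = C(α,d) > 0 such that the following holds for all ε > 0 and M₁, M₂ ≥ 0. Let Ū : 𝕋^d → ℝ satisfy sup_x |Ū(x)| ≤ M₁ and ‖Ū‖_{C^{0,α}(𝕋^d)} ≤ M₂, and let Û ∈ C²(𝕋^d) satisfy ε² Δ Û = e^{Ū+Û} − 1 pointwise on 𝕋^d. Then the second derivatives of Û are α-Hölder continuous and ‖Û‖_{C^{2,α}(𝕋^d)} ≤ [ M₂ + C ε^{−2} ( e^{2 M₁} + 1 ) ] · exp[ C ε^{−2} ( e^{2 M₁} + 1 ) ]. -/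
open MeasureTheory Real Set
open scoped ENNReal

noncomputable section

/-- The fundamental domain `[0,1)^d` of the flat torus `𝕋^d = ℝ^d/ℤ^d`. -/
def Tcube (d : ℕ) : Set (Fin d → ℝ) := Set.univ.pi fun _ => Set.Ico (0:ℝ) 1

/-- The Haar (Lebesgue) probability measure on the torus `𝕋^d`, realised as Lebesgue
measure restricted to the fundamental domain `[0,1)^d`. -/
def torusMeasure (d : ℕ) : Measure (Fin d → ℝ) := volume.restrict (Tcube d)

/-- The Euclidean norm on `ℝ^d`. -/
def euclNorm {d : ℕ} (v : Fin d → ℝ) : ℝ := Real.sqrt (∑ i, (v i) ^ 2)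

/-- The lattice vector in `ℝ^d` associated to `k ∈ ℤ^d`. -/
def latVec {d : ℕ} (k : Fin d → ℤ) : Fin d → ℝ := fun i => (k i : ℝ)

/-- `ℤ^d`-periodicity of a function on `ℝ^d`; such functions are exactly the functions
on the torus `𝕋^d`. -/
def ZPeriodic {d : ℕ} {α : Type*} (f : (Fin d → ℝ) → α) : Prop :=
  ∀ (x : Fin d → ℝ) (k : Fin d → ℤ), f (x + latVec k) = f x

/-- The quotient (flat) metric on the torus `𝕋^d`, expressed on representatives in `ℝ^d`. -/
def tdist {d : ℕ} (x y : Fin d → ℝ) : ℝ := ⨅ k : Fin d → ℤ, euclNorm (x - y + latVec k)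

/-- The gradient of a scalar function on `ℝ^d`, as an `ℝ^d`-valued function. -/
def grad {d : ℕ} (U : (Fin d → ℝ) → ℝ) (x : Fin d → ℝ) : Fin d → ℝ :=
  fun i => fderiv ℝ U x (Pi.single i 1)

/-- The Laplacian: the sum of the second partial derivatives. -/
def lap {d : ℕ} (U : (Fin d → ℝ) → ℝ) (x : Fin d → ℝ) : ℝ :=
  ∑ i, fderiv ℝ (fun y => fderiv ℝ U y (Pi.single i 1)) x (Pi.single i 1)

/-- The Hessian matrix of second partial derivatives. -/
def hess {d : ℕ} (U : (Fin d → ℝ) → ℝ) (x : Fin d → ℝ) : Fin d → Fin d → ℝ :=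
  fun i j => fderiv ℝ (fun y => fderiv ℝ U y (Pi.single j 1)) x (Pi.single i 1)

/-- Frobenius (Euclidean) norm of a `d × d` matrix. -/
def frobNorm {d : ℕ} (M : Fin d → Fin d → ℝ) : ℝ := Real.sqrt (∑ i, ∑ j, (M i j) ^ 2)

/-- Euclidean dot product on `ℝ^d`. -/
def dotP {d : ℕ} (v w : Fin d → ℝ) : ℝ := ∑ i, v i * w i

/-- `HolderBnd α u K` expresses that the Hölder norm `‖u‖_{C^{0,α}(𝕋^d)}`, i.e. the sup
norm plus the `α`-Hölder seminorm with respect to the torus metric, is at most `K`. -/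
def HolderBnd {d : ℕ} (α : ℝ) (u : (Fin d → ℝ) → ℝ) (K : ℝ) : Prop :=
  ∃ A B : ℝ, 0 ≤ A ∧ 0 ≤ B ∧ A + B ≤ K ∧ (∀ x, |u x| ≤ A) ∧
    ∀ x y, |u x - u y| ≤ B * tdist x y ^ α

/-- Hölder norm bound for an `ℝ^d`-valued function, with the Euclidean norm on values. -/
def HolderBndVec {d : ℕ} (α : ℝ) (G : (Fin d → ℝ) → Fin d → ℝ) (K : ℝ) : Prop :=
  ∃ A B : ℝ, 0 ≤ A ∧ 0 ≤ B ∧ A + B ≤ K ∧ (∀ x, euclNorm (G x) ≤ A) ∧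
    ∀ x y, euclNorm (G x - G y) ≤ B * tdist x y ^ α

/-- Hölder norm bound for a matrix-valued function. -/
def HolderBndMat {d : ℕ} (α : ℝ) (M : (Fin d → ℝ) → Fin d → Fin d → ℝ) (K : ℝ) : Prop :=
  ∃ A B : ℝ, 0 ≤ A ∧ 0 ≤ B ∧ A + B ≤ K ∧ (∀ x, frobNorm (M x) ≤ A) ∧
    ∀ x y, frobNorm (M x - M y) ≤ B * tdist x y ^ α

/-- `C1Bnd α u K` expresses `‖u‖_{C^{1,α}(𝕋^d)} ≤ K` (the `C^{0,α}` norm of `u` plus the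
`C^{0,α}` norm of its gradient is at most `K`). -/
def C1Bnd {d : ℕ} (α : ℝ) (u : (Fin d → ℝ) → ℝ) (K : ℝ) : Prop :=
  ∃ K₀ K₁ : ℝ, 0 ≤ K₀ ∧ 0 ≤ K₁ ∧ K₀ + K₁ ≤ K ∧
    HolderBnd α u K₀ ∧ HolderBndVec α (grad u) K₁

/-- `C2Bnd α u K` expresses that the second derivatives of `u` are `α`-Hölder continuous
and `‖u‖_{C^{2,α}(𝕋^d)} ≤ K`. -/
def C2Bnd {d : ℕ} (α : ℝ) (u : (Fin d → ℝ) → ℝ) (K : ℝ) : Prop :=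
  ∃ K₀ K₁ K₂ : ℝ, 0 ≤ K₀ ∧ 0 ≤ K₁ ∧ 0 ≤ K₂ ∧ K₀ + K₁ + K₂ ≤ K ∧
    HolderBnd α u K₀ ∧ HolderBndVec α (grad u) K₁ ∧ HolderBndMat α (hess u) K₂

/-- A coupling of two measures: a measure on the product whose marginals are `μ` and `ν`. -/
def IsCoupling {X : Type*} [MeasurableSpace X] (cpl : Measure (X × X)) (μ ν : Measure X) : Prop :=
  cpl.map Prod.fst = μ ∧ cpl.map Prod.snd = ν

/-- `W_q^q`: the `q`-th power of the Wasserstein distance of order `q` on the torus,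
defined as the infimum over couplings of the integral of the `q`-th power of the torus
distance. -/
def WassPow {d : ℕ} (q : ℝ) (μ ν : Measure (Fin d → ℝ)) : ℝ :=
  sInf { c | ∃ cpl : Measure ((Fin d → ℝ) × (Fin d → ℝ)), IsProbabilityMeasure cpl ∧
    IsCoupling cpl μ ν ∧ c = ∫ z, tdist z.1 z.2 ^ q ∂cpl }

/-- The Wasserstein distance of order `p` on the torus. -/
def Wass {d : ℕ} (p : ℝ) (μ ν : Measure (Fin d → ℝ)) : ℝ :=
  sInf { c | ∃ cpl : Measure ((Fin d → ℝ) × (Fin d → ℝ)), IsProbabilityMeasure cpl ∧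
    IsCoupling cpl μ ν ∧ c = (∫ z, tdist z.1 z.2 ^ p ∂cpl) ^ (1/p) }

/-- The measure `h dx` on the torus associated to a density `h`. -/
def densMeasure {d : ℕ} (h : (Fin d → ℝ) → ℝ) : Measure (Fin d → ℝ) :=
  (torusMeasure d).withDensity fun x => ENNReal.ofReal (h x)

/-- The `L^p(𝕋^d)` norm (as a real number). -/
def LpNorm {d : ℕ} (p : ℝ≥0∞) (u : (Fin d → ℝ) → ℝ) : ℝ :=
  (eLpNorm u p (torusMeasure d)).toReal

/-- `U` is a weak solution of `ε² Δ U = g` on the torus: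
`ε² ∫ ∇U·∇φ dx = −∫ g φ dx` for every smooth (periodic) test function `φ`. -/
def IsWeakPoisson {d : ℕ} (ε : ℝ) (U g : (Fin d → ℝ) → ℝ) : Prop :=
  ∀ φ : (Fin d → ℝ) → ℝ, ContDiff ℝ (⊤ : ℕ∞) φ → ZPeriodic φ →
    ε ^ 2 * ∫ x, dotP (grad U x) (grad φ x) ∂(torusMeasure d) =
      - ∫ x, g x * φ x ∂(torusMeasure d)

end
noncomputable section

/-- The rescaled mollifier `χ_r(x) = r^{-d} χ(x/r)` on `ℝ^d`. -/
def scaledMollifier {d : ℕ} (χ : (Fin d → ℝ) → ℝ) (r : ℝ) (x : Fin d → ℝ) : ℝ :=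
  (r ^ d)⁻¹ * χ (fun i => x i / r)

/-- The `ℤ^d`-periodisation of a function on `ℝ^d`, giving a function on the torus. -/
def periodised {d : ℕ} (g : (Fin d → ℝ) → ℝ) (x : Fin d → ℝ) : ℝ :=
  ∑' k : Fin d → ℤ, g (x + latVec k)

/-- The measure `χ_r ∗ μ` on the torus: the measure with density
`x ↦ ∫ χ_r(x − y) dμ(y)` with respect to the Haar measure (with `χ_r` periodised). -/
def mollifyMeasure {d : ℕ} (χ : (Fin d → ℝ) → ℝ) (r : ℝ) (μ : Measure (Fin d → ℝ)) :
    Measure (Fin d → ℝ) :=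
  (torusMeasure d).withDensity fun x =>
    ENNReal.ofReal (∫ y, periodised (scaledMollifier χ r) (x - y) ∂μ)

/-- A Borel probability measure on the torus `𝕋^d`, realised as a probability measure on
`ℝ^d` carried by the fundamental domain. -/
def IsTorusProb {d : ℕ} (μ : Measure (Fin d → ℝ)) : Prop :=
  IsProbabilityMeasure μ ∧ μ (Tcube d)ᶜ = 0

/-- The set `A_d` of allowed Hölder exponents: `(0,1)` if `d = 2`, `(0,1/5]` if `d = 3`. -/
def Aset (d : ℕ) : Set ℝ := if d = 2 then Set.Ioo 0 1 else Set.Ioc 0 (1/5)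

end
section Helpers

/-- partial derivative -/
noncomputable def pd {d : ℕ} (i : Fin d) (f : (Fin d → ℝ) → ℝ) : (Fin d → ℝ) → ℝ :=
  fun x => fderiv ℝ f x (Pi.single i 1)

lemma pd_contDiff {d : ℕ} (i : Fin d) {f : (Fin d → ℝ) → ℝ} {n m : WithTop ℕ∞}
    (h : ContDiff ℝ n f) (hm : m + 1 ≤ n) : ContDiff ℝ m (pd i f) :=
  (h.fderiv_right hm).clm_apply contDiff_const

lemma pd_supp {d : ℕ} (i : Fin d) {f : (Fin d → ℝ) → ℝ}
    (h : HasCompactSupport f) : HasCompactSupport (pd i f) :=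
  h.fderiv_apply ℝ _

lemma pd_comm {d : ℕ} (i j : Fin d) {f : (Fin d → ℝ) → ℝ}
    (h : ContDiff ℝ 2 f) : pd i (pd j f) = pd j (pd i f) := by
  have key : ∀ (i j : Fin d) x, pd i (pd j f) x
      = fderiv ℝ (fderiv ℝ f) x (Pi.single i 1) (Pi.single j 1) := by
    intro i j x
    have hd : DifferentiableAt ℝ (fderiv ℝ f) x :=
      ((h.fderiv_right (m := 1) (by norm_num)).differentiable (by norm_num)) x
    unfold pd
    rw [fderiv_clm_apply hd (by fun_prop)]
    simp
  funext x
  rw [key, key]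
  exact (h.contDiffAt.isSymmSndFDerivAt (by simp)) _ _

lemma fderiv_eq_sum {d : ℕ} {f : (Fin d → ℝ) → ℝ} (x v : Fin d → ℝ) :
    fderiv ℝ f x v = ∑ k, v k * pd k f x := by
  have : v = ∑ k, v k • (Pi.single k (1:ℝ) : Fin d → ℝ) := by
    ext j; simp [Finset.sum_apply, Pi.single_apply]
  conv_lhs => rw [this]
  rw [map_sum]
  simp [pd]

lemma pd_line {d : ℕ} (i : Fin d) {f : (Fin d → ℝ) → ℝ} (hf : Differentiable ℝ f)
    (x : Fin d → ℝ) (t : ℝ) :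
    HasDerivAt (fun t : ℝ => f (x + t • (Pi.single i 1 : Fin d → ℝ)))
      (pd i f (x + t • (Pi.single i 1 : Fin d → ℝ))) t := by
  have h1 : HasDerivAt (fun t : ℝ => x + t • (Pi.single i 1 : Fin d → ℝ)) (Pi.single i 1) t := by
    have := ((hasDerivAt_id t).smul_const (Pi.single i 1 : Fin d → ℝ)).const_add x
    simpa using this
  exact (hf _).hasFDerivAt.comp_hasDerivAt t h1

/-- averaged function -/
noncomputable def avg {d : ℕ} (K f : (Fin d → ℝ) → ℝ) (x : Fin d → ℝ) (r : ℝ) : ℝ :=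
  ∫ y, K y * f (x - r • y)

lemma avg_int {d : ℕ} {K f : (Fin d → ℝ) → ℝ} (hK : Continuous K) (hKs : HasCompactSupport K)
    (hf : Continuous f) (x : Fin d → ℝ) (r : ℝ) :
    Integrable (fun y => K y * f (x - r • y)) :=
  (by fun_prop : Continuous _).integrable_of_hasCompactSupport hKs.mul_right

lemma avg_ibp {d : ℕ} (k : Fin d) {K f : (Fin d → ℝ) → ℝ} (hK : ContDiff ℝ 1 K)
    (hKs : HasCompactSupport K)
    (hf : ContDiff ℝ 1 f) (x : Fin d → ℝ) (r : ℝ) :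
    avg (pd k K) f x r = r * avg K (pd k f) x r := by
  have hfd : Differentiable ℝ f := hf.differentiable (by norm_num)
  have hder : ∀ y, fderiv ℝ (fun y => f (x - r • y)) y (Pi.single k 1)
      = - (r * pd k f (x - r • y)) := by
    intro y
    have h1 : HasFDerivAt (fun y : Fin d → ℝ => x - r • y)
        (-(r • ContinuousLinearMap.id ℝ (Fin d → ℝ))) y := by
      have := ((hasFDerivAt_id (𝕜 := ℝ) y).const_smul r).const_sub x
      simpa using this
    have h2 := (hfd (x - r • y)).hasFDerivAt.comp y h1
    have h3 := h2.fderiv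
    simp only [Function.comp_def] at h3
    rw [h3]
    simp [pd]
  have hK0 : Continuous (pd k K) := (pd_contDiff (m := 0) k hK (by norm_num)).continuous
  have hf0 : Continuous (pd k f) := (pd_contDiff (m := 0) k hf (by norm_num)).continuous
  have h := integral_mul_fderiv_eq_neg_fderiv_mul_of_integrable (μ := (volume : Measure (Fin d → ℝ)))
    (f := K) (g := fun y => f (x - r • y)) (v := Pi.single k 1)
    (avg_int hK0 (pd_supp k hKs) hf.continuous x r)
    (by
      simp only [hder]
      have := ((avg_int hK.continuous hKs hf0 x r).const_mul (-r))
      refine this.congr (Filter.Eventually.of_forall fun y => ?_)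
      simp only []; ring)
    (avg_int hK.continuous hKs hf.continuous x r)
    (fun y _ => (hK.differentiable (by norm_num)) y)
    (fun y _ => by
      have : Differentiable ℝ (fun y : Fin d → ℝ => x - r • y) := by fun_prop
      exact (hfd.comp this) y)
  simp only [hder] at h
  have h' : ∫ y, K y * -(r * pd k f (x - r • y)) = - (r * avg K (pd k f) x r) := by
    unfold avg
    rw [← integral_const_mul, ← integral_neg]
    congr 1; funext y; ring
  rw [h'] at h
  unfold avg
  unfold avg at h
  have : ∫ y, pd k K y * f (x - r • y) = ∫ y, (fderiv ℝ K y) (Pi.single k 1) * f (x - r • y) := rfl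
  rw [this]; linarith

lemma avg_deriv {d : ℕ} {K f : (Fin d → ℝ) → ℝ} (hK : Continuous K)
    (hKs : HasCompactSupport K)
    (hf : ContDiff ℝ 1 f) (N : ℝ) (hN : ∀ k x, |pd k f x| ≤ N) (x : Fin d → ℝ) (r : ℝ) :
    HasDerivAt (fun r => avg K f x r)
      (- ∑ k, avg (fun y => y k * K y) (pd k f) x r) r := by
  have hfd : Differentiable ℝ f := hf.differentiable (by norm_num)
  have hf0 : ∀ k, Continuous (pd k f) := fun k =>
    (pd_contDiff (m := 0) k hf (by norm_num)).continuous
  have hi : ∀ k : Fin d, Integrable (fun y : Fin d → ℝ => |y k * K y| * N) := fun k =>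
    (by fun_prop : Continuous _).integrable_of_hasCompactSupport
      (HasCompactSupport.mul_right (HasCompactSupport.abs (HasCompactSupport.mul_left hKs)))
  have h := (hasDerivAt_integral_of_dominated_loc_of_deriv_le (μ := (volume : Measure (Fin d → ℝ)))
    (F := fun r y => K y * f (x - r • y))
    (F' := fun r y => - ∑ k, (y k * K y) * pd k f (x - r • y))
    (x₀ := r) (s := Set.univ) (bound := fun y => ∑ k, |y k * K y| * N) Filter.univ_mem
    (Filter.Eventually.of_forall fun s => (avg_int hK hKs hf.continuous x s).aestronglyMeasurable)
    (avg_int hK hKs hf.continuous x r)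
    (by
      apply Continuous.aestronglyMeasurable
      fun_prop)
    (Filter.Eventually.of_forall fun y s _ => by
      rw [norm_neg]
      refine (norm_sum_le _ _).trans (Finset.sum_le_sum fun k _ => ?_)
      rw [norm_mul]
      exact mul_le_mul_of_nonneg_left (hN _ _) (norm_nonneg _))
    (integrable_finsetSum _ fun k _ => hi k)
    (Filter.Eventually.of_forall fun y s _ => by
      have h1 : HasDerivAt (fun s : ℝ => x - s • y) (-y) s := by
        have := ((hasDerivAt_id s).smul_const y).const_sub x
        simpa using this
      have h2 := ((hfd (x - s • y)).hasFDerivAt.comp_hasDerivAt s h1).const_mul (K y)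
      simp only [Function.comp_def] at h2
      refine h2.congr_deriv ?_
      symm
      rw [map_neg, fderiv_eq_sum, mul_neg, Finset.mul_sum]
      congr 1
      exact Finset.sum_congr rfl fun k _ => by ring)).2
  refine HasDerivAt.congr_deriv h ?_
  rw [integral_neg, integral_finsetSum]
  · rfl
  · intro k _
    exact avg_int (K := fun y => y k * K y) (by fun_prop) (HasCompactSupport.mul_left hKs) (hf0 k) x r

lemma avg_cont {d : ℕ} {K f : (Fin d → ℝ) → ℝ} (hK : Continuous K)
    (hKs : HasCompactSupport K)
    (hf : Continuous f) (N : ℝ) (hN : ∀ x, |f x| ≤ N) (x : Fin d → ℝ) :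
    Continuous (fun r => avg K f x r) := by
  refine continuous_of_dominated (bound := fun y => ‖K y‖ * N)
    (fun r => (avg_int hK hKs hf x r).aestronglyMeasurable)
    (fun r => Filter.Eventually.of_forall fun y => ?_) ?_
    (Filter.Eventually.of_forall fun y => ?_)
  · rw [norm_mul]
    exact mul_le_mul_of_nonneg_left (hN _) (norm_nonneg _)
  · exact (hK.integrable_of_hasCompactSupport hKs).norm.mul_const N
  · fun_prop

lemma pd_coord_mul {d : ℕ} (i k : Fin d) {φ : (Fin d → ℝ) → ℝ} (hφ : Differentiable ℝ φ)
    (y : Fin d → ℝ) :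
    pd i (fun y => y k * φ y) y = y k * pd i φ y + (if k = i then φ y else 0) := by
  unfold pd
  have h1 : HasFDerivAt (fun y : Fin d → ℝ => y k)
    (ContinuousLinearMap.proj (R := ℝ) (φ := fun _ : Fin d => ℝ) k) y := hasFDerivAt_apply k y
  have h := (h1.mul (hφ y).hasFDerivAt).fderiv
  have e : (fun y => y k * φ y) = ((fun y : Fin d → ℝ => y k) * φ) := rfl
  rw [e, h]
  by_cases hk : k = i
  · subst hk; simp
  · simp [hk]

lemma V_deriv {d : ℕ} {ψ φ u : (Fin d → ℝ) → ℝ} (hψ : ContDiff ℝ 3 ψ) (hψs : HasCompactSupport ψ)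
    (hφ : ContDiff ℝ 1 φ) (hφs : HasCompactSupport φ) (hrel : ∀ k y, pd k ψ y = y k * φ y)
    (hu : ContDiff ℝ 2 u) (N : ℝ) (hN : ∀ i j x, |pd i (pd j u) x| ≤ N) (i j : Fin d)
    (x : Fin d → ℝ) {r : ℝ} (hr : 0 < r) :
    HasDerivAt (fun r => avg φ (pd i (pd j u)) x r)
      (-(r⁻¹ * avg (pd j (pd i ψ)) (fun x => ∑ k, pd k (pd k u) x) x r)) r := by
  have hu1 : ∀ k, ContDiff ℝ 1 (pd k u) := fun k => pd_contDiff k hu (by norm_num)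
  have hu0 : ∀ k l, Continuous (pd k (pd l u)) := fun k l =>
    (pd_contDiff (m := 0) k (hu1 l) (by norm_num)).continuous
  have hψ2 : ∀ k, ContDiff ℝ 2 (pd k ψ) := fun k => pd_contDiff k hψ (by norm_num)
  have hψ1 : ∀ k l, ContDiff ℝ 1 (pd k (pd l ψ)) := fun k l => pd_contDiff k (hψ2 l) (by norm_num)
  have hφ0 : Continuous (pd i φ) := (pd_contDiff (m := 0) i hφ (by norm_num)).continuous
  have hA := avg_deriv hφ0 (pd_supp i hφs) (hu1 j) N (fun k x => hN k j x) x r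
  have hB := (hasDerivAt_inv hr.ne').mul hA
  have hev : (fun r => avg φ (pd i (pd j u)) x r) =ᶠ[nhds r]
      ((fun y : ℝ => y⁻¹) * fun r => avg (pd i φ) (pd j u) x r) := by
    filter_upwards [lt_mem_nhds hr] with s hs
    simp only [Pi.mul_apply]
    rw [avg_ibp i hφ hφs (hu1 j)]
    field_simp
  refine (hB.congr_of_eventuallyEq hev).congr_deriv ?_
  have e1 : ∀ k, avg (fun y => y k * pd i φ y) (pd k (pd j u)) x r
      = avg (pd j (pd i ψ)) (pd k (pd k u)) x r
        - (if k = i then avg φ (pd k (pd j u)) x r else 0) := by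
    intro k
    have e2 : (fun y => y k * pd i φ y)
        = fun y => pd k (pd i ψ) y - (if k = i then φ y else 0) := by
      funext y
      rw [pd_comm k i (hψ.of_le (by norm_num))]
      have : pd k ψ = fun y => y k * φ y := funext (hrel k)
      rw [this, pd_coord_mul i k (hφ.differentiable (by norm_num))]
      ring
    have e3 : avg (fun y => pd k (pd i ψ) y - (if k = i then φ y else 0)) (pd k (pd j u)) x r
        = avg (pd k (pd i ψ)) (pd k (pd j u)) x r
          - (if k = i then avg φ (pd k (pd j u)) x r else 0) := by
      have i1 := avg_int (hψ1 k i).continuous (pd_supp k (pd_supp i hψs)) (hu0 k j) x r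
      have i2 := avg_int hφ.continuous hφs (hu0 k j) x r
      split_ifs with hk
      · unfold avg
        rw [← integral_sub i1 i2]
        congr 1; funext y; ring
      · simp
    rw [e2, e3]
    congr 1
    have a1 := avg_ibp j (hψ1 k i) (pd_supp k (pd_supp i hψs)) (hu1 k) x r
    have a2 := avg_ibp k (hψ1 j i) (pd_supp j (pd_supp i hψs)) (hu1 k) x r
    rw [pd_comm j k (hψ2 i), a2] at a1
    rw [pd_comm k j hu]
    exact (mul_left_cancel₀ hr.ne' a1).symm
  have e4 : avg (pd j (pd i ψ)) (fun x => ∑ k, pd k (pd k u) x) x r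
      = ∑ k, avg (pd j (pd i ψ)) (pd k (pd k u)) x r := by
    unfold avg
    rw [← integral_finsetSum]
    · congr 1; funext y; rw [Finset.mul_sum]
    · intro k _
      exact avg_int (hψ1 j i).continuous (pd_supp j (pd_supp i hψs)) (hu0 k k) x r
  rw [e4, Finset.sum_congr rfl fun k _ => e1 k, Finset.sum_sub_distrib, Finset.sum_ite_eq',
    if_pos (Finset.mem_univ _), avg_ibp i hφ hφs (hu1 j)]
  field_simp
  ring

lemma kernel_exists (d : ℕ) (hd : 0 < d) : ∃ ψ φ : (Fin d → ℝ) → ℝ,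
    ContDiff ℝ 3 ψ ∧ ContDiff ℝ 1 φ ∧ (∀ y, 2 < ‖y‖ → ψ y = 0) ∧ (∀ y, 2 < ‖y‖ → φ y = 0) ∧
    (∀ k y, pd k ψ y = y k * φ y) ∧ ∫ y, φ y = 1 := by
  set F : ℝ → ℝ := fun ρ => Real.smoothTransition (2 - ρ) with hF
  set Q : (Fin d → ℝ) → ℝ := fun y => ∑ k, (y k) ^ 2 with hQ
  have hFc : ContDiff ℝ 4 F := by
    have h : ContDiff ℝ ((4 : ℕ∞) : WithTop ℕ∞) Real.smoothTransition :=
      Real.smoothTransition.contDiff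
    exact ContDiff.comp h (by fun_prop)
  have hQc : ContDiff ℝ 4 Q := by
    rw [hQ]; fun_prop
  have hFd : Differentiable ℝ F := hFc.differentiable (by norm_num)
  have hF'c : ContDiff ℝ 3 (deriv F) := by
    have : ContDiff ℝ (3 + 1) F := by
      have e : (3 + 1 : WithTop ℕ∞) = 4 := by norm_num
      rw [e]; exact hFc
    exact (contDiff_succ_iff_deriv.1 this).2.2
  have hF0 : ∀ ρ, 2 < ρ → deriv F ρ = 0 := by
    intro ρ hρ
    have : F =ᶠ[nhds ρ] fun _ => 0 := by
      filter_upwards [lt_mem_nhds hρ] with s hs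
      exact Real.smoothTransition.zero_of_nonpos (by linarith)
    rw [this.deriv_eq]; simp
  have hFa : Antitone F := fun a b hab => Real.smoothTransition.monotone (by linarith)
  have hF'n : ∀ ρ, deriv F ρ ≤ 0 := fun ρ => hFa.deriv_nonpos
  have hbig : ∀ y : Fin d → ℝ, 2 < ‖y‖ → 2 < Q y := by
    intro y hy
    by_contra hcon
    have : ‖y‖ ≤ 2 := by
      rw [pi_norm_le_iff_of_nonneg (by norm_num)]
      intro k
      have h1 : (y k) ^ 2 ≤ Q y :=
        Finset.single_le_sum (f := fun k => (y k) ^ 2) (fun _ _ => sq_nonneg _) (Finset.mem_univ k)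
      rw [Real.norm_eq_abs]
      apply abs_le_of_sq_le_sq _ (by norm_num)
      linarith
    linarith
  set φ0 : (Fin d → ℝ) → ℝ := fun y => 2 * deriv F (Q y) with hφ0
  have hφ0c : ContDiff ℝ 3 φ0 := contDiff_const.mul (hF'c.comp (hQc.of_le (by norm_num)))
  have hφs : HasCompactSupport φ0 := by
    apply HasCompactSupport.intro (isCompact_closedBall (0 : Fin d → ℝ) 2)
    intro y hy
    simp only [Metric.mem_closedBall, dist_zero_right, not_le] at hy
    simp [hφ0, hF0 _ (hbig y hy)]
  have hneg : ∫ y, φ0 y < 0 := by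
    obtain ⟨ρ, hρ, hρ'⟩ := exists_deriv_eq_slope F (a := 0) (b := 2) (by norm_num)
      hFd.continuous.continuousOn hFd.differentiableOn
    have hv : deriv F ρ ≠ 0 := by
      rw [hρ']
      have h1 : F 2 = 0 := Real.smoothTransition.zero_of_nonpos (by norm_num)
      have h2 : F 0 = 1 := Real.smoothTransition.one_of_one_le (by norm_num)
      rw [h1, h2]; norm_num
    set y0 : Fin d → ℝ := Pi.single ⟨0, hd⟩ (Real.sqrt ρ) with hy0
    have hQy : Q y0 = ρ := by
      simp only [hQ, hy0]
      rw [Finset.sum_eq_single (⟨0, hd⟩ : Fin d)]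
      · simp [Real.sq_sqrt hρ.1.le]
      · intro b _ hb; simp [hb]
      · simp
    have h := (hφ0c.continuous.neg).integral_pos_of_hasCompactSupport_nonneg_nonzero
      (μ := (volume : Measure (Fin d → ℝ))) (x := y0) hφs.neg
      (fun y => by
        have := hF'n (Q y)
        simp only [Pi.zero_apply, Pi.neg_apply, hφ0]; linarith)
      (by simp [hφ0, hQy, hv])
    simp only [Pi.neg_apply] at h
    rw [integral_neg] at h
    linarith
  set c := ∫ y, φ0 y with hc
  have hQd : Differentiable ℝ Q := hQc.differentiable (by norm_num)
  have hpdQ : ∀ k y, pd k Q y = 2 * y k := by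
    intro k y
    have h : HasDerivAt (fun t : ℝ => Q (y + t • (Pi.single k 1 : Fin d → ℝ))) (pd k Q y) 0 := by
      simpa using pd_line k hQd y 0
    have h2 : HasDerivAt (fun t : ℝ => Q (y + t • (Pi.single k 1 : Fin d → ℝ))) (2 * y k) 0 := by
      have h3 : HasDerivAt (fun t : ℝ => Q y + 2 * t * y k + t ^ 2) (2 * y k) 0 := by
        have := (((hasDerivAt_id (0:ℝ)).const_mul (2 * y k)).const_add (Q y)).add
          ((hasDerivAt_id (0:ℝ)).pow 2)
        refine (this.congr_deriv (by simp)).congr_of_eventuallyEq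
          (Filter.Eventually.of_forall fun t => ?_)
        simp; ring
      refine h3.congr_of_eventuallyEq (Filter.Eventually.of_forall fun t => ?_)
      simp only [hQ]
      have : ∀ l, (y + t • (Pi.single k 1 : Fin d → ℝ)) l ^ 2
          = y l ^ 2 + (if l = k then 2 * t * y l + t ^ 2 else 0) := by
        intro l
        by_cases hl : l = k
        · subst hl; simp; ring
        · simp [hl]
      simp only [this, Finset.sum_add_distrib, Finset.sum_ite_eq', Finset.mem_univ, if_true]
      ring
    exact h.unique h2
  refine ⟨fun y => c⁻¹ * F (Q y), fun y => c⁻¹ * φ0 y, ?_, ?_, ?_, ?_, ?_, ?_⟩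
  · exact contDiff_const.mul ((hFc.comp hQc).of_le (by norm_num))
  · exact contDiff_const.mul (hφ0c.of_le (by norm_num))
  · intro y hy
    have : F (Q y) = 0 := Real.smoothTransition.zero_of_nonpos (by linarith [hbig y hy])
    simp [this]
  · intro y hy
    simp [hφ0, hF0 _ (hbig y hy)]
  · intro k y
    have h1 : HasFDerivAt (fun y => c⁻¹ * F (Q y)) (c⁻¹ • (deriv F (Q y) • fderiv ℝ Q y)) y :=
      (((hFd (Q y)).hasDerivAt.comp_hasFDerivAt y (hQd y).hasFDerivAt)).const_mul c⁻¹
    have h2 := hpdQ k y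
    unfold pd at h2 ⊢
    rw [h1.fderiv]
    simp only [smul_apply, smul_eq_mul, h2, hφ0]
    ring
  · rw [integral_const_mul]
    exact inv_mul_cancel₀ hneg.ne

lemma growth {f G f' G' : ℝ → ℝ} {a b : ℝ} (hab : a ≤ b)
    (hf : ContinuousOn f (Set.Icc a b)) (hG : ContinuousOn G (Set.Icc a b))
    (hf' : ∀ t ∈ Set.Ioo a b, HasDerivAt f (f' t) t)
    (hG' : ∀ t ∈ Set.Ioo a b, HasDerivAt G (G' t) t)
    (h : ∀ t ∈ Set.Ioo a b, |f' t| ≤ G' t) : |f b - f a| ≤ G b - G a := by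
  have h1 : MonotoneOn (fun t => G t - f t) (Set.Icc a b) := by
    apply monotoneOn_of_hasDerivWithinAt_nonneg (f' := fun t => G' t - f' t) (convex_Icc a b)
      (hG.sub hf)
    · intro t ht
      rw [interior_Icc] at ht
      exact ((hG' t ht).sub (hf' t ht)).hasDerivWithinAt
    · intro t ht
      rw [interior_Icc] at ht
      have := (abs_le.1 (h t ht)).2
      linarith
  have h2 : MonotoneOn (fun t => G t + f t) (Set.Icc a b) := by
    apply monotoneOn_of_hasDerivWithinAt_nonneg (f' := fun t => G' t + f' t) (convex_Icc a b)
      (hG.add hf)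
    · intro t ht
      rw [interior_Icc] at ht
      exact ((hG' t ht).add (hf' t ht)).hasDerivWithinAt
    · intro t ht
      rw [interior_Icc] at ht
      have := (abs_le.1 (h t ht)).1
      linarith
  have a1 := h1 (Set.left_mem_Icc.2 hab) (Set.right_mem_Icc.2 hab) hab
  have a2 := h2 (Set.left_mem_Icc.2 hab) (Set.right_mem_Icc.2 hab) hab
  simp only at a1 a2
  rw [abs_le]; constructor <;> linarith

lemma supp_of {d : ℕ} {K : (Fin d → ℝ) → ℝ} (h : ∀ y, 2 < ‖y‖ → K y = 0) :
    HasCompactSupport K := by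
  apply HasCompactSupport.intro (isCompact_closedBall (0 : Fin d → ℝ) 2)
  intro y hy
  simp only [Metric.mem_closedBall, dist_zero_right, not_le] at hy
  exact h y hy

lemma pd_zero_of {d : ℕ} (i : Fin d) {K : (Fin d → ℝ) → ℝ} (h : ∀ y, 2 < ‖y‖ → K y = 0) :
    ∀ y, 2 < ‖y‖ → pd i K y = 0 := by
  intro y hy
  have : K =ᶠ[nhds y] fun _ => 0 := by
    filter_upwards [continuous_norm.continuousAt.eventually (lt_mem_nhds hy)] with s hs
    exact h s hs
  unfold pd
  rw [this.fderiv_eq]; simp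

lemma kdiff {d : ℕ} {K f : (Fin d → ℝ) → ℝ} (hK : Continuous K) (h0 : ∀ y, 2 < ‖y‖ → K y = 0)
    (L : ℝ) (hL0 : 0 ≤ L) (hL : ∀ y z, |K y - K z| ≤ L * ‖y - z‖) (hf : Continuous f)
    (x h : Fin d → ℝ) (r c M : ℝ) (hr : 0 < r) (hh : ‖h‖ ≤ r)
    (hM : ∀ y, ‖y‖ ≤ 3 → |f (x - r • y) - c| ≤ M) :
    |avg K f x r - avg K f (x - h) r| ≤
      (volume : Measure (Fin d → ℝ)).real (Metric.closedBall 0 3) * (L * (‖h‖ / r) * M) := by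
  set w : Fin d → ℝ := r⁻¹ • h with hw
  have hwn : ‖w‖ = ‖h‖ / r := by
    rw [hw, norm_smul, Real.norm_eq_abs, abs_of_pos (inv_pos.2 hr)]; field_simp
  have hw1 : ‖w‖ ≤ 1 := by rw [hwn, div_le_one hr]; exact hh
  have hKs := supp_of h0
  have hKws : HasCompactSupport (fun y => K (y - w)) :=
    hKs.comp_homeomorph (Homeomorph.subRight w)
  have hKw : Continuous (fun y => K (y - w)) := by fun_prop
  have e1 : avg K f (x - h) r = ∫ y, K (y - w) * f (x - r • y) := by
    unfold avg
    rw [← integral_sub_right_eq_self _ w]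
    congr 1; funext y
    have : x - h - r • (y - w) = x - r • y := by
      rw [smul_sub, hw, smul_smul, mul_inv_cancel₀ hr.ne', one_smul]; abel
    rw [this]
  have i1 := avg_int hK hKs hf x r
  have i2 := avg_int hKw hKws hf x r
  have i3 : Integrable K := hK.integrable_of_hasCompactSupport hKs
  have i4 : Integrable (fun y => K (y - w)) := hKw.integrable_of_hasCompactSupport hKws
  have e2 : avg K f x r - avg K f (x - h) r
      = ∫ y, (K y - K (y - w)) * (f (x - r • y) - c) := by
    have e3 : ∫ y, (K y - K (y - w)) * c = 0 := by
      rw [integral_mul_const, integral_sub i3 i4, integral_sub_right_eq_self]; simp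
    have e4 : ∀ y, (K y - K (y - w)) * (f (x - r • y) - c)
      = (K y * f (x - r • y) - K (y - w) * f (x - r • y)) - (K y - K (y - w)) * c := by
      intro y; ring
    simp_rw [e4]
    have j1 : Integrable (fun y => K y * f (x - r • y) - K (y - w) * f (x - r • y)) := i1.sub i2
    have j2 : Integrable (fun y => (K y - K (y - w)) * c) := (i3.sub i4).mul_const c
    rw [integral_sub j1 j2, e3, integral_sub i1 i2, e1]
    simp [avg]
  rw [e2]
  have hb : ∀ y, ‖(K y - K (y - w)) * (f (x - r • y) - c)‖ ≤
      (Metric.closedBall (0 : Fin d → ℝ) 3).indicator (fun _ => L * (‖h‖ / r) * M) y := by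
    intro y
    by_cases hy : ‖y‖ ≤ 3
    · rw [Set.indicator_of_mem (by simpa using hy), norm_mul]
      have a1 := hL y (y - w)
      rw [sub_sub_cancel, hwn] at a1
      exact mul_le_mul a1 (hM y hy) (norm_nonneg _) (by positivity)
    · rw [Set.indicator_of_notMem (by simpa using hy)]
      push Not at hy
      have a1 : K y = 0 := h0 y (by linarith)
      have a2 : K (y - w) = 0 := h0 _ (by
        have := norm_sub_norm_le y w
        linarith)
      simp [a1, a2]
  have := norm_integral_le_of_norm_le (μ := (volume : Measure (Fin d → ℝ)))
    ((integrable_indicator_iff Metric.isClosed_closedBall.measurableSet).2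
      (integrableOn_const (isCompact_closedBall (0 : Fin d → ℝ) 3).measure_lt_top.ne))
    (Filter.Eventually.of_forall hb)
  rw [integral_indicator_const _ Metric.isClosed_closedBall.measurableSet] at this
  simpa using this

lemma lip_of {d : ℕ} {K : (Fin d → ℝ) → ℝ} (hK : ContDiff ℝ 1 K) (hs : HasCompactSupport K) :
    ∃ L : ℝ, 0 ≤ L ∧ ∀ y z, |K y - K z| ≤ L * ‖y - z‖ := by
  obtain ⟨C, hC⟩ := hK.lipschitzWith_of_hasCompactSupport hs (by norm_num)
  refine ⟨C, C.2, fun y z => ?_⟩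
  have := hC.dist_le_mul y z
  rwa [Real.dist_eq, dist_eq_norm] at this

lemma schauder_ij (d : ℕ) (hd : 0 < d) (α : ℝ) (h0 : 0 < α) (h1 : α < 1) (i j : Fin d) :
    ∃ C : ℝ, 0 ≤ C ∧ ∀ u : (Fin d → ℝ) → ℝ, ContDiff ℝ 2 u →
      ∀ N : ℝ, (∀ i j x, |pd i (pd j u) x| ≤ N) → ∀ B : ℝ, 0 ≤ B →
      (∀ x y, |(∑ k, pd k (pd k u) x) - ∑ k, pd k (pd k u) y| ≤ B * ‖x - y‖ ^ α) →
      ∀ x y, |pd i (pd j u) x - pd i (pd j u) y| ≤ C * B * ‖x - y‖ ^ α := by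
  obtain ⟨ψ, φ, hψ, hφ, hψ0, hφ0, hrel, hint⟩ := kernel_exists d hd
  have hψs := supp_of hψ0
  have hφs := supp_of hφ0
  set K := pd j (pd i ψ) with hK
  have hKc : ContDiff ℝ 1 K := pd_contDiff j (pd_contDiff (m := 2) i hψ (by norm_num)) (by norm_num)
  have hK0 : ∀ y, 2 < ‖y‖ → K y = 0 := pd_zero_of j (pd_zero_of i hψ0)
  have hKs := supp_of hK0
  have hKi : ∫ y, K y = 0 := by
    have := avg_ibp (f := fun _ => (1:ℝ)) j
      (pd_contDiff (m := 1) i hψ (by norm_num)) (pd_supp i hψs) contDiff_const 0 0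
    simpa [avg] using this
  obtain ⟨Lk, hLk0, hLk⟩ := lip_of hKc hKs
  obtain ⟨Lp, hLp0, hLp⟩ := lip_of hφ hφs
  set vol := (volume : Measure (Fin d → ℝ)).real (Metric.closedBall 0 3) with hvol
  have hvol0 : 0 ≤ vol := measureReal_nonneg
  set C1 := 2 ^ α * ∫ y, |K y| with hC1
  have hC10 : 0 ≤ C1 := mul_nonneg (by positivity) (integral_nonneg fun _ => abs_nonneg _)
  set C2 := vol * (Lk * 3 ^ α) with hC2
  have hC20 : 0 ≤ C2 := by positivity
  have h1α : 0 < 1 - α := by linarith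
  refine ⟨2 * (C1 / α) + C2 / (1 - α), by positivity, ?_⟩
  intro u hu N hN B hB hg x y
  set g : (Fin d → ℝ) → ℝ := fun x => ∑ k, pd k (pd k u) x with hgdef
  have hu1 : ∀ k, ContDiff ℝ 1 (pd k u) := fun k => pd_contDiff k hu (by norm_num)
  have hu0 : ∀ k l, Continuous (pd k (pd l u)) := fun k l =>
    (pd_contDiff (m := 0) k (hu1 l) (by norm_num)).continuous
  have hgc : Continuous g := continuous_finsetSum _ fun k _ => hu0 k k
  set v := pd i (pd j u) with hv
  have hvc : Continuous v := hu0 i j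
  have hV' := fun (x : Fin d → ℝ) (r : ℝ) (hr : 0 < r) =>
    V_deriv hψ hψs hφ hφs hrel hu N hN i j x hr
  have hVc := fun x => avg_cont hφ.continuous hφs hvc N (hN i j) x
  -- pointwise bound
  have hJ : ∀ (x : Fin d → ℝ) (r : ℝ), 0 < r → |avg K g x r| ≤ C1 * B * r ^ α := by
    intro x r hr
    have e : avg K g x r = ∫ y, K y * (g (x - r • y) - g x) := by
      have : ∀ y, K y * (g (x - r • y) - g x) = K y * g (x - r • y) - K y * g x := fun y => by ring
      simp_rw [this]
      rw [integral_sub (avg_int hKc.continuous hKs hgc x r)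
        ((hKc.continuous.integrable_of_hasCompactSupport hKs).mul_const _), integral_mul_const, hKi]
      simp [avg]
    rw [e]
    have hb : ∀ y, ‖K y * (g (x - r • y) - g x)‖ ≤ |K y| * (B * (2 * r) ^ α) := by
      intro y
      rw [norm_mul, Real.norm_eq_abs, Real.norm_eq_abs]
      by_cases hy : ‖y‖ ≤ 2
      · refine mul_le_mul_of_nonneg_left ((hg _ _).trans ?_) (abs_nonneg _)
        refine mul_le_mul_of_nonneg_left (Real.rpow_le_rpow (norm_nonneg _) ?_ h0.le) hB
        rw [sub_sub_cancel_left, norm_neg, norm_smul, Real.norm_eq_abs, abs_of_pos hr, mul_comm]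
        exact mul_le_mul_of_nonneg_right hy hr.le
      · push Not at hy
        simp [hK0 y hy]
    have := norm_integral_le_of_norm_le (μ := (volume : Measure (Fin d → ℝ)))
      (((hKc.continuous.integrable_of_hasCompactSupport hKs).abs).mul_const (B * (2 * r) ^ α))
      (Filter.Eventually.of_forall hb)
    rw [integral_mul_const, Real.norm_eq_abs] at this
    refine this.trans (le_of_eq ?_)
    rw [Real.mul_rpow (by norm_num) hr.le, hC1]; ring
  have stepA : ∀ (x : Fin d → ℝ) (ρ : ℝ), 0 < ρ → |avg φ v x ρ - v x| ≤ C1 / α * B * ρ ^ α := by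
    intro x ρ hρ
    have hz : avg φ v x 0 = v x := by
      simp only [avg, zero_smul, sub_zero]
      rw [integral_mul_const, hint, one_mul]
    have := growth (f := fun r => avg φ v x r) (G := fun r => C1 / α * B * r ^ α)
      (f' := fun r => -(r⁻¹ * avg K g x r)) (G' := fun r => C1 * B * r ^ (α - 1))
      hρ.le (hVc x).continuousOn
      (continuousOn_const.mul (continuousOn_id.rpow_const fun _ _ => Or.inr h0.le))
      (fun t ht => hV' x t ht.1)
      (fun t ht => by
        have := (Real.hasDerivAt_rpow_const (p := α) (Or.inl ht.1.ne')).const_mul (C1 / α * B)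
        refine this.congr_deriv ?_
        field_simp)
      (fun t ht => by
        have ht0 : 0 < t := ht.1
        rw [abs_neg, abs_mul, abs_of_pos (inv_pos.2 ht0), Real.rpow_sub_one ht0.ne']
        calc t⁻¹ * |avg K g x t| ≤ t⁻¹ * (C1 * B * t ^ α) :=
              mul_le_mul_of_nonneg_left (hJ x t ht0) (inv_pos.2 ht0).le
          _ = _ := by ring)
    simp only [hz, Real.zero_rpow h0.ne', mul_zero, sub_zero] at this
    exact this
  set ρ := ‖x - y‖ with hρdef
  rcases (norm_nonneg (x - y)).eq_or_lt with hρ | hρ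
  · have : x = y := by rw [← sub_eq_zero, ← norm_eq_zero]; exact hρ.symm
    subst this
    rw [sub_self, abs_zero]
    positivity
  rw [← hρdef] at hρ
  have hyx : x - (x - y) = y := by abel
  have stepB : ∀ R, ρ ≤ R → |(avg φ v x R - avg φ v y R) - (avg φ v x ρ - avg φ v y ρ)|
      ≤ C2 / (1 - α) * B * ρ ^ α := by
    intro R hR
    have := growth (f := fun r => avg φ v x r - avg φ v y r)
      (G := fun r => -(C2 / (1 - α) * B * ρ) * r ^ (α - 1))
      (f' := fun r => -(r⁻¹ * avg K g x r) - -(r⁻¹ * avg K g y r))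
      (G' := fun r => C2 * B * ρ * r ^ (α - 1 - 1))
      hR ((hVc x).sub (hVc y)).continuousOn
      (continuousOn_const.mul (continuousOn_id.rpow_const fun t ht =>
        Or.inl (hρ.trans_le ht.1).ne'))
      (fun t ht => (hV' x t (hρ.trans ht.1)).sub (hV' y t (hρ.trans ht.1)))
      (fun t ht => by
        have := (Real.hasDerivAt_rpow_const (p := α - 1) (Or.inl (hρ.trans ht.1).ne')).const_mul
          (-(C2 / (1 - α) * B * ρ))
        refine this.congr_deriv ?_
        field_simp
        ring)
      (fun t ht => by
        have ht0 : 0 < t := hρ.trans ht.1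
        have k := kdiff hKc.continuous hK0 Lk hLk0 hLk hgc x (x - y) t (g x) (B * (3 * t) ^ α) ht0
          ht.1.le (fun z hz => by
            refine (hg _ _).trans ?_
            refine mul_le_mul_of_nonneg_left (Real.rpow_le_rpow (norm_nonneg _) ?_ h0.le) hB
            rw [sub_sub_cancel_left, norm_neg, norm_smul, Real.norm_eq_abs, abs_of_pos ht0, mul_comm]
            exact mul_le_mul_of_nonneg_right hz ht0.le)
        rw [hyx, ← hρdef, ← hvol] at k
        have e : -(t⁻¹ * avg K g x t) - -(t⁻¹ * avg K g y t)
          = -(t⁻¹ * (avg K g x t - avg K g y t)) := by ring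
        rw [e, abs_neg, abs_mul, abs_of_pos (inv_pos.2 ht0), Real.rpow_sub_one ht0.ne',
          Real.rpow_sub_one ht0.ne']
        refine (mul_le_mul_of_nonneg_left k (inv_pos.2 ht0).le).trans (le_of_eq ?_)
        rw [Real.mul_rpow (by norm_num) ht0.le, hC2]
        field_simp)
    refine this.trans ?_
    have hRp : 0 ≤ R ^ (α - 1) := Real.rpow_nonneg (hρ.le.trans hR) _
    have e : ρ * ρ ^ (α - 1) = ρ ^ α := by
      rw [Real.rpow_sub_one hρ.ne']; field_simp
    have hnn : 0 ≤ C2 / (1 - α) * B * ρ * R ^ (α - 1) := by positivity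
    calc _ = C2 / (1 - α) * B * (ρ * ρ ^ (α - 1)) - C2 / (1 - α) * B * ρ * R ^ (α - 1) := by ring
      _ ≤ _ := by rw [e]; linarith
  have stepC : ∀ R, ρ ≤ R → |avg φ v x R - avg φ v y R| ≤ vol * (Lp * ρ * N) / R := by
    intro R hR
    have k := kdiff hφ.continuous hφ0 Lp hLp0 hLp hvc x (x - y) R 0 N (hρ.trans_le hR) hR
      (fun z _ => by rw [sub_zero]; exact hN i j _)
    rw [hyx, ← hρdef, ← hvol] at k
    refine k.trans (le_of_eq ?_)
    ring
  have stepD : |avg φ v x ρ - avg φ v y ρ| ≤ C2 / (1 - α) * B * ρ ^ α := by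
    have ht : Filter.Tendsto (fun R : ℝ => C2 / (1 - α) * B * ρ ^ α + vol * (Lp * ρ * N) / R)
        Filter.atTop (nhds (C2 / (1 - α) * B * ρ ^ α + 0)) :=
      tendsto_const_nhds.add (Filter.Tendsto.const_div_atTop Filter.tendsto_id _)
    rw [add_zero] at ht
    refine ge_of_tendsto ht ?_
    filter_upwards [Filter.eventually_ge_atTop ρ] with R hR
    have b := abs_le.1 (stepB R hR)
    have c := abs_le.1 (stepC R hR)
    rw [abs_le]; constructor <;> linarith [b.1, b.2, c.1, c.2]
  have a1 := abs_le.1 (stepA x ρ hρ)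
  have a2 := abs_le.1 (stepA y ρ hρ)
  have a3 := abs_le.1 stepD
  have e : (2 * (C1 / α) + C2 / (1 - α)) * B * ρ ^ α
    = 2 * (C1 / α * B * ρ ^ α) + C2 / (1 - α) * B * ρ ^ α := by ring
  rw [e, abs_le]
  constructor <;> linarith [a1.1, a1.2, a2.1, a2.2, a3.1, a3.2]

lemma schauder (d : ℕ) (hd : 0 < d) (α : ℝ) (h0 : 0 < α) (h1 : α < 1) :
    ∃ C : ℝ, 1 ≤ C ∧ ∀ u : (Fin d → ℝ) → ℝ, ContDiff ℝ 2 u →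
      ∀ N : ℝ, (∀ i j x, |pd i (pd j u) x| ≤ N) → ∀ B : ℝ, 0 ≤ B →
      (∀ x y, |(∑ k, pd k (pd k u) x) - ∑ k, pd k (pd k u) y| ≤ B * ‖x - y‖ ^ α) →
      ∀ i j x y, |pd i (pd j u) x - pd i (pd j u) y| ≤ C * B * ‖x - y‖ ^ α := by
  choose C hC0 hC using fun i j => schauder_ij d hd α h0 h1 i j
  refine ⟨1 + ∑ i, ∑ j, C i j, ?_, ?_⟩
  · have : 0 ≤ ∑ i, ∑ j, C i j := Finset.sum_nonneg fun i _ => Finset.sum_nonneg fun j _ => hC0 i j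
    linarith
  · intro u hu N hN B hB hg i j x y
    refine (hC i j u hu N hN B hB hg x y).trans ?_
    have h1 : C i j ≤ ∑ j, C i j :=
      Finset.single_le_sum (f := fun j => C i j) (fun j _ => hC0 i j) (Finset.mem_univ j)
    have h2 : ∑ j, C i j ≤ ∑ i, ∑ j, C i j :=
      Finset.single_le_sum (f := fun i => ∑ j, C i j)
        (fun i _ => Finset.sum_nonneg fun j _ => hC0 i j) (Finset.mem_univ i)
    have : 0 ≤ B * ‖x - y‖ ^ α := by positivity
    rw [mul_assoc, mul_assoc]
    exact mul_le_mul_of_nonneg_right (by linarith) this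

lemma pd_periodic {d : ℕ} (i : Fin d) {f : (Fin d → ℝ) → ℝ} (h : ZPeriodic f) :
    ZPeriodic (pd i f) := by
  intro x k
  have : (fun y => f (y + latVec k)) = f := funext fun y => h y k
  unfold pd
  rw [← fderiv_comp_add_right, this]

lemma exists_rep {d : ℕ} (x : Fin d → ℝ) : ∃ k : Fin d → ℤ,
    x + latVec k ∈ Set.Icc (0 : Fin d → ℝ) 1 := by
  refine ⟨fun i => -⌊x i⌋, ?_⟩
  constructor
  · intro i
    have := Int.floor_le (x i)
    simpa [latVec] using this
  · intro i
    have := (Int.lt_floor_add_one (x i)).le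
    simp [latVec]; linarith

lemma exists_max {d : ℕ} {f : (Fin d → ℝ) → ℝ} (hf : Continuous f) (h : ZPeriodic f) :
    ∃ x0, ∀ x, f x ≤ f x0 := by
  obtain ⟨x0, _, hx⟩ := (isCompact_Icc (a := (0 : Fin d → ℝ)) (b := 1)).exists_isMaxOn
    ⟨0, by simp⟩ hf.continuousOn
  refine ⟨x0, fun x => ?_⟩
  obtain ⟨k, hk⟩ := exists_rep x
  rw [← h x k]
  exact hx hk

lemma euclNorm_nonneg {d : ℕ} (v : Fin d → ℝ) : 0 ≤ euclNorm v := Real.sqrt_nonneg _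

lemma euclNorm_le {d : ℕ} (v : Fin d → ℝ) (c : ℝ) (hc : 0 ≤ c) (h : ∀ i, |v i| ≤ c) :
    euclNorm v ≤ d * c := by
  unfold euclNorm
  apply Real.sqrt_le_iff.2
  refine ⟨by positivity, ?_⟩
  calc ∑ i, v i ^ 2 ≤ ∑ _i : Fin d, c ^ 2 := Finset.sum_le_sum fun i _ => by
        rw [← sq_abs]; exact pow_le_pow_left₀ (abs_nonneg _) (h i) 2
    _ = d * c ^ 2 := by simp
    _ ≤ (d * c) ^ 2 := by
        rw [mul_pow]
        refine mul_le_mul_of_nonneg_right ?_ (sq_nonneg c)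
        exact_mod_cast Nat.le_self_pow (by norm_num) d

lemma frobNorm_le {d : ℕ} (v : Fin d → Fin d → ℝ) (c : ℝ) (hc : 0 ≤ c)
    (h : ∀ i j, |v i j| ≤ c) : frobNorm v ≤ d * (d * c) := by
  have e : frobNorm v = euclNorm (fun i => euclNorm (v i)) := by
    unfold frobNorm euclNorm
    congr 1
    refine Finset.sum_congr rfl fun i _ => ?_
    rw [Real.sq_sqrt (Finset.sum_nonneg fun _ _ => sq_nonneg _)]
  rw [e]
  refine euclNorm_le _ _ (by positivity) fun i => ?_
  rw [abs_of_nonneg (euclNorm_nonneg _)]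
  exact euclNorm_le _ _ hc (h i)

lemma norm_le_euclNorm {d : ℕ} (v : Fin d → ℝ) : ‖v‖ ≤ euclNorm v := by
  rw [pi_norm_le_iff_of_nonneg (euclNorm_nonneg _)]
  intro i
  apply Real.abs_le_sqrt
  exact Finset.single_le_sum (f := fun i => v i ^ 2) (fun _ _ => sq_nonneg _) (Finset.mem_univ i)

lemma tdist_bdd {d : ℕ} (x y : Fin d → ℝ) :
    BddBelow (Set.range fun k : Fin d → ℤ => euclNorm (x - y + latVec k)) :=
  ⟨0, by rintro _ ⟨k, rfl⟩; exact Real.sqrt_nonneg _⟩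

lemma tdist_nonneg {d : ℕ} (x y : Fin d → ℝ) : 0 ≤ tdist x y :=
  le_ciInf fun _ => Real.sqrt_nonneg _

lemma tdist_le {d : ℕ} (x y : Fin d → ℝ) : tdist x y ≤ d * ‖x - y‖ := by
  have h := ciInf_le (tdist_bdd x y) 0
  have e : x - y + latVec (0 : Fin d → ℤ) = x - y := by
    funext i; simp [latVec]
  rw [e] at h
  exact h.trans (euclNorm_le _ _ (norm_nonneg _) fun i => norm_le_pi_norm (x - y) i)

lemma to_tdist {d : ℕ} {f : (Fin d → ℝ) → ℝ} {B α : ℝ} (hα : 0 < α) (hB : 0 ≤ B)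
    (hp : ZPeriodic f)
    (h : ∀ x y, |f x - f y| ≤ B * ‖x - y‖ ^ α) (x y : Fin d → ℝ) :
    |f x - f y| ≤ B * tdist x y ^ α := by
  have hk : ∀ k : Fin d → ℤ, |f x - f y| ≤ B * euclNorm (x - y + latVec k) ^ α := by
    intro k
    have h1 := h (x + latVec k) y
    rw [hp] at h1
    refine h1.trans (mul_le_mul_of_nonneg_left (Real.rpow_le_rpow (norm_nonneg _) ?_ hα.le) hB)
    have : x + latVec k - y = x - y + latVec k := by abel
    rw [this]
    exact norm_le_euclNorm _
  rcases hB.eq_or_lt with hB0 | hB0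
  · have := hk 0
    rw [← hB0] at this ⊢
    simpa using this
  · have h2 : (|f x - f y| / B) ^ (α⁻¹) ≤ tdist x y := by
      refine le_ciInf fun k => ?_
      rw [Real.rpow_inv_le_iff_of_pos (by positivity) (euclNorm_nonneg _) hα, div_le_iff₀ hB0,
        mul_comm]
      exact hk k
    rw [Real.rpow_inv_le_iff_of_pos (by positivity) (tdist_nonneg _ _) hα, div_le_iff₀ hB0,
      mul_comm] at h2
    exact h2

lemma lip_pd {d : ℕ} {f : (Fin d → ℝ) → ℝ} (hf : Differentiable ℝ f) {M : ℝ} (hM0 : 0 ≤ M)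
    (hM : ∀ k x, |pd k f x| ≤ M) (x y : Fin d → ℝ) : |f x - f y| ≤ d * M * ‖x - y‖ := by
  have := Convex.norm_image_sub_le_of_norm_fderiv_le (𝕜 := ℝ) (f := f) (s := Set.univ)
    (C := d * M) (x := y) (y := x) (fun z _ => hf z) (fun z _ => by
      refine ContinuousLinearMap.opNorm_le_bound _ (by positivity) fun v => ?_
      rw [fderiv_eq_sum]
      refine (norm_sum_le _ _).trans ?_
      calc ∑ i, ‖v i * pd i f z‖ ≤ ∑ _i : Fin d, ‖v‖ * M := Finset.sum_le_sum fun i _ => by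
            rw [norm_mul]
            exact mul_le_mul (norm_le_pi_norm v i) (hM i z) (norm_nonneg _) (norm_nonneg _)
        _ = d * M * ‖v‖ := by simp; ring) convex_univ trivial trivial
  simpa using this

lemma lip_holder {d : ℕ} {f : (Fin d → ℝ) → ℝ} {M α : ℝ} (hα : 0 < α) (hα1 : α < 1) (hM : 0 ≤ M)
    (hp : ZPeriodic f)
    (h : ∀ x y, |f x - f y| ≤ M * ‖x - y‖) (x y : Fin d → ℝ) :
    |f x - f y| ≤ M * ‖x - y‖ ^ α := by
  rcases le_total ‖x - y‖ 1 with h1 | h1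
  · refine (h x y).trans (mul_le_mul_of_nonneg_left ?_ hM)
    exact Real.self_le_rpow_of_le_one (norm_nonneg _) h1 hα1.le
  · obtain ⟨k, hk⟩ := exists_rep (x - y)
    have h2 := h (x + latVec k) y
    rw [hp] at h2
    have e : x + latVec k - y = x - y + latVec k := by abel
    rw [e] at h2
    have h3 : ‖x - y + latVec k‖ ≤ 1 := by
      rw [pi_norm_le_iff_of_nonneg zero_le_one]
      intro i
      rw [Real.norm_eq_abs, abs_of_nonneg (hk.1 i)]
      exact hk.2 i
    have h4 : 1 ≤ ‖x - y‖ ^ α := Real.one_le_rpow h1 hα.le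
    exact h2.trans (mul_le_mul_of_nonneg_left (h3.trans h4) hM)

lemma pd_neg {d : ℕ} (i : Fin d) (f : (Fin d → ℝ) → ℝ) :
    pd i (fun x => - f x) = fun x => - pd i f x := by
  funext x
  unfold pd
  rw [fderiv_fun_neg]; simp

lemma max_second {d : ℕ} (i : Fin d) {f : (Fin d → ℝ) → ℝ} (hf : ContDiff ℝ 2 f)
    (x0 : Fin d → ℝ) (hx : ∀ x, f x ≤ f x0) : pd i (pd i f) x0 ≤ 0 := by
  by_contra hcon
  push Not at hcon
  have hfd : Differentiable ℝ f := hf.differentiable (by norm_num)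
  have hfd1 : Differentiable ℝ (pd i f) :=
    (pd_contDiff (m := 1) i hf (by norm_num)).differentiable (by norm_num)
  set p : ℝ → ℝ := fun t => f (x0 + t • (Pi.single i 1 : Fin d → ℝ)) with hp
  have d1 : deriv p = fun t => pd i f (x0 + t • (Pi.single i 1 : Fin d → ℝ)) :=
    funext fun t => (pd_line i hfd x0 t).deriv
  have d2 : deriv (deriv p) 0 = pd i (pd i f) x0 := by
    rw [d1]
    have := (pd_line i hfd1 x0 0).deriv
    simpa using this
  have hmax : IsLocalMax p 0 := Filter.Eventually.of_forall fun t => by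
    simp only [hp, zero_smul, add_zero]; exact hx _
  have hmin : IsLocalMin p 0 := isLocalMin_of_deriv_deriv_pos (by rw [d2]; exact hcon)
    hmax.deriv_eq_zero (pd_line i hfd x0 0).continuousAt
  have hc : p =ᶠ[nhds 0] fun _ => p 0 := by
    filter_upwards [hmax, hmin] with t a b using le_antisymm a b
  have hc2 := hc.deriv.deriv_eq
  rw [d2] at hc2
  simp at hc2
  linarith

lemma max_upper {d : ℕ} {ε : ℝ} (hε : 0 < ε) {Ub u : (Fin d → ℝ) → ℝ} {A : ℝ}
    (hA : ∀ x, |Ub x| ≤ A) (hu : ContDiff ℝ 2 u) (hp : ZPeriodic u)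
    (heq : ∀ x, ε ^ 2 * (∑ k, pd k (pd k u) x) = Real.exp (Ub x + u x) - 1) (x : Fin d → ℝ) :
    |u x| ≤ A := by
  rw [abs_le]
  constructor
  · obtain ⟨x0, hx0⟩ := exists_max (f := fun x => - u x) hu.continuous.neg
      (fun x k => by simp only []; rw [hp x k])
    have h1 : ∀ k, 0 ≤ pd k (pd k u) x0 := by
      intro k
      have := max_second k (f := fun x => - u x) hu.neg x0 hx0
      rw [pd_neg, pd_neg] at this
      linarith
    have h2 : 0 ≤ ε ^ 2 * (∑ k, pd k (pd k u) x0) :=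
      mul_nonneg (by positivity) (Finset.sum_nonneg fun k _ => h1 k)
    rw [heq] at h2
    have h3 : 0 ≤ Ub x0 + u x0 := Real.one_le_exp_iff.1 (by linarith)
    have := (abs_le.1 (hA x0)).2
    have := hx0 x
    linarith
  · obtain ⟨x0, hx0⟩ := exists_max hu.continuous hp
    have h2 : ε ^ 2 * (∑ k, pd k (pd k u) x0) ≤ 0 :=
      mul_nonpos_of_nonneg_of_nonpos (by positivity)
        (Finset.sum_nonpos fun k _ => max_second k hu x0 hx0)
    rw [heq] at h2
    have h3 : Ub x0 + u x0 ≤ 0 := Real.exp_le_one_iff.1 (by linarith)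
    have := (abs_le.1 (hA x0)).1
    have := hx0 x
    linarith

lemma rolle_pd {d : ℕ} (i : Fin d) {f : (Fin d → ℝ) → ℝ} (hf : Differentiable ℝ f)
    (hp : ZPeriodic f) (x : Fin d → ℝ) : ∃ t ∈ Set.Ioo (0:ℝ) 1,
      pd i f (x + t • (Pi.single i 1 : Fin d → ℝ)) = 0 := by
  refine exists_hasDerivAt_eq_zero (f := fun t : ℝ => f (x + t • (Pi.single i 1 : Fin d → ℝ)))
    zero_lt_one (fun t _ => (pd_line i hf x t).continuousAt.continuousWithinAt) ?_
    (fun t _ => pd_line i hf x t)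
  have e : latVec (Pi.single i 1 : Fin d → ℤ) = (Pi.single i 1 : Fin d → ℝ) := by
    funext j; by_cases h : j = i
    · subst h; simp [latVec]
    · simp [latVec, h]
  have := hp x (Pi.single i 1)
  rw [e] at this
  simp [this]

lemma norm_step {d : ℕ} (i : Fin d) (x : Fin d → ℝ) {t : ℝ} (ht : 0 ≤ t) :
    ‖x - (x + t • (Pi.single i 1 : Fin d → ℝ))‖ = t := by
  rw [sub_add_cancel_left, norm_neg, norm_smul, Pi.norm_single]
  simp [abs_of_nonneg ht]

lemma exp_lip {a b M : ℝ} (ha : a ≤ M) (hb : b ≤ M) :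
    |Real.exp a - Real.exp b| ≤ Real.exp M * |a - b| := by
  have key : ∀ a b : ℝ, a ≤ M → Real.exp a - Real.exp b ≤ Real.exp M * |a - b| := by
    intro a b ha
    have h1 : Real.exp a - Real.exp b ≤ Real.exp a * (a - b) := by
      have := Real.add_one_le_exp (b - a)
      have e : Real.exp b = Real.exp a * Real.exp (b - a) := by rw [← Real.exp_add]; ring_nf
      rw [e]
      nlinarith [Real.exp_pos a]
    refine h1.trans ?_
    calc Real.exp a * (a - b) ≤ Real.exp a * |a - b| :=
          mul_le_mul_of_nonneg_left (le_abs_self _) (Real.exp_pos _).le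
      _ ≤ _ := mul_le_mul_of_nonneg_right (Real.exp_le_exp.2 ha) (abs_nonneg _)
  rw [abs_le]
  have h1 := key a b ha
  have h2 := key b a hb
  rw [abs_sub_comm b a] at h2
  constructor <;> linarith

lemma line_lip {d : ℕ} (i : Fin d) {f : (Fin d → ℝ) → ℝ} (hf : Differentiable ℝ f) {M : ℝ}
    (hM : ∀ x, |pd i f x| ≤ M) (x : Fin d → ℝ) {t : ℝ} (ht : 0 ≤ t) :
    |f (x + t • (Pi.single i 1 : Fin d → ℝ)) - f x| ≤ M * t := by
  have := growth (f := fun t : ℝ => f (x + t • (Pi.single i 1 : Fin d → ℝ)))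
    (G := fun t => M * t) (f' := fun t : ℝ => pd i f (x + t • (Pi.single i 1 : Fin d → ℝ)))
    (G' := fun _ => M) ht (fun t _ => (pd_line i hf x t).continuousAt.continuousWithinAt)
    (by fun_prop) (fun t _ => pd_line i hf x t)
    (fun t _ => by simpa using (hasDerivAt_id t).const_mul M) (fun t _ => hM _)
  simpa using this

lemma interp {d : ℕ} (i : Fin d) {u : (Fin d → ℝ) → ℝ} (hu : ContDiff ℝ 2 u) {A H : ℝ}
    (hA : ∀ x, |u x| ≤ A) (hH : ∀ x, |pd i (pd i u) x| ≤ H) (x : Fin d → ℝ) {h : ℝ} (hh : 0 < h) :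
    |pd i u x| ≤ 2 * A / h + h * H := by
  have hud : Differentiable ℝ u := hu.differentiable (by norm_num)
  have hud1 : Differentiable ℝ (pd i u) :=
    (pd_contDiff (m := 1) i hu (by norm_num)).differentiable (by norm_num)
  have hH0 : 0 ≤ H := (abs_nonneg _).trans (hH x)
  obtain ⟨t, ht, hs⟩ := exists_hasDerivAt_eq_slope
    (fun t : ℝ => u (x + t • (Pi.single i 1 : Fin d → ℝ)))
    (fun t : ℝ => pd i u (x + t • (Pi.single i 1 : Fin d → ℝ))) hh
    (fun t _ => (pd_line i hud x t).continuousAt.continuousWithinAt) (fun t _ => pd_line i hud x t)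
  have h1 := line_lip i hud1 hH x ht.1.le
  have h2 : |pd i u (x + t • (Pi.single i 1 : Fin d → ℝ))| ≤ 2 * A / h := by
    rw [hs, abs_div, sub_zero, abs_of_pos hh]
    refine div_le_div_of_nonneg_right ?_ hh.le
    refine (abs_sub _ _).trans ?_
    linarith [hA (x + h • (Pi.single i 1 : Fin d → ℝ)), hA (x + (0:ℝ) • (Pi.single i 1 : Fin d → ℝ))]
  have h3 : H * t ≤ h * H := by nlinarith [ht.2]
  have a1 := abs_le.1 h1
  have a2 := abs_le.1 h2
  rw [abs_le]; constructor <;> linarith [a1.1, a1.2, a2.1, a2.2]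

end Helpers

/-- `C^{2,α}` estimate for `Û` solving `ε² Δ Û = e^{Ū+Û} − 1` with
`sup |Ū| ≤ M₁` and `‖Ū‖_{C^{0,α}} ≤ M₂`. -/
theorem statement7 (d : ℕ) (hd : d = 2 ∨ d = 3) (α : ℝ) (hα : α ∈ Set.Ioo (0:ℝ) 1) :
    ∃ C : ℝ, 0 < C ∧
      ∀ ε : ℝ, 0 < ε → ∀ M₁ M₂ : ℝ, 0 ≤ M₁ → 0 ≤ M₂ →
      ∀ Ubar Uhat : (Fin d → ℝ) → ℝ,
        ZPeriodic Ubar → (∀ x, |Ubar x| ≤ M₁) → HolderBnd α Ubar M₂ →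
        ContDiff ℝ 2 Uhat → ZPeriodic Uhat →
        (∀ x, ε ^ 2 * lap Uhat x = Real.exp (Ubar x + Uhat x) - 1) →
        C2Bnd α Uhat
          ((M₂ + C / ε ^ 2 * (Real.exp (2 * M₁) + 1)) *
            Real.exp (C / ε ^ 2 * (Real.exp (2 * M₁) + 1))) := by
  
  obtain ⟨h0, h1⟩ := hα
  have hd0 : 0 < d := by omega
  obtain ⟨CS, hCS1, hCS⟩ := schauder d hd0 α h0 h1
  set D : ℝ := (d : ℝ) with hD
  have hD1 : 1 ≤ D := by rw [hD]; exact_mod_cast hd0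
  set c : ℝ := CS * D with hc
  have hc0 : 0 < c := by positivity
  set c' : ℝ := 2 * D + 3 * D ^ 2 with hc'
  have hc'1 : 1 ≤ c' := by nlinarith
  refine ⟨16 * c' * c * D, by positivity, ?_⟩
  intro ε hε M₁ M₂ hM₁ hM₂ Ub u hUp hUM hUH hu hp heq
  obtain ⟨A, B, hA0, hB0, hAB, hUA, hUB⟩ := hUH
  set K : ℝ := (Real.exp (2 * M₁) + 1) / ε ^ 2 with hK
  have hK0 : 0 < K := by positivity
  have eCK : 16 * c' * c * D / ε ^ 2 * (Real.exp (2 * M₁) + 1) = 16 * c' * c * D * K := by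
    rw [hK]; ring
  rw [eCK]
  have heq' : ∀ x, ε ^ 2 * (∑ k, pd k (pd k u) x) = Real.exp (Ub x + u x) - 1 := heq
  have huA := max_upper hε hUA hu hp heq'
  have huM := max_upper hε hUM hu hp heq'
  have hud : Differentiable ℝ u := hu.differentiable (by norm_num)
  have hu1 : ∀ k, ContDiff ℝ 1 (pd k u) := fun k => pd_contDiff k hu (by norm_num)
  have hud1 : ∀ k, Differentiable ℝ (pd k u) := fun k => (hu1 k).differentiable (by norm_num)
  have hu0 : ∀ k l, Continuous (pd k (pd l u)) := fun k l =>
    (pd_contDiff (m := 0) k (hu1 l) (by norm_num)).continuous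
  have hp1 : ∀ k, ZPeriodic (pd k u) := fun k => pd_periodic k hp
  have hp2 : ∀ k l, ZPeriodic (pd k (pd l u)) := fun k l => pd_periodic k (hp1 l)
  -- bound of the second derivatives
  obtain ⟨N, hN⟩ : ∃ N : ℝ, ∀ i j x, |pd i (pd j u) x| ≤ N := by
    obtain ⟨x0, hx0⟩ := exists_max (f := fun x => ∑ i, ∑ j, |pd i (pd j u) x|) (by fun_prop)
      (fun x k => by simp only [hp2 _ _ x k])
    refine ⟨_, fun i j x => le_trans ?_ (hx0 x)⟩
    refine le_trans ?_ (Finset.single_le_sum (f := fun i => ∑ j, |pd i (pd j u) x|)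
      (fun i _ => Finset.sum_nonneg fun j _ => abs_nonneg _) (Finset.mem_univ i))
    exact Finset.single_le_sum (f := fun j => |pd i (pd j u) x|)
      (fun j _ => abs_nonneg _) (Finset.mem_univ j)
  -- maximum of the gradient
  have hc1 : ∀ k, Continuous (pd k u) := fun k => (hu1 k).continuous
  obtain ⟨x0, hx0⟩ := exists_max (f := fun x => ∑ k, |pd k u x|) (by fun_prop)
    (fun x k => by simp only [hp1 _ x k])
  set L := ∑ k, |pd k u x0| with hL
  have hL0 : 0 ≤ L := Finset.sum_nonneg fun _ _ => abs_nonneg _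
  have hLb : ∀ k x, |pd k u x| ≤ L := fun k x =>
    (Finset.single_le_sum (f := fun k => |pd k u x|)
      (fun j _ => abs_nonneg _) (Finset.mem_univ k)).trans (hx0 x)
  have huL := lip_holder h0 h1 (by positivity : 0 ≤ d * L) hp (lip_pd hud hL0 hLb)
  have hUb' : ∀ x y, |Ub x - Ub y| ≤ D * M₂ * ‖x - y‖ ^ α := by
    intro x y
    refine (hUB x y).trans ?_
    have e1 : tdist x y ^ α ≤ D * ‖x - y‖ ^ α := by
      refine (Real.rpow_le_rpow (tdist_nonneg _ _) (tdist_le x y) h0.le).trans ?_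
      rw [Real.mul_rpow (by positivity) (norm_nonneg _)]
      refine mul_le_mul_of_nonneg_right ?_ (by positivity)
      exact Real.rpow_le_self_of_one_le hD1 h1.le
    calc B * tdist x y ^ α ≤ M₂ * (D * ‖x - y‖ ^ α) :=
          mul_le_mul (by linarith) e1 (Real.rpow_nonneg (tdist_nonneg _ _) _) hM₂
      _ = _ := by ring
  have hg : ∀ x y, |(∑ k, pd k (pd k u) x) - ∑ k, pd k (pd k u) y|
      ≤ K * D * (M₂ + L) * ‖x - y‖ ^ α := by
    intro x y
    have hle : ∀ x, Ub x + u x ≤ 2 * M₁ := fun x => by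
      have := (abs_le.1 (hUM x)).2
      have := (abs_le.1 (huM x)).2
      linarith
    have e1 : (∑ k, pd k (pd k u) x) - ∑ k, pd k (pd k u) y
        = (Real.exp (Ub x + u x) - Real.exp (Ub y + u y)) / ε ^ 2 := by
      have a := heq' x
      have b := heq' y
      rw [eq_div_iff (by positivity)]
      linarith
    have e2 := exp_lip (hle x) (hle y)
    have e3 : |Ub x + u x - (Ub y + u y)| ≤ D * (M₂ + L) * ‖x - y‖ ^ α := by
      have e : Ub x + u x - (Ub y + u y) = (Ub x - Ub y) + (u x - u y) := by ring
      rw [e]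
      refine (abs_add_le _ _).trans ?_
      linarith [hUb' x y, huL x y]
    rw [e1, abs_div, abs_of_pos (by positivity : 0 < ε ^ 2), div_le_iff₀ (by positivity)]
    have e4 : K * D * (M₂ + L) * ‖x - y‖ ^ α * ε ^ 2
        = (Real.exp (2 * M₁) + 1) * (D * (M₂ + L) * ‖x - y‖ ^ α) := by
      rw [hK]; field_simp
    rw [e4]
    refine e2.trans (mul_le_mul (by linarith) e3 (abs_nonneg _) (by positivity))
  set H : ℝ := c * K * (M₂ + L) with hH
  have hH0 : 0 ≤ H := by positivity
  have hv : ∀ i j x y, |pd i (pd j u) x - pd i (pd j u) y| ≤ H * ‖x - y‖ ^ α := by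
    intro i j x y
    have := hCS u hu N hN (K * D * (M₂ + L)) (by positivity) hg i j x y
    refine this.trans (le_of_eq ?_)
    rw [hH, hc]; ring
  have hvs : ∀ i j x, |pd i (pd j u) x| ≤ H := by
    intro i j x
    obtain ⟨t, ht, hz⟩ := rolle_pd i (hud1 j) (hp1 j) x
    have := hv i j x (x + t • (Pi.single i 1 : Fin d → ℝ))
    rw [hz, sub_zero, norm_step i x ht.1.le] at this
    refine this.trans ?_
    have h2 : t ^ α ≤ 1 := Real.rpow_le_one ht.1.le ht.2.le h0.le
    exact mul_le_of_le_one_right hH0 h2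
  have hgs : ∀ j x, |pd j u x| ≤ H := by
    intro j x
    obtain ⟨t, ht, hz⟩ := rolle_pd j hud hp x
    have := line_lip j (hud1 j) (hvs j j) x ht.1.le
    rw [hz, zero_sub, abs_neg] at this
    exact this.trans (mul_le_of_le_one_right hH0 ht.2.le)
  -- bound of L
  have hAM : A ≤ M₂ := by linarith
  have hLbound : L ≤ M₂ * (4 * D * (1 + 2 * D * c * K) + 1) := by
    set h : ℝ := (1 + 2 * D * c * K)⁻¹ with hh
    have hpos : 0 < 1 + 2 * D * c * K := by positivity
    have hh0 : 0 < h := inv_pos.2 hpos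
    have e1 : L ≤ D * (2 * A / h + h * H) := by
      calc L ≤ ∑ _k : Fin d, (2 * A / h + h * H) :=
            Finset.sum_le_sum fun k _ => interp k hu huA (hvs k k) x0 hh0
        _ = _ := by simp [hD]; ring
    have e2 : 2 * A / h = 2 * A * (1 + 2 * D * c * K) := by rw [hh, div_inv_eq_mul]
    have e3 : D * (h * (c * K)) ≤ 1 / 2 := by
      have : D * (h * (c * K)) = (D * c * K) / (1 + 2 * D * c * K) := by
        rw [hh]; field_simp
      rw [this, div_le_iff₀ hpos]
      linarith
    have e4 : D * (h * H) ≤ (M₂ + L) / 2 := by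
      calc D * (h * H) = D * (h * (c * K)) * (M₂ + L) := by rw [hH]; ring
        _ ≤ 1 / 2 * (M₂ + L) := mul_le_mul_of_nonneg_right e3 (by positivity)
        _ = _ := by ring
    have e5 : D * (2 * A * (1 + 2 * D * c * K)) ≤ D * (2 * M₂ * (1 + 2 * D * c * K)) := by
      gcongr
    rw [e2] at e1
    linarith
  have hHbound : H ≤ M₂ * (c * K * (6 * D + 8 * D ^ 2 * c * K)) := by
    have : M₂ + L ≤ M₂ * (6 * D + 8 * D ^ 2 * c * K) := by nlinarith
    calc H ≤ c * K * (M₂ * (6 * D + 8 * D ^ 2 * c * K)) :=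
          mul_le_mul_of_nonneg_left this (by positivity)
      _ = _ := by ring
  have hfinal : A + c' * H ≤
      (M₂ + 16 * c' * c * D * K) * Real.exp (16 * c' * c * D * K) := by
    set z := 16 * c' * c * D * K with hz
    have hz0 : 0 ≤ z := by positivity
    have e1 := Real.quadratic_le_exp_of_nonneg hz0
    have e2 : c' * (c * K * (6 * D + 8 * D ^ 2 * c * K)) ≤ z + z ^ 2 / 2 := by
      set q := c * K * D with hq
      have hq0 : 0 ≤ q := by positivity
      have a1 : c' * (c * K * (6 * D + 8 * D ^ 2 * c * K)) = 6 * c' * q + 8 * c' * q ^ 2 := by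
        rw [hq]; ring
      have a2 : z = 16 * c' * q := by rw [hz, hq]; ring
      rw [a1, a2]
      have a3 : 0 ≤ c' * q := by positivity
      have a4 : c' * q ^ 2 ≤ c' * (c' * q ^ 2) := le_mul_of_one_le_left (by positivity) hc'1
      nlinarith
    calc A + c' * H ≤ M₂ + c' * (M₂ * (c * K * (6 * D + 8 * D ^ 2 * c * K))) := by gcongr
      _ = M₂ * (1 + c' * (c * K * (6 * D + 8 * D ^ 2 * c * K))) := by ring
      _ ≤ M₂ * Real.exp z := mul_le_mul_of_nonneg_left (by linarith) hM₂
      _ ≤ _ := mul_le_mul_of_nonneg_right (by linarith) (Real.exp_pos _).le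
  refine ⟨A + D * H, D * H + D * (D * H), D * (D * H) + D * (D * H), by positivity, by positivity,
    by positivity, ?_, ⟨A, D * H, hA0, by positivity, le_rfl, huA, ?_⟩,
    ⟨D * H, D * (D * H), by positivity, by positivity, le_rfl, ?_, ?_⟩,
    ⟨D * (D * H), D * (D * H), by positivity, by positivity, le_rfl, ?_, ?_⟩⟩
  · refine le_trans (le_of_eq ?_) hfinal
    rw [hc']; ring
  · exact to_tdist h0 (by positivity) hp
      (lip_holder h0 h1 (by positivity) hp (lip_pd hud hH0 hgs))
  · intro x
    exact euclNorm_le _ _ hH0 fun i => hgs i x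
  · intro x y
    have ht : 0 ≤ tdist x y ^ α := Real.rpow_nonneg (tdist_nonneg _ _) _
    refine (euclNorm_le _ (D * H * tdist x y ^ α) (by positivity) fun i => ?_).trans
      (le_of_eq (by ring))
    exact to_tdist h0 (by positivity) (hp1 i)
      (lip_holder h0 h1 (by positivity) (hp1 i) (lip_pd (hud1 i) hH0 fun k => hvs k i)) x y
  · intro x
    exact frobNorm_le _ _ hH0 fun i j => hvs i j x
  · intro x y
    have ht : 0 ≤ tdist x y ^ α := Real.rpow_nonneg (tdist_nonneg _ _) _
    refine (frobNorm_le _ (H * tdist x y ^ α) (by positivity) fun i j => ?_).trans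
      (le_of_eq (by ring))
    exact to_tdist h0 hH0 (hp2 i j) (hv i j) x y
end

section
/- Let d ≥ 1 and ε > 0. For i = 1, 2, let h_i ∈ L^∞(𝕋^d) be a probability density, and let Ū_i ∈ C¹(𝕋^d) be a weak solution of ε² Δ Ū_i = h_i − 1, i.e. ε² ∫_{𝕋^d} ∇Ū_i · ∇φ dx = −∫_{𝕋^d} (h_i − 1) φ dx for every smooth φ : 𝕋^d → ℝ. Then ∫_{𝕋^d} |∇Ū_1(x) − ∇Ū_2(x)|² dx ≤ ε^{−4} · max_i ‖h_i‖_{L^∞(𝕋^d)} · W₂²(h_1 dx, h_2 dx). -/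
open MeasureTheory Real Set
open scoped ENNReal

open MeasureTheory Real Set
open scoped ENNReal

set_option linter.unusedSectionVars false
namespace OTcore
open Filter Topology

section A
variable {E : Type*} [NormedAddCommGroup E] [InnerProductSpace ℝ E]

def Per (L : AddSubgroup E) (f : E → ℝ) : Prop := ∀ x, ∀ l ∈ L, f (x + l) = f x

noncomputable def cT (ψ : E → ℝ) (x : E) : ℝ := ⨅ y, (‖x - y‖ ^ 2 / 2 - ψ y)

lemma cT_bdd {ψ : E → ℝ} {B : ℝ} (hB : ∀ y, ψ y ≤ B) (x : E) :
    BddBelow (range fun y => ‖x - y‖ ^ 2 / 2 - ψ y) := by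
  refine ⟨-B, ?_⟩
  rintro _ ⟨y, rfl⟩
  have := hB y
  have := sq_nonneg ‖x - y‖
  simp only
  linarith

lemma cT_le {ψ : E → ℝ} {B : ℝ} (hB : ∀ y, ψ y ≤ B) (x y : E) :
    cT ψ x ≤ ‖x - y‖ ^ 2 / 2 - ψ y := ciInf_le (cT_bdd hB x) y

lemma le_cT {ψ : E → ℝ} {x : E} {a : ℝ} (h : ∀ y, a ≤ ‖x - y‖ ^ 2 / 2 - ψ y) : a ≤ cT ψ x :=
  le_ciInf h

lemma cT_per {L : AddSubgroup E} {ψ : E → ℝ} (hψ : Per L ψ) : Per L (cT ψ) := by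
  intro x l hl
  unfold cT
  refine (Equiv.iInf_congr (Equiv.addRight l) ?_).symm
  intro y
  simp [hψ y l hl]

lemma cT_ub {ψ : E → ℝ} {B : ℝ} (hB : ∀ y, |ψ y| ≤ B) (x : E) : |cT ψ x| ≤ B := by
  rw [abs_le]
  constructor
  · apply le_cT
    intro y
    have := (abs_le.1 (hB y)).2
    have := sq_nonneg ‖x - y‖
    linarith
  · have h := cT_le (fun y => (abs_le.1 (hB y)).2) x x
    have := (abs_le.1 (hB x)).1
    simp at h
    linarith

/-- reduction of the competitor to the ball of radius `R`. -/
lemma red {L : AddSubgroup E} {R : ℝ} (hR : ∀ x : E, ∃ l ∈ L, ‖x + l‖ ≤ R) {ψ : E → ℝ}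
    (hψ : Per L ψ) (x y : E) : ∃ y', ‖x - y'‖ ≤ R ∧ ψ y' = ψ y ∧ ‖x - y'‖ ≤ ‖x - y‖ := by
  by_cases h : ‖x - y‖ ≤ R
  · exact ⟨y, h, rfl, le_rfl⟩
  · obtain ⟨l, hl, hl'⟩ := hR (x - y)
    refine ⟨y + (-l), ?_, hψ y _ (L.neg_mem hl), ?_⟩
    · have : x - (y + -l) = x - y + l := by abel
      rw [this]; exact hl'
    · have : x - (y + -l) = x - y + l := by abel
      rw [this]; linarith

lemma cT_modulus {L : AddSubgroup E} {R : ℝ} (hR : ∀ x : E, ∃ l ∈ L, ‖x + l‖ ≤ R) {ψ : E → ℝ}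
    (hψ : Per L ψ) {B : ℝ} (hB : ∀ y, ψ y ≤ B) (x x' : E) :
    cT ψ x' - cT ψ x ≤ ‖x - x'‖ * (‖x - x'‖ + 2 * R) / 2 := by
  have : cT ψ x' - ‖x - x'‖ * (‖x - x'‖ + 2 * R) / 2 ≤ cT ψ x := by
    apply le_cT
    intro y
    obtain ⟨y', h1, h2, h3⟩ := red hR hψ x y
    have h4 := cT_le hB x' y'
    have h5 : ‖x' - y'‖ ≤ ‖x - x'‖ + ‖x - y'‖ := by
      rw [norm_sub_rev x x']
      have : x' - y' = (x' - x) + (x - y') := by abel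
      rw [this]; exact norm_add_le _ _
    have := norm_nonneg (x - y')
    have := norm_nonneg (x - x')
    have := norm_nonneg (x' - y')
    have h6 : ‖x' - y'‖ ^ 2 ≤ (‖x - x'‖ + ‖x - y'‖) ^ 2 := by gcongr
    have h7 : ‖x - y'‖ ^ 2 ≤ ‖x - y‖ ^ 2 := by gcongr
    nlinarith
  linarith

lemma cT_lip {L : AddSubgroup E} {R : ℝ} (hR0 : 0 ≤ R) (hR : ∀ x : E, ∃ l ∈ L, ‖x + l‖ ≤ R)
    {ψ : E → ℝ} (hψ : Per L ψ) {B : ℝ} (hB : ∀ y, ψ y ≤ B) :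
    LipschitzWith (Real.toNNReal (2 * R)) (cT ψ) := by
  have key : ∀ x x', cT ψ x' - cT ψ x ≤ 2 * R * ‖x - x'‖ := by
    intro x x'
    by_cases h : ‖x - x'‖ ≤ 2 * R
    · have := cT_modulus hR hψ hB x x'
      have := norm_nonneg (x - x')
      nlinarith
    · obtain ⟨l, hl, hl'⟩ := hR (x - x')
      have h1 := cT_modulus hR hψ hB x (x' + (-l))
      rw [cT_per hψ x' _ (L.neg_mem hl)] at h1
      have : x - (x' + -l) = x - x' + l := by abel
      rw [this] at h1
      have := norm_nonneg (x - x' + l)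
      push Not at h
      nlinarith
  apply LipschitzWith.of_dist_le_mul
  intro x y
  rw [Real.coe_toNNReal _ (by positivity), Real.dist_eq, dist_eq_norm, abs_le]
  constructor
  · have := key x y; linarith
  · have := key y x; rw [norm_sub_rev] at this; linarith

lemma lip_per_bdd {L : AddSubgroup E} {R : ℝ} (hR : ∀ x : E, ∃ l ∈ L, ‖x + l‖ ≤ R)
    {K : NNReal} {ψ : E → ℝ} (hψ : Per L ψ) (hl : LipschitzWith K ψ) (h0 : ψ 0 = 0) (x : E) :
    |ψ x| ≤ K * R := by
  obtain ⟨l, hl', hl2⟩ := hR x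
  rw [← hψ x l hl']
  have := hl.dist_le_mul (x + l) 0
  rw [h0, dist_zero_right, dist_zero_right, Real.norm_eq_abs] at this
  exact this.trans (by gcongr)

variable [FiniteDimensional ℝ E]

lemma per_bdd {L : AddSubgroup E} {R : ℝ} (hR : ∀ x : E, ∃ l ∈ L, ‖x + l‖ ≤ R)
    {ψ : E → ℝ} (hψ : Per L ψ) (hc : Continuous ψ) : ∃ B, 0 ≤ B ∧ ∀ y, |ψ y| ≤ B := by
  obtain ⟨B, hB⟩ := (isCompact_closedBall (0 : E) R).exists_bound_of_continuousOn hc.continuousOn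
  refine ⟨max B 0, le_max_right _ _, fun y => ?_⟩
  obtain ⟨l, hl, hl'⟩ := hR y
  rw [← hψ y l hl]
  exact (hB _ (by simpa using hl')).trans (le_max_left _ _)

lemma cT_att {L : AddSubgroup E} {R : ℝ} (hR : ∀ x : E, ∃ l ∈ L, ‖x + l‖ ≤ R)
    {ψ : E → ℝ} (hψ : Per L ψ) (hc : Continuous ψ) (x : E) :
    ∃ y, cT ψ x = ‖x - y‖ ^ 2 / 2 - ψ y := by
  obtain ⟨B, hB0, hB⟩ := per_bdd hR hψ hc
  have hne : (Metric.closedBall x R).Nonempty := by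
    obtain ⟨l, -, h⟩ := hR x
    exact ⟨x, by simpa using (norm_nonneg _).trans h⟩
  obtain ⟨y, hy, hy2⟩ := (isCompact_closedBall x R).exists_isMinOn hne
    (f := fun y => ‖x - y‖ ^ 2 / 2 - ψ y) (by fun_prop)
  refine ⟨y, le_antisymm (cT_le (fun y => (abs_le.1 (hB y)).2) x y) (le_cT fun w => ?_)⟩
  obtain ⟨y', h1, h2, h3⟩ := red hR hψ x w
  have h4 := hy2 (show y' ∈ Metric.closedBall x R by
    rw [Metric.mem_closedBall, dist_comm, dist_eq_norm]; exact h1)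
  simp only [Set.mem_ofPred_eq] at h4
  refine h4.trans ?_
  rw [h2]
  gcongr

/-- the minimizer at differentiability points -/
lemma min_eq_grad {ψ : E → ℝ} {B : ℝ} (hB : ∀ y, ψ y ≤ B) {x y : E}
    (hd : DifferentiableAt ℝ (cT ψ) x) (hy : cT ψ x = ‖x - y‖ ^ 2 / 2 - ψ y) :
    y = x - gradient (cT ψ) x := by
  have h1 : HasGradientAt (cT ψ) (gradient (cT ψ) x) x := hd.hasGradientAt
  have h2 : HasFDerivAt (fun z => ‖z - y‖ ^ 2 / 2 - ψ y - cT ψ z)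
      ((innerSL ℝ (x - y)) - InnerProductSpace.toDual ℝ E (gradient (cT ψ) x)) x := by
    have h3 : HasFDerivAt (fun z : E => ‖z - y‖ ^ 2) (2 • (innerSL ℝ (x - y))) x := by
      have := ((hasFDerivAt_id (𝕜 := ℝ) x).sub_const y).norm_sq
      simpa using this
    have h4 := ((h3.mul_const (1/2)).sub_const (ψ y)).sub h1.hasFDerivAt
    convert! h4 using 1
    · ext z; simp [div_eq_mul_inv]
    · ext z; simp
  have h3 : IsLocalMin (fun z => ‖z - y‖ ^ 2 / 2 - ψ y - cT ψ z) x := by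
    apply Filter.Eventually.of_forall
    intro z
    have := cT_le hB z y
    simp only
    rw [hy]; linarith
  have h4 := h3.hasFDerivAt_eq_zero h2
  generalize gradient (cT ψ) x = g at *
  have h5 : x - y - g = 0 := by
    apply ext_inner_right ℝ
    intro v
    have := congrArg (fun f => f v) h4
    simp at this
    rw [inner_sub_left, inner_zero_left, inner_sub_left]
    linarith
  rw [sub_sub, sub_eq_zero] at h5
  rw [h5]
  abel

end A
end OTcore

open MeasureTheory Real Set
open scoped ENNReal
set_option linter.unusedSectionVars false
namespace OTcore
open Filter Topology

section B
variable {E : Type*} [NormedAddCommGroup E] [InnerProductSpace ℝ E] [FiniteDimensional ℝ E]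

lemma cpt_seq {L : AddSubgroup E} {R : ℝ} (hR : ∀ x : E, ∃ l ∈ L, ‖x + l‖ ≤ R)
    {K : NNReal} (ψ : ℕ → E → ℝ) (hψ : ∀ n, Per L (ψ n)) (hl : ∀ n, LipschitzWith K (ψ n))
    (h0 : ∀ n, ψ n 0 = 0) :
    ∃ (s : ℕ → ℕ) (f : E → ℝ), StrictMono s ∧ Per L f ∧ LipschitzWith K f ∧
      ∀ x, Tendsto (fun n => ψ (s n) x) atTop (𝓝 (f x)) := by
  have hc : IsCompact (Set.univ.pi fun _ : ℕ => Set.Icc (-(K * R : ℝ)) (K * R)) :=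
    isCompact_univ_pi fun _ => isCompact_Icc
  have hm : ∀ n, (fun k => ψ n (TopologicalSpace.denseSeq E k)) ∈
      (Set.univ.pi fun _ : ℕ => Set.Icc (-(K * R : ℝ)) (K * R)) := by
    intro n k _
    exact abs_le.1 (lip_per_bdd hR (hψ n) (hl n) (h0 n) _)
  obtain ⟨a, -, s, hs, hlim⟩ := hc.tendsto_subseq hm
  have hlim' : ∀ k, Tendsto (fun n => ψ (s n) (TopologicalSpace.denseSeq E k)) atTop (𝓝 (a k)) :=
    fun k => (tendsto_pi_nhds.1 hlim) k
  have hcau : ∀ x, CauchySeq (fun n => ψ (s n) x) := by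
    intro x
    rw [Metric.cauchySeq_iff']
    intro ε hε
    have hK : 0 < (K : ℝ) + 1 := by positivity
    obtain ⟨k, hk⟩ := (TopologicalSpace.denseRange_denseSeq E).exists_dist_lt x
      (show 0 < ε / (4 * (K + 1)) by positivity)
    obtain ⟨N, hN⟩ := (Metric.cauchySeq_iff'.1 (hlim' k).cauchySeq) (ε / 4) (by positivity)
    refine ⟨N, fun n hn => ?_⟩
    have h1 := hN n hn
    set q := TopologicalSpace.denseSeq E k
    have h2 : ∀ n, dist (ψ n x) (ψ n q) ≤ ε / 4 := by
      intro n
      calc dist (ψ n x) (ψ n q) ≤ K * dist x q := (hl n).dist_le_mul _ _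
        _ ≤ (K + 1) * (ε / (4 * (K + 1))) := by gcongr; linarith
        _ = ε / 4 := by field_simp
    calc dist (ψ (s n) x) (ψ (s N) x) ≤ dist (ψ (s n) x) (ψ (s n) q) +
          dist (ψ (s n) q) (ψ (s N) q) + dist (ψ (s N) q) (ψ (s N) x) := dist_triangle4 _ _ _ _
      _ < ε := by
        have a1 := h2 (s n); have a2 := h2 (s N)
        rw [dist_comm] at a2
        linarith
  choose f hf using fun x => cauchySeq_tendsto_of_complete (hcau x)
  refine ⟨s, f, hs, ?_, ?_, hf⟩
  · intro x l hl'
    refine tendsto_nhds_unique (hf (x + l)) ?_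
    simp_rw [hψ _ x l hl']
    exact hf x
  · apply LipschitzWith.of_dist_le_mul
    intro x y
    exact le_of_tendsto ((hf x).dist (hf y)) (Eventually.of_forall fun n => (hl _).dist_le_mul _ _)

variable [MeasurableSpace E] [BorelSpace E]

lemma integrable_per {μ : Measure E} [IsFiniteMeasure μ]
    {f : E → ℝ} (hf : Continuous f) {B : ℝ} (hB : ∀ x, |f x| ≤ B) : Integrable f μ :=
  Integrable.of_bound hf.aestronglyMeasurable B (Eventually.of_forall hB)

lemma exists_max {L : AddSubgroup E} {R : ℝ} (hR0 : 0 ≤ R) (hR : ∀ x : E, ∃ l ∈ L, ‖x + l‖ ≤ R)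
    (μ₁ μ₂ : Measure E) [IsProbabilityMeasure μ₁] [IsProbabilityMeasure μ₂] :
    ∃ ψ : E → ℝ, Continuous ψ ∧ Per L ψ ∧ ∀ ψ' : E → ℝ, Continuous ψ' → Per L ψ' →
      ∫ x, cT ψ' x ∂μ₁ + ∫ y, ψ' y ∂μ₂ ≤ ∫ x, cT ψ x ∂μ₁ + ∫ y, ψ y ∂μ₂ := by
  set κ := Real.toNNReal (2 * R)
  set D : (E → ℝ) → ℝ := fun ψ => ∫ x, cT ψ x ∂μ₁ + ∫ y, ψ y ∂μ₂ with hD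
  have intc : ∀ ψ : E → ℝ, Continuous ψ → Per L ψ → ∀ (μ : Measure E) [IsProbabilityMeasure μ],
      Integrable ψ μ ∧ Integrable (cT ψ) μ := by
    intro ψ h1 h2 μ _
    obtain ⟨B, _, hB⟩ := per_bdd hR h2 h1
    exact ⟨integrable_per h1 hB, integrable_per
      (cT_lip hR0 hR h2 (fun y => (abs_le.1 (hB y)).2)).continuous (cT_ub hB)⟩
  -- upper bound
  have hub : ∀ ψ : E → ℝ, Continuous ψ → Per L ψ → D ψ ≤ R ^ 2 / 2 := by
    intro ψ h1 h2
    obtain ⟨B, _, hB⟩ := per_bdd hR h2 h1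
    have key : ∀ x y, cT ψ x ≤ R ^ 2 / 2 - ψ y := by
      intro x y
      obtain ⟨y', e1, e2, e3⟩ := red hR h2 x y
      refine (cT_le (fun y => (abs_le.1 (hB y)).2) x y').trans ?_
      rw [e2]; gcongr
    have k2 : ∀ y, ∫ x, cT ψ x ∂μ₁ ≤ R ^ 2 / 2 - ψ y := by
      intro y
      have := integral_mono (intc ψ h1 h2 μ₁).2 (integrable_const (R ^ 2 / 2 - ψ y))
        (fun x => key x y)
      simpa using this
    have k3 := integral_mono (integrable_const (∫ x, cT ψ x ∂μ₁))
      ((integrable_const (R ^ 2 / 2)).sub (intc ψ h1 h2 μ₂).1) (fun y => k2 y)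
    simp only [Pi.sub_apply] at k3
    rw [integral_sub (integrable_const _) (intc ψ h1 h2 μ₂).1] at k3
    simp at k3
    simp only [hD]; linarith
  -- improvement
  have himp : ∀ ψ : E → ℝ, Continuous ψ → Per L ψ → ∃ ψ' : E → ℝ, LipschitzWith κ ψ' ∧
      Per L ψ' ∧ ψ' 0 = 0 ∧ D ψ ≤ D ψ' := by
    intro ψ h1 h2
    obtain ⟨B, _, hB⟩ := per_bdd hR h2 h1
    have hB' : ∀ y, ψ y ≤ B := fun y => (abs_le.1 (hB y)).2
    have hBc := cT_ub hB
    have hBc' : ∀ y, cT ψ y ≤ B := fun y => (abs_le.1 (hBc y)).2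
    have hcl := cT_lip hR0 hR h2 hB'
    have hcp := cT_per h2
    have hccl := cT_lip hR0 hR hcp hBc'
    have hccp := cT_per hcp
    have hBcc := cT_ub hBc
    set a := cT (cT ψ) 0
    have hp' : Per L (fun y => cT (cT ψ) y - a) := fun x l hl => by simp only; rw [hccp x l hl]
    have hl' : LipschitzWith κ (fun y => cT (cT ψ) y - a) := by
      intro x y
      simpa using hccl x y
    refine ⟨fun y => cT (cT ψ) y - a, hl', hp', sub_self _, ?_⟩
    have e1 : ∀ y, ψ y ≤ cT (cT ψ) y := by
      intro y
      apply le_cT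
      intro x
      have := cT_le hB' x y
      rw [norm_sub_rev] at this
      linarith
    have e2 : ∀ x, cT ψ x + a ≤ cT (fun y => cT (cT ψ) y - a) x := by
      intro x
      apply le_cT
      intro y
      have := cT_le hBc' y x
      rw [norm_sub_rev] at this
      linarith
    have f1 := integral_mono (intc ψ h1 h2 μ₂).1 (integrable_per hccl.continuous hBcc) e1
    have f2 := integral_mono ((intc ψ h1 h2 μ₁).2.add (integrable_const a))
      (intc _ hl'.continuous hp' μ₁).2 e2
    simp only [Pi.add_apply] at f2
    rw [integral_add (intc ψ h1 h2 μ₁).2 (integrable_const a)] at f2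
    simp only [hD]
    rw [integral_sub (integrable_per hccl.continuous hBcc) (integrable_const a)]
    simp at f2 ⊢
    linarith
  set S : Set ℝ := {c | ∃ ψ : E → ℝ, LipschitzWith κ ψ ∧ Per L ψ ∧ ψ 0 = 0 ∧ c = D ψ}
  have hSne : S.Nonempty :=
    ⟨D 0, 0, LipschitzWith.const' (0 : ℝ) |>.weaken (zero_le), fun _ _ _ => rfl, rfl, rfl⟩
  have hSb : BddAbove S := by
    refine ⟨R ^ 2 / 2, ?_⟩
    rintro _ ⟨ψ, e1, e2, -, rfl⟩
    exact hub ψ e1.continuous e2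
  obtain ⟨c, -, hc, hcS⟩ := exists_seq_tendsto_sSup hSne hSb
  choose ψ e1 e2 e3 e4 using hcS
  obtain ⟨s, f, hs, fp, fl, flim⟩ := cpt_seq hR ψ e2 e1 e3
  refine ⟨f, fl.continuous, fp, fun ψ' h1 h2 => ?_⟩
  have hBn : ∀ n y, |ψ n y| ≤ κ * R := fun n => lip_per_bdd hR (e2 n) (e1 n) (e3 n)
  have hBf : ∀ y, |f y| ≤ κ * R := fun y =>
    le_of_tendsto (flim y).abs (Eventually.of_forall fun n => hBn _ y)
  have t1 : Tendsto (fun n => ∫ y, ψ (s n) y ∂μ₂) atTop (𝓝 (∫ y, f y ∂μ₂)) :=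
    tendsto_integral_of_dominated_convergence (fun _ => κ * R)
      (fun n => (e1 _).continuous.aestronglyMeasurable) (integrable_const _)
      (fun n => Eventually.of_forall (hBn _)) (Eventually.of_forall flim)
  have cc : ∀ n, Continuous (cT (ψ n)) := fun n =>
    (cT_lip hR0 hR (e2 n) (fun y => (abs_le.1 (hBn n y)).2)).continuous
  have cf : Continuous (cT f) := (cT_lip hR0 hR fp (fun y => (abs_le.1 (hBf y)).2)).continuous
  have t2 : Tendsto (fun n => ∫ x, max (cT (ψ (s n)) x) (cT f x) ∂μ₁) atTop
      (𝓝 (∫ x, cT f x ∂μ₁)) := by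
    refine tendsto_integral_of_dominated_convergence (fun _ => κ * R)
      (fun n => ((cc _).max cf).aestronglyMeasurable) (integrable_const _)
      (fun n => Eventually.of_forall fun x => ?_) (Eventually.of_forall fun x => ?_)
    · exact abs_max_le_max_abs_abs.trans (max_le (cT_ub (hBn _) x) (cT_ub hBf x))
    · obtain ⟨y, hy⟩ := cT_att hR fp fl.continuous x
      have u : Tendsto (fun n => max (‖x - y‖ ^ 2 / 2 - ψ (s n) y) (cT f x)) atTop
          (𝓝 (cT f x)) := by
        have := (((flim y).const_sub (‖x - y‖ ^ 2 / 2)).max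
          (tendsto_const_nhds (x := cT f x)))
        rwa [← hy, max_self] at this
      refine tendsto_of_tendsto_of_tendsto_of_le_of_le tendsto_const_nhds u
        (fun n => le_max_right _ _) (fun n => ?_)
      exact max_le_max (cT_le (fun y => (abs_le.1 (hBn _ y)).2) x y) le_rfl
  have hge : sSup S ≤ D f := by
    refine le_of_tendsto_of_tendsto (hc.comp hs.tendsto_atTop) (t2.add t1)
      (Eventually.of_forall fun n => ?_)
    simp only [Function.comp, e4, hD]
    gcongr
    · exact integrable_per (cc _) (cT_ub (hBn _))
    · exact (integrable_per (cc _) (cT_ub (hBn _))).sup (integrable_per cf (cT_ub hBf))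
    · intro x; exact le_max_left _ _
  obtain ⟨ψ'', g1, g2, g3, g4⟩ := himp ψ' h1 h2
  exact g4.trans ((le_csSup hSb ⟨ψ'', g1, g2, g3, rfl⟩).trans hge)

end B
end OTcore

open MeasureTheory Real Set
open scoped ENNReal
set_option linter.unusedSectionVars false
namespace OTcore
open Filter Topology

section C
variable {E : Type*} [NormedAddCommGroup E] [InnerProductSpace ℝ E] [FiniteDimensional ℝ E]

lemma min_conv {L : AddSubgroup E} {R : ℝ} (hR : ∀ x : E, ∃ l ∈ L, ‖x + l‖ ≤ R)
    {ψ η : E → ℝ} (hψ : Continuous ψ) (hψp : Per L ψ) (hη : Continuous η) (hηp : Per L η)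
    {x : E} (hd : DifferentiableAt ℝ (cT ψ) x) {s : ℕ → ℝ} (hs0 : ∀ n, 0 < s n)
    (hs1 : ∀ n, s n ≤ 1)
    (hs : Tendsto s atTop (𝓝 0)) {B : ℝ} (hB : ∀ y, |ψ y| ≤ B) (hB' : ∀ y, |η y| ≤ B) :
    (∀ n, |(cT (fun y => ψ y + s n * η y) x - cT ψ x) / s n| ≤ B) ∧
    Tendsto (fun n => (cT (fun y => ψ y + s n * η y) x - cT ψ x) / s n) atTop
      (𝓝 (- η (x - gradient (cT ψ) x))) := by
  have hp : ∀ n, Per L (fun y => ψ y + s n * η y) := fun n y l hl => by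
    simp only [hψp y l hl, hηp y l hl]
  have hc : ∀ n, Continuous (fun y => ψ y + s n * η y) := fun n => by fun_prop
  have hB0 : 0 ≤ B := (abs_nonneg _).trans (hB 0)
  have hBs : ∀ n y, ψ y + s n * η y ≤ 2 * B := by
    intro n y
    have h1 := abs_le.1 (hB y); have h2 := abs_le.1 (hB' y)
    have := hs0 n; have := hs1 n
    nlinarith
  have hBu : ∀ y, ψ y ≤ B := fun y => (abs_le.1 (hB y)).2
  choose y hy using fun n => cT_att hR (hp n) (hc n) x
  obtain ⟨t, ht⟩ := cT_att hR hψp hψ x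
  have htg := min_eq_grad hBu hd ht
  rw [← htg]
  -- upper and lower
  have hup : ∀ n, (cT (fun y => ψ y + s n * η y) x - cT ψ x) / s n ≤ - η t := by
    intro n
    rw [div_le_iff₀ (hs0 n)]
    have := cT_le (hBs n) x t
    rw [ht]; linarith
  have hlo : ∀ n, - η (y n) ≤ (cT (fun y => ψ y + s n * η y) x - cT ψ x) / s n := by
    intro n
    rw [le_div_iff₀ (hs0 n)]
    have := cT_le hBu x (y n)
    rw [hy n]; linarith
  have hbd : ∀ n, |(cT (fun y => ψ y + s n * η y) x - cT ψ x) / s n| ≤ B := by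
    intro n
    rw [abs_le]
    have h1 := abs_le.1 (hB' t); have h2 := abs_le.1 (hB' (y n))
    have := hup n; have := hlo n
    constructor <;> linarith
  refine ⟨hbd, ?_⟩
  have hyt : Tendsto y atTop (𝓝 t) := by
    apply tendsto_of_subseq_tendsto
    intro ns hns
    have hb : ∀ n, y n ∈ Metric.closedBall x (4 * B + 1) := by
      intro n
      rw [Metric.mem_closedBall, dist_comm, dist_eq_norm]
      have h1 := hy n
      have h2 := hBs n (y n)
      have h3 := abs_le.1 (hbd n)
      have h4 : cT (fun y => ψ y + s n * η y) x - cT ψ x ≤ B := by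
        have := h3.2
        rw [div_le_iff₀ (hs0 n)] at this
        have := hs1 n
        nlinarith
      have h5 := (abs_le.1 (cT_ub hB x)).2
      have h6 : ‖x - y n‖ ^ 2 ≤ 8 * B := by linarith
      by_contra hcon
      push Not at hcon
      nlinarith
    obtain ⟨ys, -, ms, hms, hlim⟩ := (isCompact_closedBall x (4 * B + 1)).tendsto_subseq
      (fun n => hb (ns n))
    refine ⟨ms, ?_⟩
    have hst : Tendsto (fun k => s (ns (ms k))) atTop (𝓝 0) :=
      hs.comp (hns.comp hms.tendsto_atTop)
    have hle : ‖x - ys‖ ^ 2 / 2 - ψ ys ≤ cT ψ x := by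
      have a1 : Tendsto (fun k => ‖x - y (ns (ms k))‖ ^ 2 / 2 - ψ (y (ns (ms k)))) atTop
          (𝓝 (‖x - ys‖ ^ 2 / 2 - ψ ys)) := by
        have : Continuous (fun w => ‖x - w‖ ^ 2 / 2 - ψ w) := by fun_prop
        exact (this.tendsto ys).comp hlim
      have a2 : Tendsto (fun k => cT ψ x + s (ns (ms k)) * (2 * B)) atTop (𝓝 (cT ψ x)) := by
        simpa using (hst.mul_const (2 * B)).const_add (cT ψ x)
      refine le_of_tendsto_of_tendsto a1 a2 (Eventually.of_forall fun k => ?_)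
      set n := ns (ms k)
      have h1 := hy n
      have h3 := (abs_le.1 (hbd n)).2
      rw [div_le_iff₀ (hs0 n)] at h3
      have h4 := (abs_le.1 (hB' (y n))).2
      have := hs0 n
      simp only
      nlinarith
    have heq := le_antisymm (cT_le hBu x ys) hle
    rw [htg, ← min_eq_grad hBu hd heq]
    exact hlim
  exact tendsto_of_tendsto_of_tendsto_of_le_of_le ((hη.tendsto t).comp hyt).neg
    tendsto_const_nhds hlo hup

variable [MeasurableSpace E] [BorelSpace E]

lemma meas_grad (f : E → ℝ) : Measurable (gradient f) := by
  unfold gradient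
  exact (InnerProductSpace.toDual ℝ E).symm.continuous.measurable.comp (measurable_fderiv ℝ f)

lemma first_var {L : AddSubgroup E} {R : ℝ} (hR0 : 0 ≤ R) (hR : ∀ x : E, ∃ l ∈ L, ‖x + l‖ ≤ R)
    (μ₁ μ₂ : Measure E) [IsProbabilityMeasure μ₁] [IsProbabilityMeasure μ₂]
    {ψ : E → ℝ} (hψ : Continuous ψ) (hψp : Per L ψ)
    (hae : ∀ᵐ x ∂μ₁, DifferentiableAt ℝ (cT ψ) x)
    (hmax : ∀ ψ' : E → ℝ, Continuous ψ' → Per L ψ' →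
      ∫ x, cT ψ' x ∂μ₁ + ∫ y, ψ' y ∂μ₂ ≤ ∫ x, cT ψ x ∂μ₁ + ∫ y, ψ y ∂μ₂)
    {η : E → ℝ} (hη : Continuous η) (hηp : Per L η) :
    ∫ x, η (x - gradient (cT ψ) x) ∂μ₁ = ∫ y, η y ∂μ₂ := by
  have key : ∀ η : E → ℝ, Continuous η → Per L η →
      ∫ y, η y ∂μ₂ ≤ ∫ x, η (x - gradient (cT ψ) x) ∂μ₁ := by
    clear hη hηp η
    intro η hη hηp
    obtain ⟨B1, _, hB1⟩ := per_bdd hR hψp hψ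
    obtain ⟨B2, _, hB2⟩ := per_bdd hR hηp hη
    set B := max B1 B2
    have hB : ∀ y, |ψ y| ≤ B := fun y => (hB1 y).trans (le_max_left _ _)
    have hB' : ∀ y, |η y| ≤ B := fun y => (hB2 y).trans (le_max_right _ _)
    set s : ℕ → ℝ := fun n => 1 / ((n : ℝ) + 1)
    have hs0 : ∀ n, 0 < s n := fun n => by positivity
    have hs1 : ∀ n, s n ≤ 1 := fun n => by
      simp only [s]; rw [div_le_one (by positivity)]; linarith [(n.cast_nonneg : (0:ℝ) ≤ n)]
    have hs : Tendsto s atTop (𝓝 0) := tendsto_one_div_add_atTop_nhds_zero_nat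
    have hp : ∀ n, Per L (fun y => ψ y + s n * η y) := fun n y l hl => by
      simp only [hψp y l hl, hηp y l hl]
    have hc : ∀ n, Continuous (fun y => ψ y + s n * η y) := fun n => by fun_prop
    have hcc : ∀ ψ : E → ℝ, Continuous ψ → Per L ψ → Continuous (cT ψ) ∧ Integrable (cT ψ) μ₁ := by
      intro ψ h1 h2
      obtain ⟨B, _, hB⟩ := per_bdd hR h2 h1
      have := (cT_lip hR0 hR h2 (fun y => (abs_le.1 (hB y)).2)).continuous
      exact ⟨this, integrable_per this (cT_ub hB)⟩
    have t1 : Tendsto (fun n => ∫ x, (cT (fun y => ψ y + s n * η y) x - cT ψ x) / s n ∂μ₁) atTop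
        (𝓝 (∫ x, - η (x - gradient (cT ψ) x) ∂μ₁)) := by
      refine tendsto_integral_of_dominated_convergence (fun _ => B)
        (fun n => ?_) (integrable_const _) (fun n => ?_) ?_
      · exact (((hcc _ (hc n) (hp n)).1.sub (hcc _ hψ hψp).1).div_const _).aestronglyMeasurable
      · filter_upwards [hae] with x hx
        exact (min_conv hR hψ hψp hη hηp hx hs0 hs1 hs hB hB').1 n
      · filter_upwards [hae] with x hx
        exact (min_conv hR hψ hψp hη hηp hx hs0 hs1 hs hB hB').2
    have t2 : ∀ n, ∫ x, (cT (fun y => ψ y + s n * η y) x - cT ψ x) / s n ∂μ₁ ≤ - ∫ y, η y ∂μ₂ := by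
      intro n
      have := hmax _ (hc n) (hp n)
      rw [integral_add (integrable_per hψ hB) ((integrable_per hη hB').const_mul _),
        integral_const_mul] at this
      rw [integral_div, integral_sub (hcc _ (hc n) (hp n)).2 (hcc _ hψ hψp).2, div_le_iff₀ (hs0 n)]
      linarith
    have := le_of_tendsto t1 (Eventually.of_forall t2)
    rw [integral_neg] at this
    linarith
  refine le_antisymm ?_ (key η hη hηp)
  have := key (fun y => - η y) hη.neg (fun y l hl => by simp only [hηp y l hl])
  rw [integral_neg, integral_neg] at this
  linarith

end C
end OTcore

open MeasureTheory Real Set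
open scoped ENNReal
set_option linter.unusedSectionVars false
namespace OTcore
open Filter Topology

section D
variable {E : Type*} [NormedAddCommGroup E] [InnerProductSpace ℝ E] [FiniteDimensional ℝ E]

lemma det_le_one (A : E →L[ℝ] E) (hs : ∀ v w, inner ℝ (A v) w = inner ℝ (A w) v)
    (hp : ∀ v, 0 ≤ inner ℝ (A v) v)
    (htr : LinearMap.trace ℝ E (A : E →ₗ[ℝ] E) ≤ Module.finrank ℝ E) : |A.det| ≤ 1 := by
  have hsym : (A : E →ₗ[ℝ] E).IsSymmetric := by
    intro v w
    simp only [ContinuousLinearMap.coe_coe]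
    rw [hs, real_inner_comm]
  have hpos : (A : E →ₗ[ℝ] E).IsPositive := ⟨hsym, fun x => by simpa using hp x⟩
  have h1 := hsym.det_eq_prod_eigenvalues rfl
  have h2 := hsym.trace_eq_sum_eigenvalues rfl
  have h3 := fun i => hpos.nonneg_eigenvalues rfl i
  have h4 : A.det = ∏ i, hsym.eigenvalues rfl i := by simpa using h1
  have h5 : LinearMap.trace ℝ E (A : E →ₗ[ℝ] E) = ∑ i, hsym.eigenvalues rfl i := by simpa using h2
  rw [h5] at htr
  have h6 : ∀ i, 0 ≤ hsym.eigenvalues rfl i := fun i => h3 i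
  rw [h4, abs_of_nonneg (Finset.prod_nonneg fun i _ => h6 i)]
  calc ∏ i, hsym.eigenvalues rfl i ≤ ∏ i, Real.exp (hsym.eigenvalues rfl i - 1) := by
        apply Finset.prod_le_prod (fun i _ => h6 i)
        intro i _
        have := Real.add_one_le_exp (hsym.eigenvalues rfl i - 1)
        linarith
    _ = Real.exp (∑ i, (hsym.eigenvalues rfl i - 1)) := (Real.exp_sum _ _).symm
    _ ≤ 1 := by
        rw [Real.exp_le_one_iff, Finset.sum_sub_distrib]
        simp
        linarith

noncomputable def iL : E →L[ℝ] (E →L[ℝ] ℝ) :=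
  LinearMap.toContinuousLinearMap
    { toFun := fun v => innerSL ℝ v
      map_add' := by intro x y; simp
      map_smul' := by intro c x; ext; simp }

lemma iL_apply (v w : E) : iL v w = inner ℝ v w := by simp [iL]

lemma strong {L : AddSubgroup E} {R : ℝ} (hR : ∀ x : E, ∃ l ∈ L, ‖x + l‖ ≤ R)
    {ψ : E → ℝ} (hψ : Continuous ψ) (hψp : Per L ψ) {θ : ℝ} (hθ0 : 0 < θ) {B : ℝ}
    (hB : ∀ y, ψ y ≤ B) {z p : E}
    (hp : ∀ x, ‖z - p‖ ^ 2 / 2 - θ * cT ψ p ≤ ‖z - x‖ ^ 2 / 2 - θ * cT ψ x) (x : E) :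
    ‖z - p‖ ^ 2 / 2 - θ * cT ψ p + (1 - θ) / 2 * ‖x - p‖ ^ 2 ≤ ‖z - x‖ ^ 2 / 2 - θ * cT ψ x := by
  have key : ∀ t : ℝ, 0 < t → t < 1 → ‖z - p‖ ^ 2 / 2 - θ * cT ψ p +
      (1 - t) * ((1 - θ) / 2 * ‖x - p‖ ^ 2) ≤ ‖z - x‖ ^ 2 / 2 - θ * cT ψ x := by
    intro t ht0 ht1
    obtain ⟨y, hy⟩ := cT_att hR hψp hψ (p + t • (x - p))
    have h1 := hp (p + t • (x - p))
    have h2 := cT_le hB p y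
    have h3 := cT_le hB x y
    rw [hy] at h1
    have ez : z - (p + t • (x - p)) = (z - p) - t • (x - p) := by abel
    have ey : p + t • (x - p) - y = (p - y) + t • (x - p) := by abel
    have ex : z - x = (z - p) - (x - p) := by abel
    have ex' : x - y = (p - y) + (x - p) := by abel
    rw [ez, ey, norm_sub_sq_real (z - p) (t • (x - p)), norm_add_sq_real (p - y) (t • (x - p)), inner_smul_right, inner_smul_right,
      norm_smul, mul_pow, Real.norm_eq_abs, sq_abs] at h1
    rw [ex', norm_add_sq_real] at h3
    rw [ex, norm_sub_sq_real (z - p) (x - p)]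
    generalize inner ℝ (z - p) (x - p) = a at *
    generalize inner ℝ (p - y) (x - p) = b at *
    generalize ‖x - p‖ ^ 2 = A at *
    generalize ‖z - p‖ ^ 2 = Z at *
    generalize ‖p - y‖ ^ 2 = Y at *
    generalize cT ψ x = cx at *
    generalize cT ψ p = cp at *
    generalize ψ y = py at *
    have g2 := mul_le_mul_of_nonneg_left h2 (mul_nonneg hθ0.le (sub_nonneg.2 ht1.le))
    have g3 := mul_le_mul_of_nonneg_left h3 (mul_nonneg hθ0.le ht0.le)
    refine le_of_mul_le_mul_left ?_ ht0
    nlinarith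
  have ht : Tendsto (fun t : ℝ => ‖z - p‖ ^ 2 / 2 - θ * cT ψ p +
      (1 - t) * ((1 - θ) / 2 * ‖x - p‖ ^ 2)) (𝓝[>] 0)
      (𝓝 (‖z - p‖ ^ 2 / 2 - θ * cT ψ p + (1 - 0) * ((1 - θ) / 2 * ‖x - p‖ ^ 2))) := by
    apply Tendsto.mono_left _ nhdsWithin_le_nhds
    apply Continuous.tendsto
    fun_prop
  have := le_of_tendsto ht (by
    filter_upwards [Ioo_mem_nhdsGT (show (0:ℝ) < 1 by norm_num)] with t ht
    exact key t ht.1 ht.2)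
  simpa using this

lemma interp_exists {L : AddSubgroup E} {R : ℝ} (hR0 : 0 ≤ R)
    (hR : ∀ x : E, ∃ l ∈ L, ‖x + l‖ ≤ R)
    {ψ : E → ℝ} (hψ : Continuous ψ) (hψp : Per L ψ) {θ : ℝ} (hθ0 : 0 < θ) (hθ1 : θ < 1) :
    ∃ P : E → E, LipschitzWith (Real.toNNReal (1 / (1 - θ))) P ∧
      (∀ z, ∀ l ∈ L, P (z + l) = P z + l) ∧
      (∀ x y, cT ψ x = ‖x - y‖ ^ 2 / 2 - ψ y → P ((1 - θ) • x + θ • y) = x) ∧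
      (∀ z A, HasFDerivAt P A z → |A.det| ≤ 1 ∨
        |(θ⁻¹ • (ContinuousLinearMap.id ℝ E - (1 - θ) • A)).det| ≤ 1) := by
  obtain ⟨B, hB0, hB'⟩ := per_bdd hR hψp hψ
  have hB : ∀ y, ψ y ≤ B := fun y => (abs_le.1 (hB' y)).2
  have h1θ : 0 < 1 - θ := by linarith
  set φ : E → ℝ := fun x => θ * cT ψ x with hφ
  have hφp : Per L φ := fun x l hl => by simp only [hφ, cT_per hψp x l hl]
  have hφc : Continuous φ := (cT_lip hR0 hR hψp hB).continuous.const_mul θ |>.congr fun _ => rfl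
  obtain ⟨B2, -, hB2⟩ := per_bdd hR hφp hφc
  have hB2' : ∀ y, φ y ≤ B2 := fun y => (abs_le.1 (hB2 y)).2
  choose P hP using fun z => cT_att hR hφp hφc z
  have hPm : ∀ z x, ‖z - P z‖ ^ 2 / 2 - θ * cT ψ (P z) ≤ ‖z - x‖ ^ 2 / 2 - θ * cT ψ x := by
    intro z x
    have := cT_le hB2' z x
    rw [hP z] at this
    exact this
  have hS := fun z x => strong hR hψ hψp hθ0 hB (hPm z) x
  have huniq : ∀ z p, (∀ x, ‖z - p‖ ^ 2 / 2 - θ * cT ψ p ≤ ‖z - x‖ ^ 2 / 2 - θ * cT ψ x) →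
      P z = p := by
    intro z p hp
    have h1 := hS z p
    have h2 := hp (P z)
    have h3 : ‖p - P z‖ ^ 2 ≤ 0 := by
      by_contra hcon
      push Not at hcon
      have := mul_pos (half_pos h1θ) hcon
      linarith
    have h4 : ‖p - P z‖ = 0 := by
      have := sq_nonneg ‖p - P z‖
      exact pow_eq_zero_iff (two_ne_zero) |>.1 (le_antisymm h3 this)
    rw [norm_eq_zero, sub_eq_zero] at h4
    exact h4.symm
  -- monotonicity
  have hmono : ∀ z z', (1 - θ) * ‖P z - P z'‖ ^ 2 ≤ inner ℝ (P z - P z') (z - z') := by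
    intro z z'
    have h1 := hS z (P z')
    have h2 := hS z' (P z)
    rw [norm_sub_rev (P z') (P z)] at h1
    have e : ‖z - P z'‖ ^ 2 + ‖z' - P z‖ ^ 2 - ‖z - P z‖ ^ 2 - ‖z' - P z'‖ ^ 2 =
        2 * inner ℝ (P z - P z') (z - z') := by
      simp only [norm_sub_sq_real, inner_sub_left, inner_sub_right]
      rw [real_inner_comm z' (P z), real_inner_comm z (P z), real_inner_comm z (P z'),
        real_inner_comm z' (P z')]
      ring
    linarith
  have hlip : ∀ z z', (1 - θ) * ‖P z - P z'‖ ≤ ‖z - z'‖ := by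
    intro z z'
    have h1 := hmono z z'
    have h2 := real_inner_le_norm (P z - P z') (z - z')
    by_cases h0 : ‖P z - P z'‖ = 0
    · rw [h0]; simp
    · have : 0 < ‖P z - P z'‖ := lt_of_le_of_ne (norm_nonneg _) (Ne.symm h0)
      refine le_of_mul_le_mul_left ?_ this
      nlinarith
  have hlip' : ∀ z z', ‖P z - P z'‖ ≤ 1 / (1 - θ) * ‖z - z'‖ := by
    intro z z'
    rw [one_div, inv_mul_eq_div, le_div_iff₀ h1θ]
    linarith [hlip z z']
  have hLip : LipschitzWith (Real.toNNReal (1 / (1 - θ))) P := by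
    apply LipschitzWith.of_dist_le_mul
    intro z z'
    rw [Real.coe_toNNReal _ (by positivity), dist_eq_norm, dist_eq_norm]
    exact hlip' z z'
  refine ⟨P, hLip, ?_, ?_, ?_⟩
  · intro z l hl
    apply huniq
    intro x
    have h1 := hPm z (x + -l)
    rw [cT_per hψp x _ (L.neg_mem hl)] at h1
    rw [cT_per hψp _ _ hl]
    have e1 : z + l - (P z + l) = z - P z := by abel
    have e2 : z - (x + -l) = z + l - x := by abel
    rw [e1]; rw [e2] at h1; exact h1
  · intro x y hxy
    apply huniq
    intro w
    have h1 := cT_le hB w y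
    rw [hxy]
    have e1 : (1 - θ) • x + θ • y - x = -(θ • (x - y)) := by module
    have e2 : (1 - θ) • x + θ • y - w = -(θ • (x - y)) - (w - x) := by module
    have e3 : w - y = (x - y) + (w - x) := by abel
    rw [e3, norm_add_sq_real] at h1
    rw [e1, e2, norm_sub_sq_real (-(θ • (x - y))) (w - x), inner_neg_left, inner_smul_left]
    simp only [conj_trivial]
    have := mul_le_mul_of_nonneg_left h1 hθ0.le
    have := mul_nonneg h1θ.le (sq_nonneg ‖w - x‖)
    nlinarith
  · intro z A hA
    -- the potential
    have hf : ∀ y, HasFDerivAt (fun z => ‖z‖ ^ 2 / 2 - cT φ z) (iL (P y)) y := by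
      intro y
      have hbd : ∀ y', ‖(‖y'‖ ^ 2 / 2 - cT φ y') - (‖y‖ ^ 2 / 2 - cT φ y) - iL (P y) (y' - y)‖ ≤
          1 / (1 - θ) * ‖y' - y‖ ^ 2 := by
        intro y'
        have sub : ∀ a b, 0 ≤ (‖b‖ ^ 2 / 2 - cT φ b) - (‖a‖ ^ 2 / 2 - cT φ a) -
            inner ℝ (P a) (b - a) := by
          intro a b
          have h1 := cT_le hB2' b (P a)
          rw [hP a]
          rw [norm_sub_sq_real] at h1 ⊢
          rw [inner_sub_right, real_inner_comm b, real_inner_comm a]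
          linarith
        have h1 := sub y y'
        have h2 := sub y' y
        have h3 : inner ℝ (P y' - P y) (y' - y) ≤ 1 / (1 - θ) * ‖y' - y‖ ^ 2 := by
          refine (real_inner_le_norm _ _).trans ?_
          have := mul_le_mul_of_nonneg_right (hlip' y' y) (norm_nonneg (y' - y))
          linarith
        rw [iL_apply, Real.norm_of_nonneg h1]
        rw [inner_sub_left] at h3
        rw [← neg_sub y' y, inner_neg_right] at h2
        linarith
      rw [hasFDerivAt_iff_isLittleO]
      refine Asymptotics.IsBigO.trans_isLittleO (g := fun y' => ‖y' - y‖ ^ 2) ?_ ?_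
      · exact Asymptotics.IsBigO.of_bound (1 / (1 - θ)) (Eventually.of_forall fun y' => by
          rw [Real.norm_of_nonneg (sq_nonneg ‖y' - y‖)]; exact hbd y')
      · exact Asymptotics.isLittleO_pow_sub_sub y (by norm_num)
    have hx : HasFDerivAt (fun y => iL (P y)) (iL.comp A) z := iL.hasFDerivAt.comp z hA
    have hsym : ∀ v w, inner ℝ (A v) w = inner ℝ (A w) v := by
      intro v w
      have := second_derivative_symmetric hf hx v w
      simpa [iL_apply] using this
    have hlim : ∀ v, Tendsto (fun t : ℝ => t⁻¹ • (P (z + t • v) - P z)) (𝓝[>] 0) (𝓝 (A v)) :=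
      fun v => (hA.hasLineDerivAt v).tendsto_slope_zero_right
    have hpos : ∀ v, 0 ≤ inner ℝ (A v) v := by
      intro v
      refine ge_of_tendsto ((hlim v).inner (tendsto_const_nhds (x := v))) ?_
      filter_upwards [self_mem_nhdsWithin] with t ht
      have ht' : (0:ℝ) < t := ht
      have h1 := hmono (z + t • v) z
      have h2 : 0 ≤ (1 - θ) * ‖P (z + t • v) - P z‖ ^ 2 := by positivity
      have h3 := h2.trans h1
      rw [add_sub_cancel_left, inner_smul_right] at h3
      rw [inner_smul_left]
      simp only [conj_trivial]
      have := (mul_nonneg_iff_of_pos_left ht').1 h3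
      positivity
    have hnorm : ∀ v, (1 - θ) * ‖A v‖ ≤ ‖v‖ := by
      intro v
      refine le_of_tendsto ((hlim v).norm.const_mul (1 - θ)) ?_
      filter_upwards [self_mem_nhdsWithin] with t ht
      have ht' : (0:ℝ) < t := ht
      have h1 := hlip (z + t • v) z
      rw [add_sub_cancel_left, norm_smul, Real.norm_of_nonneg ht'.le] at h1
      rw [norm_smul, norm_inv, Real.norm_of_nonneg ht'.le]
      calc (1 - θ) * (t⁻¹ * ‖P (z + t • v) - P z‖)
          = t⁻¹ * ((1 - θ) * ‖P (z + t • v) - P z‖) := by ring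
        _ ≤ t⁻¹ * (t * ‖v‖) := by gcongr
        _ = ‖v‖ := by field_simp
    by_cases htr : LinearMap.trace ℝ E (A : E →ₗ[ℝ] E) ≤ Module.finrank ℝ E
    · exact Or.inl (det_le_one A hsym hpos htr)
    · right
      apply det_le_one
      · intro v w
        simp only [smul_apply, sub_apply,
          ContinuousLinearMap.id_apply, inner_smul_left, inner_sub_left, hsym v w,
          real_inner_comm w v]
      · intro v
        simp only [smul_apply, sub_apply,
          ContinuousLinearMap.id_apply, inner_smul_left, inner_sub_left, conj_trivial]
        have h1 := real_inner_le_norm (A v) v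
        have h2 := mul_le_mul_of_nonneg_right (hnorm v) (norm_nonneg v)
        rw [real_inner_self_eq_norm_sq]
        apply mul_nonneg (by positivity)
        nlinarith
      · push Not at htr
        have : ((θ⁻¹ • (ContinuousLinearMap.id ℝ E - (1 - θ) • A) : E →L[ℝ] E) : E →ₗ[ℝ] E) =
          θ⁻¹ • (LinearMap.id - (1 - θ) • (A : E →ₗ[ℝ] E)) := by ext; simp
        rw [this, map_smul, map_sub, map_smul, LinearMap.trace_id, smul_eq_mul, smul_eq_mul,
          inv_mul_le_iff₀ hθ0]
        nlinarith

end D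
end OTcore

open MeasureTheory Real Set
open scoped ENNReal
set_option linter.unusedSectionVars false
namespace OTcore
open Filter Topology

section EE
variable {E : Type*} [NormedAddCommGroup E] [InnerProductSpace ℝ E] [FiniteDimensional ℝ E]
  [MeasurableSpace E] [BorelSpace E]

open scoped Pointwise in
lemma nu_le {L : AddSubgroup E} [Countable L] {C : Set E} (hC : MeasurableSet C)
    (hFD : ∀ x : E, ∃! l : L, l +ᵥ x ∈ C)
    {μ₁ μ₂ : Measure E} [IsProbabilityMeasure μ₁] [IsProbabilityMeasure μ₂] {M : NNReal}
    (hM : ∀ S, μ₂ S ≤ M * volume (S ∩ C)) {T : E → E} (hT : Measurable T)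
    (hη : ∀ η : E → ℝ, Continuous η → Per L η → ∫ x, η (T x) ∂μ₁ = ∫ y, η y ∂μ₂) (S : Set E) :
    μ₁.map T S ≤ M * volume S := by
  have hfd : IsAddFundamentalDomain L C (volume : Measure E) :=
    IsAddFundamentalDomain.mk' hC.nullMeasurableSet hFD
  have : IsProbabilityMeasure (μ₁.map T) := Measure.isProbabilityMeasure_map hT.aemeasurable
  have hclosed : ∀ F : Set E, IsClosed F → (∀ x, ∀ l ∈ L, x ∈ F → x + l ∈ F) →
      μ₁.map T F = μ₂ F := by
    intro F hF hp
    have hδ : ∀ n : ℕ, (0:ℝ) < 1 / ((n:ℝ) + 1) := fun n => by positivity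
    have hl : Tendsto (fun n : ℕ => 1 / ((n:ℝ) + 1)) atTop (𝓝 0) :=
      tendsto_one_div_add_atTop_nhds_zero_nat
    have h1 := tendsto_lintegral_thickenedIndicator_of_isClosed (μ₁.map T) hF hδ hl
    have h2 := tendsto_lintegral_thickenedIndicator_of_isClosed μ₂ hF hδ hl
    refine tendsto_nhds_unique h1 (h2.congr fun n => ?_)
    set g := thickenedIndicator (hδ n) F
    have hgc : Continuous g := g.continuous
    have hgp : Per L (fun x => (g x : ℝ)) := by
      intro x l hl
      have : Metric.infEDist (x + l) F = Metric.infEDist x F := by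
        have hF' : F = (fun y => y + l) '' F := by
          ext y
          constructor
          · intro hy
            exact ⟨y + -l, hp y _ (L.neg_mem hl) hy, by simp⟩
          · rintro ⟨z, hz, rfl⟩
            exact hp z l hl hz
        conv_lhs => rw [hF']
        exact Metric.infEDist_image (isometry_add_right l)
      simp only [g, thickenedIndicator_apply, thickenedIndicatorAux, this]
    have h3 := hη (fun x => (g x : ℝ)) (by fun_prop) hgp
    have hb : ∀ x, |(g x : ℝ)| ≤ 1 := fun x => by
      rw [abs_of_nonneg (NNReal.coe_nonneg _)]
      have h := thickenedIndicator_le_one (hδ n) F x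
      exact NNReal.coe_le_coe.2 h
    rw [lintegral_coe_eq_integral g (integrable_per (by fun_prop) hb),
      lintegral_coe_eq_integral g (integrable_per (by fun_prop) hb), ← h3,
      integral_map hT.aemeasurable (by fun_prop)]
  have hopen : ∀ O : Set E, IsOpen O → μ₁.map T O ≤ M * volume O := by
    intro O hO
    set W : Set E := ⋃ l : L, (l +ᵥ O) with hW
    have hWo : IsOpen W := isOpen_iUnion fun l => hO.vadd l
    have hOW : O ⊆ W := fun x hx => mem_iUnion.2 ⟨0, by simpa using hx⟩
    have hWp : ∀ x, ∀ l ∈ L, x ∈ W → x + l ∈ W := by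
      intro x l hl hx
      obtain ⟨k, y, hy, rfl⟩ := mem_iUnion.1 hx
      refine mem_iUnion.2 ⟨k + ⟨l, hl⟩, y, hy, ?_⟩
      change ((k + ⟨l, hl⟩ : L) : E) + y = (k : E) + y + l
      simp only [AddSubgroup.coe_add]
      abel
    have hc := hclosed Wᶜ hWo.isClosed_compl (by
      intro x l hl hx hx'
      apply hx
      have := hWp (x + l) (-l) (L.neg_mem hl) hx'
      simpa using this)
    have hc' : μ₁.map T W = μ₂ W := by
      have a1 := prob_compl_eq_one_sub (μ := μ₁.map T) hWo.measurableSet.compl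
      have a2 := prob_compl_eq_one_sub (μ := μ₂) hWo.measurableSet.compl
      rw [compl_compl] at a1 a2
      rw [a1, a2, hc]
    calc μ₁.map T O ≤ μ₁.map T W := measure_mono hOW
      _ = μ₂ W := hc'
      _ ≤ M * volume (W ∩ C) := hM W
      _ ≤ M * volume O := by
          apply mul_le_mul_right
          rw [hfd.measure_eq_tsum O, hW, iUnion_inter]
          exact measure_iUnion_le _
  apply ENNReal.le_of_forall_pos_le_add
  intro δ hδ _
  have hε : ((δ / (M + 1) : NNReal) : ℝ≥0∞) ≠ 0 := by
    have : 0 < δ / (M + 1) := by positivity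
    exact_mod_cast this.ne'
  obtain ⟨U, hSU, hU, hle⟩ := Set.exists_isOpen_le_add S volume hε
  calc μ₁.map T S ≤ μ₁.map T U := measure_mono hSU
    _ ≤ M * volume U := hopen U hU
    _ ≤ M * (volume S + ((δ / (M + 1) : NNReal) : ℝ≥0∞)) := by gcongr
    _ = M * volume S + ((M * (δ / (M + 1)) : NNReal) : ℝ≥0∞) := by push_cast; ring
    _ ≤ M * volume S + δ := by
        gcongr
        rw [mul_div_assoc', div_le_iff₀ (by positivity)]
        rw [mul_add, mul_one, mul_comm]; exact le_self_add

lemma lip_null {K : NNReal} {P : E → E} (hP : LipschitzWith K P) {N : Set E}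
    (hN : volume N = 0) : volume (P '' N) = 0 := by
  have hac : ∀ S : Set E, volume S = 0 ↔ Measure.hausdorffMeasure (Module.finrank ℝ E : ℝ) S = 0 := by
    intro S
    have h1 : (volume : Measure E) ≪ Measure.hausdorffMeasure (Module.finrank ℝ E : ℝ) :=
      Measure.absolutelyContinuous_isAddHaarMeasure _ _
    have h2 : Measure.hausdorffMeasure (Module.finrank ℝ E : ℝ) ≪ (volume : Measure E) :=
      Measure.absolutelyContinuous_isAddHaarMeasure _ _
    exact ⟨fun h => h2 h, fun h => h1 h⟩
  rw [hac] at hN ⊢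
  have := hP.hausdorffMeasure_image_le (d := (Module.finrank ℝ E : ℝ)) (by positivity) N
  rw [hN, mul_zero] at this
  exact le_antisymm this zero_le

lemma nu_theta {μ₁ : Measure E} {M : NNReal} {T P : E → E} (hT : Measurable T) {K : NNReal}
    (hP : LipschitzWith K P) {θ : ℝ} (hθ0 : 0 < θ)
    (hM1 : ∀ S, μ₁ S ≤ M * volume S) (hM2 : ∀ S, μ₁.map T S ≤ M * volume S)
    (hPx : ∀ᵐ x ∂μ₁, P ((1 - θ) • x + θ • T x) = x)
    (hdet : ∀ z A, HasFDerivAt P A z → |A.det| ≤ 1 ∨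
        |(θ⁻¹ • (ContinuousLinearMap.id ℝ E - (1 - θ) • A)).det| ≤ 1)
    {S : Set E} (hS : MeasurableSet S) :
    μ₁.map (fun x => (1 - θ) • x + θ • T x) S ≤ M * volume S := by
  set Q : E → E := fun z => θ⁻¹ • (z - (1 - θ) • P z) with hQ
  set D := {z | DifferentiableAt ℝ P z} with hD
  have hDm : MeasurableSet D := measurableSet_of_differentiableAt ℝ P
  have hDn : volume Dᶜ = 0 := by
    have := hP.ae_differentiableAt (μ := (volume : Measure E))
    exact this
  set A1 := {z | |(fderiv ℝ P z).det| ≤ 1} with hA1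
  have hA1m : MeasurableSet A1 := by
    apply measurableSet_le _ measurable_const
    exact (ContinuousLinearMap.continuous_det.measurable.comp (measurable_fderiv ℝ P)).abs
  have himg : ∀ (f : E → E) (f' : E → E →L[ℝ] E) (s : Set E), MeasurableSet s →
      (∀ x ∈ s, HasFDerivAt f (f' x) x) → (∀ x ∈ s, |(f' x).det| ≤ 1) →
      volume (f '' s) ≤ volume s := by
    intro f f' s hs h1 h2
    calc volume (f '' s) ≤ ∫⁻ x in s, ENNReal.ofReal |(f' x).det| :=
          addHaar_image_le_lintegral_abs_det_fderiv volume hs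
            fun x hx => (h1 x hx).hasFDerivWithinAt
      _ ≤ ∫⁻ x in s, 1 := by
          apply setLIntegral_mono measurable_const
          intro x hx
          exact ENNReal.ofReal_le_one.2 (h2 x hx)
      _ = volume s := by simp
  have hXm : Measurable (fun x => (1 - θ) • x + θ • T x) := by fun_prop
  have hQx : ∀ᵐ x ∂μ₁, Q ((1 - θ) • x + θ • T x) = T x := by
    filter_upwards [hPx] with x hx
    simp only [hQ, hx]
    rw [add_sub_cancel_left, smul_smul, inv_mul_cancel₀ hθ0.ne', one_smul]
  set S1 := S ∩ D ∩ A1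
  set S2 := (S ∩ D) \ A1
  have hS1m : MeasurableSet S1 := (hS.inter hDm).inter hA1m
  have hS2m : MeasurableSet S2 := (hS.inter hDm).diff hA1m
  have hPimg : ∀ s : Set E, μ₁ ((fun x => (1 - θ) • x + θ • T x) ⁻¹' s) ≤ μ₁ (P '' s) := by
    intro s
    apply measure_mono_ae
    filter_upwards [hPx] with x hx hxs
    exact ⟨_, hxs, hx⟩
  have hQimg : ∀ s : Set E, μ₁ ((fun x => (1 - θ) • x + θ • T x) ⁻¹' s) ≤ μ₁ (T ⁻¹' (Q '' s)) := by
    intro s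
    apply measure_mono_ae
    filter_upwards [hQx] with x hx hxs
    exact ⟨_, hxs, hx⟩
  have e1 : μ₁ ((fun x => (1 - θ) • x + θ • T x) ⁻¹' S1) ≤ M * volume S1 := by
    refine (hPimg S1).trans ((hM1 _).trans ?_)
    apply mul_le_mul_right
    exact himg P (fderiv ℝ P) S1 hS1m (fun x hx => DifferentiableAt.hasFDerivAt hx.1.2) fun x hx => hx.2
  have e2 : μ₁ ((fun x => (1 - θ) • x + θ • T x) ⁻¹' S2) ≤ M * volume S2 := by
    refine (hQimg S2).trans ((Measure.le_map_apply hT.aemeasurable _).trans ((hM2 _).trans ?_))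
    apply mul_le_mul_right
    apply himg Q (fun z => θ⁻¹ • (ContinuousLinearMap.id ℝ E - (1 - θ) • fderiv ℝ P z)) S2 hS2m
    · intro x hx
      have h := DifferentiableAt.hasFDerivAt hx.1.2
      exact ((hasFDerivAt_id x).sub (h.const_smul (1 - θ))).const_smul θ⁻¹
    · intro x hx
      exact (hdet x _ (DifferentiableAt.hasFDerivAt hx.1.2)).resolve_left hx.2
  have e3 : μ₁ ((fun x => (1 - θ) • x + θ • T x) ⁻¹' Dᶜ) = 0 := by
    refine le_antisymm ((hPimg _).trans ((hM1 _).trans ?_)) zero_le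
    rw [lip_null hP hDn, mul_zero]
  rw [Measure.map_apply hXm hS]
  calc μ₁ ((fun x => (1 - θ) • x + θ • T x) ⁻¹' S)
      ≤ μ₁ (((fun x => (1 - θ) • x + θ • T x) ⁻¹' S1 ∪ (fun x => (1 - θ) • x + θ • T x) ⁻¹' S2) ∪
        (fun x => (1 - θ) • x + θ • T x) ⁻¹' Dᶜ) := by
        apply measure_mono
        intro x hx
        by_cases h1 : (1 - θ) • x + θ • T x ∈ D
        · by_cases h2 : (1 - θ) • x + θ • T x ∈ A1
          · exact Or.inl (Or.inl ⟨⟨hx, h1⟩, h2⟩)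
          · exact Or.inl (Or.inr ⟨⟨hx, h1⟩, h2⟩)
        · exact Or.inr h1
    _ ≤ (M * volume S1 + M * volume S2) + 0 :=
        (measure_union_le _ _).trans (add_le_add ((measure_union_le _ _).trans (add_le_add e1 e2)) e3.le)
    _ = M * volume (S ∩ D) := by
        rw [add_zero, ← mul_add, measure_inter_add_sdiff _ hA1m]
    _ ≤ M * volume S := by gcongr; exact inter_subset_left

end EE
end OTcore

open MeasureTheory Real Set
open scoped ENNReal
set_option linter.unusedSectionVars false
namespace OTcore
open Filter Topology

section FF
variable {E : Type*} [NormedAddCommGroup E] [InnerProductSpace ℝ E] [FiniteDimensional ℝ E]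
  [MeasurableSpace E] [BorelSpace E]

lemma core {L : AddSubgroup E} [Countable L] {R : ℝ} (hR0 : 0 ≤ R)
    (hR : ∀ x : E, ∃ l ∈ L, ‖x + l‖ ≤ R) {C : Set E} (hC : MeasurableSet C)
    (hCf : volume C ≠ ⊤)
    (hFD : ∀ x : E, ∃! l : L, l +ᵥ x ∈ C)
    (μ₁ μ₂ : Measure E) [IsProbabilityMeasure μ₁] [IsProbabilityMeasure μ₂] {M : NNReal}
    (hM1 : ∀ S, μ₁ S ≤ M * volume (S ∩ C)) (hM2 : ∀ S, μ₂ S ≤ M * volume (S ∩ C)) :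
    ∃ (φ ψ : E → ℝ) (T : E → E) (B : ℝ), Continuous φ ∧ Per L φ ∧ Continuous ψ ∧ Per L ψ ∧
      Measurable T ∧ (∀ x y, φ x + ψ y ≤ ‖x - y‖ ^ 2 / 2) ∧
      (∀ᵐ x ∂μ₁, φ x + ψ (T x) = ‖x - T x‖ ^ 2 / 2) ∧
      (∀ η : E → ℝ, Continuous η → Per L η → ∫ x, η (T x) ∂μ₁ = ∫ y, η y ∂μ₂) ∧
      (∀ x, ‖T x - x‖ ≤ B) ∧
      ∀ θ : ℝ, 0 < θ → θ < 1 → ∀ v : E → ℝ, Continuous v → Per L v → (∀ x, 0 ≤ v x) →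
        ∫ x, v ((1 - θ) • x + θ • T x) ∂μ₁ ≤ M * ∫ x in C, v x := by
  obtain ⟨ψ, hψ, hψp, hmax⟩ := exists_max hR0 hR μ₁ μ₂
  obtain ⟨B, hB0, hB'⟩ := per_bdd hR hψp hψ
  have hB : ∀ y, ψ y ≤ B := fun y => (abs_le.1 (hB' y)).2
  have hlip := cT_lip hR0 hR hψp hB
  have hM1' : ∀ S, μ₁ S ≤ M * volume S := fun S =>
    (hM1 S).trans (by gcongr; exact inter_subset_left)
  have hac : μ₁ ≪ volume := fun S hS => le_antisymm ((hM1' S).trans (by rw [hS, mul_zero])) zero_le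
  have hae : ∀ᵐ x ∂μ₁, DifferentiableAt ℝ (cT ψ) x :=
    hac.ae_le (hlip.ae_differentiableAt (μ := (volume : Measure E)))
  set T : E → E := fun x => x - gradient (cT ψ) x with hTdef
  have hT : Measurable T := measurable_id.sub (meas_grad _)
  have hTeq : ∀ᵐ x ∂μ₁, cT ψ x = ‖x - T x‖ ^ 2 / 2 - ψ (T x) := by
    filter_upwards [hae] with x hx
    obtain ⟨y, hy⟩ := cT_att hR hψp hψ x
    have := min_eq_grad hB hx hy
    simp only [hTdef]
    rw [← this]; exact hy
  have hη : ∀ η : E → ℝ, Continuous η → Per L η → ∫ x, η (T x) ∂μ₁ = ∫ y, η y ∂μ₂ :=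
    fun η h1 h2 => first_var hR0 hR μ₁ μ₂ hψ hψp hae hmax h1 h2
  have hν := nu_le hC hFD hM2 hT hη
  refine ⟨cT ψ, ψ, T, (Real.toNNReal (2 * R)), hlip.continuous, cT_per hψp, hψ, hψp, hT, ?_, ?_,
    hη, ?_, ?_⟩
  · intro x y
    linarith [cT_le hB x y]
  · filter_upwards [hTeq] with x hx
    linarith
  · intro x
    have : T x - x = - gradient (cT ψ) x := by simp [hTdef]
    rw [this, norm_neg, gradient, LinearIsometryEquiv.norm_map]
    exact norm_fderiv_le_of_lipschitz ℝ hlip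
  · intro θ hθ0 hθ1 v hv hvp hv0
    obtain ⟨P, hPl, hPp, hPx, hdet⟩ := interp_exists hR0 hR hψ hψp hθ0 hθ1
    have hPx' : ∀ᵐ x ∂μ₁, P ((1 - θ) • x + θ • T x) = x := by
      filter_upwards [hTeq] with x hx
      exact hPx _ _ hx
    set X : E → E := fun x => (1 - θ) • x + θ • T x with hX
    have hXm : Measurable X := by fun_prop
    have hνθ : μ₁.map X ≤ (M : ℝ≥0∞) • (volume.restrict (P ⁻¹' C)) := by
      rw [Measure.le_iff]
      intro S hS
      have hPm : MeasurableSet (P ⁻¹' C) := hPl.continuous.measurable hC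
      have h1 : μ₁.map X S ≤ μ₁.map X (S ∩ P ⁻¹' C) := by
        rw [Measure.map_apply hXm hS, Measure.map_apply hXm (hS.inter hPm)]
        have hCc : ∀ᵐ x ∂μ₁, x ∈ C := by
          have : μ₁ Cᶜ = 0 := by
            have := hM1 Cᶜ
            rw [compl_inter_self, measure_empty, mul_zero] at this
            exact le_antisymm this zero_le
          exact this
        apply measure_mono_ae
        filter_upwards [hPx', hCc] with x hx hxC hxS
        refine ⟨hxS, ?_⟩
        change P (X x) ∈ C
        rw [hx]; exact hxC
      refine h1.trans ((nu_theta hT hPl hθ0 hM1' hν hPx' hdet (hS.inter hPm)).trans ?_)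
      rw [Measure.smul_apply, Measure.restrict_apply hS, smul_eq_mul]
    have hfd : IsAddFundamentalDomain L C (volume : Measure E) :=
      IsAddFundamentalDomain.mk' hC.nullMeasurableSet hFD
    have hfd' : IsAddFundamentalDomain L (P ⁻¹' C) (volume : Measure E) := by
      apply IsAddFundamentalDomain.mk' (hPl.continuous.measurable hC).nullMeasurableSet
      intro x
      have e : ∀ l : L, l +ᵥ x ∈ P ⁻¹' C ↔ l +ᵥ P x ∈ C := by
        intro l
        change P ((l : E) + x) ∈ C ↔ (l : E) + P x ∈ C
        rw [add_comm, hPp x l l.2, add_comm]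
      simp only [e]
      exact hFD (P x)
    obtain ⟨Bv, hBv0, hBv⟩ := per_bdd hR hvp hv
    have hle : ∫⁻ x, ENNReal.ofReal (v (X x)) ∂μ₁ ≤ M * ∫⁻ x in C, ENNReal.ofReal (v x) := by
      rw [← lintegral_map (f := fun z => ENNReal.ofReal (v z)) (by fun_prop) hXm]
      refine (lintegral_mono' hνθ le_rfl).trans ?_
      rw [lintegral_smul_measure, smul_eq_mul,
        hfd'.setLIntegral_eq hfd (fun z => ENNReal.ofReal (v z)) ?_]
      intro l x
      change ENNReal.ofReal (v ((l : E) + x)) = _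
      rw [add_comm, hvp x l l.2]
    have hfin : IsFiniteMeasure (volume.restrict C) := ⟨by
      rw [Measure.restrict_apply_univ]; exact hCf.lt_top⟩
    have hvi : Integrable v (volume.restrict C) := integrable_per hv hBv
    have hvi' : Integrable (fun x => v (X x)) μ₁ :=
      Integrable.of_bound (hv.measurable.comp hXm).aestronglyMeasurable Bv
        (Eventually.of_forall fun x => hBv _)
    rw [← ofReal_integral_eq_lintegral_ofReal hvi (Eventually.of_forall hv0),
      ← ofReal_integral_eq_lintegral_ofReal hvi' (Eventually.of_forall fun x => hv0 _)] at hle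
    have h3 : (M : ℝ≥0∞) = ENNReal.ofReal (M : ℝ) := by simp
    rw [h3, ← ENNReal.ofReal_mul (NNReal.coe_nonneg M)] at hle
    exact (ENNReal.ofReal_le_ofReal_iff (mul_nonneg (NNReal.coe_nonneg M) (integral_nonneg hv0))).1 hle

lemma energy {L : AddSubgroup E} [Countable L] {R : ℝ} (hR0 : 0 ≤ R)
    (hR : ∀ x : E, ∃ l ∈ L, ‖x + l‖ ≤ R) {C : Set E} (hC : MeasurableSet C)
    (hCf : volume C ≠ ⊤)
    (hFD : ∀ x : E, ∃! l : L, l +ᵥ x ∈ C)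
    (μ₁ μ₂ : Measure E) [IsProbabilityMeasure μ₁] [IsProbabilityMeasure μ₂] {M : NNReal}
    (hM1 : ∀ S, μ₁ S ≤ M * volume (S ∩ C)) (hM2 : ∀ S, μ₂ S ≤ M * volume (S ∩ C)) :
    ∃ (φ ψ : E → ℝ), Continuous φ ∧ Per L φ ∧ Continuous ψ ∧ Per L ψ ∧
      (∀ x y, φ x + ψ y ≤ ‖x - y‖ ^ 2 / 2) ∧
      ∀ (u : E → ℝ) (G : E → E), (∀ x, HasGradientAt u (G x) x) → Continuous G → Per L u →
        (∀ x, ∀ l ∈ L, G (x + l) = G x) → ∀ s : ℝ, 0 < s →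
        ∫ y, u y ∂μ₂ - ∫ x, u x ∂μ₁ ≤ s / 2 * (M * ∫ x in C, ‖G x‖ ^ 2) +
          1 / s * (∫ x, φ x ∂μ₁ + ∫ y, ψ y ∂μ₂) := by
  obtain ⟨φ, ψ, T, B, hφ, hφp, hψ, hψp, hT, hle, heq, hη, hTB, hθ⟩ :=
    core hR0 hR hC hCf hFD μ₁ μ₂ hM1 hM2
  refine ⟨φ, ψ, hφ, hφp, hψ, hψp, hle, ?_⟩
  intro u G hu hG hup hGp s hs
  have huc : Continuous u := continuous_iff_continuousAt.2 fun x => (hu x).continuousAt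
  obtain ⟨Bu, -, hBu⟩ := per_bdd hR hup huc
  have hN : Continuous (fun x => ‖G x‖ ^ 2) := by fun_prop
  have hNp : Per L (fun x => ‖G x‖ ^ 2) := fun x l hl => by simp only [hGp x l hl]
  have hN1p : Per L (fun x => ‖G x‖) := fun x l hl => by simp only [hGp x l hl]
  obtain ⟨BG, hBG0, hBG⟩ := per_bdd hR hN1p hG.norm
  have hBG' : ∀ x, ‖G x‖ ≤ BG := fun x => (abs_le.1 (hBG x)).2
  have hB0 : 0 ≤ B := (norm_nonneg _).trans (hTB 0)
  have hXm : ∀ θ : ℝ, Measurable fun x => (1 - θ) • x + θ • T x := fun θ => by fun_prop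
  set W := ∫ x, ‖x - T x‖ ^ 2 ∂μ₁ with hW
  have hWi : Integrable (fun x => ‖x - T x‖ ^ 2) μ₁ := by
    apply Integrable.of_bound (C := B ^ 2) (by fun_prop)
    refine Eventually.of_forall fun x => ?_
    rw [Real.norm_of_nonneg (sq_nonneg _), norm_sub_rev]
    exact pow_le_pow_left₀ (norm_nonneg _) (hTB x) 2
  have hW2 : W / 2 = ∫ x, φ x ∂μ₁ + ∫ y, ψ y ∂μ₂ := by
    obtain ⟨b1, -, hb1⟩ := per_bdd hR hφp hφ
    obtain ⟨b2, -, hb2⟩ := per_bdd hR hψp hψ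
    have hi : Integrable (fun x => ψ (T x)) μ₁ :=
      Integrable.of_bound (hψ.measurable.comp hT).aestronglyMeasurable b2
        (Eventually.of_forall fun x => hb2 _)
    rw [← hη ψ hψ hψp, ← integral_add (integrable_per hφ hb1) hi, hW, ← integral_div]
    apply integral_congr_ae
    filter_upwards [heq] with x hx
    exact hx.symm
  set g : ℝ → ℝ := fun θ => ∫ x, u ((1 - θ) • x + θ • T x) ∂μ₁ with hg
  have hpath : ∀ (θ : ℝ) x, HasDerivAt (fun θ : ℝ => u ((1 - θ) • x + θ • T x))
      (inner ℝ (G ((1 - θ) • x + θ • T x)) (T x - x)) θ := by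
    intro θ x
    have h1 : HasDerivAt (fun θ : ℝ => (1 - θ) • x + θ • T x) (T x - x) θ := by
      have := (((hasDerivAt_id θ).const_sub 1).smul_const x).add ((hasDerivAt_id θ).smul_const (T x))
      have e : T x - x = (-1 : ℝ) • x + (1 : ℝ) • T x := by module
      rw [e]
      exact this
    have := (hu ((1 - θ) • x + θ • T x)).hasFDerivAt.comp_hasDerivAt θ h1
    rw [InnerProductSpace.toDual_apply_apply] at this
    exact this
  have hgd : ∀ θ, HasDerivAt g (∫ x, inner ℝ (G ((1 - θ) • x + θ • T x)) (T x - x) ∂μ₁) θ := by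
    intro θ
    have := hasDerivAt_integral_of_dominated_loc_of_deriv_le (μ := μ₁)
      (F := fun θ x => u ((1 - θ) • x + θ • T x))
      (F' := fun θ x => inner ℝ (G ((1 - θ) • x + θ • T x)) (T x - x))
      (x₀ := θ) (s := univ) (bound := fun _ => BG * B) univ_mem
      (Eventually.of_forall fun θ => (huc.measurable.comp (hXm θ)).aestronglyMeasurable)
      (Integrable.of_bound (huc.measurable.comp (hXm θ)).aestronglyMeasurable Bu
        (Eventually.of_forall fun x => hBu _))
      (by
        apply Measurable.aestronglyMeasurable
        exact Measurable.inner (hG.measurable.comp (hXm θ)) (hT.sub measurable_id))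
      (Eventually.of_forall fun x θ _ => by
        refine (norm_inner_le_norm _ _).trans ?_
        exact mul_le_mul (hBG' _) (hTB _) (norm_nonneg _) hBG0)
      (integrable_const _) (Eventually.of_forall fun x θ _ => hpath θ x)
    exact this.2
  have hbd : ∀ θ : ℝ, 0 < θ → θ < 1 → ∫ x, inner ℝ (G ((1 - θ) • x + θ • T x)) (T x - x) ∂μ₁ ≤
      s / 2 * (M * ∫ x in C, ‖G x‖ ^ 2) + 1 / s * (W / 2) := by
    intro θ h0 h1
    have h2 := hθ θ h0 h1 _ hN hNp fun x => sq_nonneg _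
    have hGi : Integrable (fun x => ‖G ((1 - θ) • x + θ • T x)‖ ^ 2) μ₁ := by
      apply Integrable.of_bound (C := BG ^ 2) (hN.measurable.comp (hXm θ)).aestronglyMeasurable
      refine Eventually.of_forall fun x => ?_
      simp only [Function.comp]
      rw [Real.norm_of_nonneg (sq_nonneg _)]
      exact pow_le_pow_left₀ (norm_nonneg _) (hBG' _) 2
    calc ∫ x, inner ℝ (G ((1 - θ) • x + θ • T x)) (T x - x) ∂μ₁
        ≤ ∫ x, (s / 2 * ‖G ((1 - θ) • x + θ • T x)‖ ^ 2 + 1 / s * (‖x - T x‖ ^ 2 / 2)) ∂μ₁ := by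
          apply integral_mono
          · apply Integrable.of_bound (C := BG * B)
            · apply Measurable.aestronglyMeasurable
              exact Measurable.inner (hG.measurable.comp (hXm θ)) (hT.sub measurable_id)
            · refine Eventually.of_forall fun x => (norm_inner_le_norm _ _).trans ?_
              exact mul_le_mul (hBG' _) (hTB _) (norm_nonneg _) hBG0
          · exact (hGi.const_mul _).add ((hWi.div_const 2).const_mul _)
          · intro x
            simp only
            generalize G ((1 - θ) • x + θ • T x) = a
            have e1 := real_inner_le_norm a (T x - x)
            rw [norm_sub_rev x]
            have e2 : ‖a‖ * ‖T x - x‖ ≤ s / 2 * ‖a‖ ^ 2 + 1 / s * (‖T x - x‖ ^ 2 / 2) := by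
              have := sq_nonneg (s * ‖a‖ - ‖T x - x‖)
              have e3 : s / 2 * ‖a‖ ^ 2 + 1 / s * (‖T x - x‖ ^ 2 / 2) - ‖a‖ * ‖T x - x‖ =
                (s * ‖a‖ - ‖T x - x‖) ^ 2 / (2 * s) := by field_simp; ring
              have : 0 ≤ (s * ‖a‖ - ‖T x - x‖) ^ 2 / (2 * s) := by positivity
              linarith
            exact e1.trans e2
      _ = s / 2 * (∫ x, ‖G ((1 - θ) • x + θ • T x)‖ ^ 2 ∂μ₁) + 1 / s * (W / 2) := by
          rw [integral_add (hGi.const_mul _) ((hWi.div_const 2).const_mul _), integral_const_mul,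
            integral_const_mul, integral_div]
      _ ≤ _ := by gcongr
  have hmv := exists_hasDerivAt_eq_slope g _ (show (0:ℝ) < 1 by norm_num)
    (fun θ _ => (hgd θ).continuousAt.continuousWithinAt) (fun θ _ => hgd θ)
  obtain ⟨θ, hθm, hsl⟩ := hmv
  have h1 := hbd θ hθm.1 hθm.2
  rw [hsl] at h1
  have g1 : g 1 = ∫ y, u y ∂μ₂ := by
    rw [← hη u huc hup]; simp [hg]
  have g0 : g 0 = ∫ x, u x ∂μ₁ := by simp [hg]
  rw [g1, g0, hW2] at h1
  simpa using h1

end FF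
end OTcore

open MeasureTheory Real Set
open scoped ENNReal
set_option linter.unusedSectionVars false
namespace OTcore
open Filter Topology

section GG
variable {d : ℕ}

lemma tfin : IsFiniteMeasure (torusMeasure d) := ⟨by
  rw [torusMeasure, Measure.restrict_apply_univ, Tcube, Real.volume_pi_Ico]
  simp⟩

lemma exists_lat (x : Fin d → ℝ) : ∃ k : Fin d → ℤ, x + latVec k ∈ Tcube d := by
  refine ⟨fun i => -⌊x i⌋, fun i _ => ?_⟩
  simp only [latVec, Pi.add_apply, Int.cast_neg, mem_Ico]
  constructor
  · linarith [Int.floor_le (x i)]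
  · linarith [Int.lt_floor_add_one (x i)]

lemma zper_bdd {V : Type*} [NormedAddCommGroup V] {f : (Fin d → ℝ) → V} (hf : Continuous f)
    (hp : ZPeriodic f) : ∃ B, 0 ≤ B ∧ ∀ x, ‖f x‖ ≤ B := by
  have hc : IsCompact (Set.univ.pi fun _ : Fin d => Set.Icc (0:ℝ) 1) :=
    isCompact_univ_pi fun _ => isCompact_Icc
  obtain ⟨B, hB⟩ := hc.exists_bound_of_continuousOn hf.continuousOn
  have key : ∀ x, ‖f x‖ ≤ B := by
    intro x
    obtain ⟨k, hk⟩ := exists_lat x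
    rw [← hp x k]
    exact hB _ fun i hi => Ico_subset_Icc_self (hk i hi)
  exact ⟨B, (norm_nonneg _).trans (key 0), key⟩

lemma zper_fderiv {f : (Fin d → ℝ) → ℝ} (hp : ZPeriodic f) : ZPeriodic (fderiv ℝ f) := by
  intro x k
  have : f = fun y => f (y + latVec k) := by ext y; rw [hp y k]
  conv_rhs => rw [this, fderiv_comp_add_right]

lemma dotP_eq (v : Fin d → ℝ) (φ : (Fin d → ℝ) → ℝ) (x : Fin d → ℝ) :
    dotP v (grad φ x) = fderiv ℝ φ x v := by
  conv_rhs => rw [pi_eq_sum_univ' v, map_sum]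
  unfold dotP grad
  apply Finset.sum_congr rfl
  intro i _
  rw [map_smul, smul_eq_mul]

lemma grad_cont {f : (Fin d → ℝ) → ℝ} (hf : ContDiff ℝ 1 f) : Continuous (grad f) := by
  have := hf.continuous_fderiv (by norm_num)
  unfold grad
  fun_prop

lemma grad_per {f : (Fin d → ℝ) → ℝ} (hp : ZPeriodic f) : ZPeriodic (grad f) := by
  intro x k
  unfold grad
  rw [zper_fderiv hp x k]

lemma mollify {u : (Fin d → ℝ) → ℝ} (hu : ContDiff ℝ 1 u) (hp : ZPeriodic u) :
    ∃ (w : ℕ → (Fin d → ℝ) → ℝ) (B : ℝ), (∀ n, ContDiff ℝ (⊤ : ℕ∞) (w n)) ∧ (∀ n, ZPeriodic (w n)) ∧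
      (∀ n x, ‖w n x‖ ≤ B) ∧ (∀ n x, ‖fderiv ℝ (w n) x‖ ≤ B) ∧
      (∀ x, Tendsto (fun n => w n x) atTop (𝓝 (u x))) ∧
      (∀ x, Tendsto (fun n => fderiv ℝ (w n) x) atTop (𝓝 (fderiv ℝ u x))) := by
  have hdc : Continuous (fderiv ℝ u) := hu.continuous_fderiv (by norm_num)
  obtain ⟨B1, hB10, hB1⟩ := zper_bdd hu.continuous hp
  obtain ⟨B2, hB20, hB2⟩ := zper_bdd hdc (zper_fderiv hp)
  set ρ : ℕ → ContDiffBump (0 : Fin d → ℝ) := fun n =>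
    ⟨1 / ((n:ℝ) + 1) / 2, 1 / ((n:ℝ) + 1), by positivity, half_lt_self (by positivity)⟩ with hρ
  have hρt : Tendsto (fun n => (ρ n).rOut) atTop (𝓝 0) := tendsto_one_div_add_atTop_nhds_zero_nat
  set r : ℕ → (Fin d → ℝ) → ℝ := fun n => (ρ n).normed volume with hr
  have hri : ∀ n, Integrable (r n) := fun n => (ρ n).integrable_normed
  have hrc : ∀ n, Continuous (r n) := fun n => (ρ n).continuous_normed
  have hr0 : ∀ n x, 0 ≤ r n x := fun n x => (ρ n).nonneg_normed x
  set w : ℕ → (Fin d → ℝ) → ℝ := fun n x => ∫ t, r n t • u (x - t) with hw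
  have hwd : ∀ n x, HasFDerivAt (w n) (∫ t, r n t • fderiv ℝ u (x - t)) x := by
    intro n x
    have hint : ∀ x, Integrable (fun t => r n t • u (x - t)) := fun x =>
      (hri n).smul_bdd B1
        (Continuous.aestronglyMeasurable (by have := hu.continuous; fun_prop))
        (Eventually.of_forall fun t => hB1 _)
    refine hasFDerivAt_integral_of_dominated_of_fderiv_le (s := univ)
      (F' := fun x t => r n t • fderiv ℝ u (x - t))
      (bound := fun t => r n t * B2) univ_mem
      (Eventually.of_forall fun x => (hint x).aestronglyMeasurable) (hint x) ?_ ?_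
      ((hri n).mul_const _) ?_
    · exact Continuous.aestronglyMeasurable (by have := hrc n; fun_prop)
    · refine Eventually.of_forall fun t x _ => ?_
      rw [norm_smul, Real.norm_of_nonneg (hr0 n t)]
      exact mul_le_mul_of_nonneg_left (hB2 _) (hr0 n t)
    · refine Eventually.of_forall fun t x _ => ?_
      have h1 : HasFDerivAt u (fderiv ℝ u (x - t)) (x - t) :=
        (hu.differentiable (by norm_num) _).hasFDerivAt
      have h2 := h1.comp x ((hasFDerivAt_id x).sub_const t)
      rw [ContinuousLinearMap.comp_id] at h2
      exact h2.const_smul (r n t)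
  have hb : ∀ (V : Type) [NormedAddCommGroup V] [NormedSpace ℝ V] (n : ℕ) (f : (Fin d → ℝ) → V) (B : ℝ),
      (∀ x, ‖f x‖ ≤ B) → ∀ x, ‖∫ t, r n t • f (x - t)‖ ≤ B := by
    intro V _ _ n f B hf x
    calc ‖∫ t, r n t • f (x - t)‖ ≤ ∫ t, r n t * B := by
          apply norm_integral_le_of_norm_le ((hri n).mul_const _)
          refine Eventually.of_forall fun t => ?_
          rw [norm_smul, Real.norm_of_nonneg (hr0 n t)]
          exact mul_le_mul_of_nonneg_left (hf _) (hr0 n t)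
      _ = B := by rw [integral_mul_const, (ρ n).integral_normed, one_mul]
  refine ⟨w, max B1 B2, ?_, ?_, ?_, ?_, ?_, ?_⟩
  · intro n
    have := HasCompactSupport.contDiff_convolution_left (n := (⊤ : ℕ∞)) (ContinuousLinearMap.lsmul ℝ ℝ)
      (μ := (volume : Measure (Fin d → ℝ))) (f := r n) (g := u)
      (ρ n).hasCompactSupport_normed (ρ n).contDiff_normed
      hu.continuous.locallyIntegrable
    exact this
  · intro n x k
    simp only [hw]
    congr 1
    ext t
    rw [add_sub_right_comm, hp]
  · intro n x
    exact (hb ℝ n u B1 hB1 x).trans (le_max_left _ _)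
  · intro n x
    rw [(hwd n x).fderiv]
    exact (hb _ n (fderiv ℝ u) B2 hB2 x).trans (le_max_right _ _)
  · intro x
    exact ContDiffBump.convolution_tendsto_right_of_continuous hρt hu.continuous x
  · intro x
    simp only [(hwd _ x).fderiv]
    exact ContDiffBump.convolution_tendsto_right_of_continuous hρt hdc x

lemma weak_ext {ε : ℝ} {U g u : (Fin d → ℝ) → ℝ} (hU : ContDiff ℝ 1 U) (hUp : ZPeriodic U)
    (hg : Integrable g (torusMeasure d)) (hw : IsWeakPoisson ε U g)
    (hu : ContDiff ℝ 1 u) (hp : ZPeriodic u) :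
    ε ^ 2 * ∫ x, dotP (grad U x) (grad u x) ∂(torusMeasure d) =
      - ∫ x, g x * u x ∂(torusMeasure d) := by
  have := tfin (d := d)
  obtain ⟨w, B, h1, h2, h3, h4, h5, h6⟩ := mollify hu hp
  obtain ⟨BU, hBU0, hBU⟩ := zper_bdd (grad_cont hU) (grad_per hUp)
  have hGm := grad_cont hU
  simp only [dotP_eq]
  have hA : Tendsto (fun n => ∫ x, fderiv ℝ (w n) x (grad U x) ∂(torusMeasure d)) atTop
      (𝓝 (∫ x, fderiv ℝ u x (grad U x) ∂(torusMeasure d))) := by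
    apply tendsto_integral_of_dominated_convergence (fun _ => B * BU)
    · intro n
      have := (h1 n).continuous_fderiv (by simp)
      exact Continuous.aestronglyMeasurable (by fun_prop)
    · exact integrable_const _
    · intro n
      refine Eventually.of_forall fun x => (ContinuousLinearMap.le_opNorm _ _).trans ?_
      exact mul_le_mul (h4 n x) (hBU x) (norm_nonneg _) ((norm_nonneg _).trans (h4 n x))
    · refine Eventually.of_forall fun x => ?_
      exact ((ContinuousLinearMap.apply ℝ ℝ (grad U x)).continuous.tendsto _).comp (h6 x)
  have hB : Tendsto (fun n => ∫ x, g x * w n x ∂(torusMeasure d)) atTop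
      (𝓝 (∫ x, g x * u x ∂(torusMeasure d))) := by
    apply tendsto_integral_of_dominated_convergence (fun x => ‖g x‖ * B)
    · intro n
      exact hg.aestronglyMeasurable.mul (h1 n).continuous.aestronglyMeasurable
    · exact hg.norm.mul_const _
    · intro n
      refine Eventually.of_forall fun x => ?_
      rw [norm_mul]
      exact mul_le_mul_of_nonneg_left (h3 n x) (norm_nonneg _)
    · exact Eventually.of_forall fun x => (h5 x).const_mul _
  refine tendsto_nhds_unique (hA.const_mul (ε ^ 2)) (hB.neg.congr fun n => ?_)
  rw [← hw (w n) (h1 n) (h2 n)]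
  simp only [dotP_eq]

end GG
end OTcore

open MeasureTheory Real Set
open scoped ENNReal
set_option linter.unusedSectionVars false
namespace OTcore
open Filter Topology

section HH
variable {d : ℕ}

lemma norm_toLp (v : Fin d → ℝ) : ‖(WithLp.toLp 2 v : EuclideanSpace ℝ (Fin d))‖ = euclNorm v := by
  rw [EuclideanSpace.norm_eq]
  simp [euclNorm]

noncomputable def latHom (d : ℕ) : (Fin d → ℤ) →+ EuclideanSpace ℝ (Fin d) where
  toFun k := WithLp.toLp 2 (latVec k)
  map_zero' := by ext i; simp [latVec]
  map_add' := by intro a b; ext i; simp [latVec]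

lemma tcube_norm {v : Fin d → ℝ} (hv : v ∈ Tcube d) : euclNorm v ≤ √d := by
  unfold euclNorm
  apply Real.sqrt_le_sqrt
  calc ∑ i, v i ^ 2 ≤ ∑ i : Fin d, (1:ℝ) := by
        apply Finset.sum_le_sum
        intro i _
        have := hv i (mem_univ i)
        nlinarith [this.1, this.2]
    _ = d := by simp

lemma tcube_meas : MeasurableSet (Tcube d) := MeasurableSet.univ_pi fun _ => measurableSet_Ico

lemma lat_uniq {x : Fin d → ℝ} {k k' : Fin d → ℤ} (h : x + latVec k ∈ Tcube d)
    (h' : x + latVec k' ∈ Tcube d) : k = k' := by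
  ext i
  have h1 := h i (mem_univ i)
  have h2 := h' i (mem_univ i)
  simp only [latVec, Pi.add_apply, mem_Ico] at h1 h2
  have a1 : (k i : ℝ) < k' i + 1 := by linarith
  have a2 : (k' i : ℝ) < k i + 1 := by linarith
  have b1 : k i < k' i + 1 := by exact_mod_cast a1
  have b2 : k' i < k i + 1 := by exact_mod_cast a2
  omega

lemma lat_fd (x : EuclideanSpace ℝ (Fin d)) :
    ∃! l : (latHom d).range, l +ᵥ x ∈ (WithLp.ofLp ⁻¹' Tcube d : Set (EuclideanSpace ℝ (Fin d))) := by
  obtain ⟨k, hk⟩ := exists_lat (WithLp.ofLp x)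
  have e : ∀ k, WithLp.ofLp (latHom d k + x) = WithLp.ofLp x + latVec k := by
    intro k
    ext i
    simp [latHom, add_comm]
  refine ⟨⟨latHom d k, k, rfl⟩, ?_, ?_⟩
  · change WithLp.ofLp (latHom d k + x) ∈ Tcube d
    rw [e]; exact hk
  · rintro ⟨_, k', rfl⟩ h
    change WithLp.ofLp (latHom d k' + x) ∈ Tcube d at h
    rw [e] at h
    have := lat_uniq h hk
    subst this
    rfl

lemma dens_prob {h : (Fin d → ℝ) → ℝ} (hm : Measurable h) (hnn : ∀ x, 0 ≤ h x)
    (hint : (∫ x, h x ∂(torusMeasure d)) = 1) : IsProbabilityMeasure (densMeasure h) := by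
  have hi : Integrable h (torusMeasure d) := by
    by_contra hc
    rw [integral_undef hc] at hint
    norm_num at hint
  refine ⟨?_⟩
  rw [densMeasure, withDensity_apply _ MeasurableSet.univ, Measure.restrict_univ,
    ← ofReal_integral_eq_lintegral_ofReal hi (Eventually.of_forall hnn), hint]
  simp

lemma dens_le {h : (Fin d → ℝ) → ℝ} (hL : MemLp h ⊤ (torusMeasure d)) {M : ℝ}
    (hM : LpNorm ⊤ h ≤ M) (S : Set (Fin d → ℝ)) :
    densMeasure h S ≤ (Real.toNNReal M : ℝ≥0∞) * volume (S ∩ Tcube d) := by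
  have hle : densMeasure h ≤ (Real.toNNReal M : ℝ≥0∞) • torusMeasure d := by
    rw [densMeasure, ← withDensity_const]
    apply withDensity_mono
    filter_upwards [ae_le_eLpNormEssSup (f := h) (μ := torusMeasure d)] with x hx
    have h1 : eLpNormEssSup h (torusMeasure d) = ENNReal.ofReal (LpNorm ⊤ h) := by
      rw [LpNorm, ENNReal.ofReal_toReal hL.2.ne, eLpNorm_exponent_top]
    rw [h1] at hx
    calc ENNReal.ofReal (h x) ≤ ENNReal.ofReal ‖h x‖ := ENNReal.ofReal_le_ofReal (le_abs_self _)
      _ = ‖h x‖ₑ := ofReal_norm _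
      _ ≤ _ := hx
      _ ≤ ENNReal.ofReal M := ENNReal.ofReal_le_ofReal hM
  have := hle S
  rw [Measure.smul_apply, smul_eq_mul, torusMeasure, Measure.restrict_apply' tcube_meas] at this
  exact this

lemma dens_int {h : (Fin d → ℝ) → ℝ} (hm : Measurable h) (hnn : ∀ x, 0 ≤ h x) (u : (Fin d → ℝ) → ℝ) :
    ∫ x, u x ∂(densMeasure h) = ∫ x, h x * u x ∂(torusMeasure d) := by
  rw [densMeasure, integral_withDensity_eq_integral_toReal_smul (by fun_prop) (by simp)]
  simp [ENNReal.toReal_ofReal (hnn _)]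

lemma tdist_nonneg (x y : Fin d → ℝ) : 0 ≤ tdist x y :=
  Real.iInf_nonneg fun _ => Real.sqrt_nonneg _

lemma tdist_le (x y : Fin d → ℝ) : tdist x y ≤ √d := by
  obtain ⟨k, hk⟩ := exists_lat (x - y)
  have hb : BddBelow (range fun k : Fin d → ℤ => euclNorm (x - y + latVec k)) :=
    ⟨0, by rintro _ ⟨k, rfl⟩; exact Real.sqrt_nonneg _⟩
  exact (ciInf_le hb k).trans (tcube_norm hk)

lemma tdist_meas : Measurable fun z : (Fin d → ℝ) × (Fin d → ℝ) => tdist z.1 z.2 := by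
  unfold tdist
  apply Measurable.iInf
  intro k
  unfold euclNorm
  fun_prop

lemma dual_le {φ ψ : EuclideanSpace ℝ (Fin d) → ℝ}
    (hφp : Per (latHom d).range φ) (hle : ∀ x y, φ x + ψ y ≤ ‖x - y‖ ^ 2 / 2) (x y : Fin d → ℝ) :
    2 * (φ (WithLp.toLp 2 x) + ψ (WithLp.toLp 2 y)) ≤ tdist x y ^ 2 := by
  set a := 2 * (φ (WithLp.toLp 2 x) + ψ (WithLp.toLp 2 y)) with ha
  have h1 : ∀ k : Fin d → ℤ, a ≤ euclNorm (x - y + latVec k) ^ 2 := by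
    intro k
    have h2 := hle (WithLp.toLp 2 x + latHom d k) (WithLp.toLp 2 y)
    rw [hφp _ _ ⟨k, rfl⟩] at h2
    have h3 : (WithLp.toLp 2 x + latHom d k - WithLp.toLp 2 y : EuclideanSpace ℝ (Fin d)) =
      WithLp.toLp 2 (x - y + latVec k) := by
      ext i; simp [latHom]; ring
    rw [h3, norm_toLp] at h2
    linarith
  rcases le_total a 0 with h0 | h0
  · exact h0.trans (sq_nonneg _)
  · have : √a ≤ tdist x y := by
      apply le_ciInf
      intro k
      exact Real.sqrt_le_iff.2 ⟨Real.sqrt_nonneg _, h1 k⟩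
    calc a = √a ^ 2 := (Real.sq_sqrt h0).symm
      _ ≤ _ := pow_le_pow_left₀ (Real.sqrt_nonneg _) this 2

lemma wass_ge {φ ψ : EuclideanSpace ℝ (Fin d) → ℝ} (hφ : Continuous φ) (hψ : Continuous ψ) {B : ℝ}
    (hφB : ∀ x, |φ x| ≤ B) (hψB : ∀ x, |ψ x| ≤ B)
    (hφp : Per (latHom d).range φ) (hle : ∀ x y, φ x + ψ y ≤ ‖x - y‖ ^ 2 / 2)
    (μ ν : Measure (Fin d → ℝ)) [IsProbabilityMeasure μ] [IsProbabilityMeasure ν] :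
    2 * (∫ x, φ (WithLp.toLp 2 x) ∂μ + ∫ y, ψ (WithLp.toLp 2 y) ∂ν) ≤ WassPow 2 μ ν := by
  unfold WassPow
  apply le_csInf
  · refine ⟨_, μ.prod ν, inferInstance, ⟨?_, ?_⟩, rfl⟩
    · simp [Measure.map_fst_prod]
    · simp [Measure.map_snd_prod]
  · rintro c ⟨cpl, hp, ⟨h1, h2⟩, rfl⟩
    have hφc : Continuous fun x : Fin d → ℝ => φ (WithLp.toLp 2 x) :=
      hφ.comp (PiLp.continuous_toLp 2 _)
    have hψc : Continuous fun x : Fin d → ℝ => ψ (WithLp.toLp 2 x) :=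
      hψ.comp (PiLp.continuous_toLp 2 _)
    have i1 : Integrable (fun z : (Fin d → ℝ) × (Fin d → ℝ) => φ (WithLp.toLp 2 z.1)) cpl :=
      Integrable.of_bound (hφc.comp continuous_fst).aestronglyMeasurable B
        (Eventually.of_forall fun z => hφB _)
    have i2 : Integrable (fun z : (Fin d → ℝ) × (Fin d → ℝ) => ψ (WithLp.toLp 2 z.2)) cpl :=
      Integrable.of_bound (hψc.comp continuous_snd).aestronglyMeasurable B
        (Eventually.of_forall fun z => hψB _)
    have i3 : Integrable (fun z : (Fin d → ℝ) × (Fin d → ℝ) => tdist z.1 z.2 ^ (2:ℝ)) cpl := by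
      apply Integrable.of_bound (C := √d ^ (2:ℝ)) (tdist_meas.pow_const _).aestronglyMeasurable
      refine Eventually.of_forall fun z => ?_
      rw [Real.norm_of_nonneg (Real.rpow_nonneg (tdist_nonneg _ _) _)]
      exact Real.rpow_le_rpow (tdist_nonneg _ _) (tdist_le _ _) (by norm_num)
    have e1 : ∫ x, φ (WithLp.toLp 2 x) ∂μ = ∫ z, φ (WithLp.toLp 2 z.1) ∂cpl := by
      rw [← h1, integral_map measurable_fst.aemeasurable hφc.aestronglyMeasurable]
    have e2 : ∫ x, ψ (WithLp.toLp 2 x) ∂ν = ∫ z, ψ (WithLp.toLp 2 z.2) ∂cpl := by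
      rw [← h2, integral_map measurable_snd.aemeasurable hψc.aestronglyMeasurable]
    rw [e1, e2, ← integral_add i1 i2, ← integral_const_mul]
    apply integral_mono ((i1.add i2).const_mul _) i3
    intro z
    simp only [Real.rpow_two]
    exact dual_le hφp hle z.1 z.2

lemma hasGrad {u : (Fin d → ℝ) → ℝ} (hu : ContDiff ℝ 1 u) (x : EuclideanSpace ℝ (Fin d)) :
    HasGradientAt (fun y : EuclideanSpace ℝ (Fin d) => u (WithLp.ofLp y))
      (WithLp.toLp 2 (grad u (WithLp.ofLp x))) x := by
  rw [hasGradientAt_iff_hasFDerivAt]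
  have h1 : HasFDerivAt u (fderiv ℝ u (WithLp.ofLp x)) (WithLp.ofLp x) :=
    (hu.differentiable (by norm_num) _).hasFDerivAt
  have h2 := h1.comp x (PiLp.continuousLinearEquiv 2 ℝ (fun _ : Fin d => ℝ)).hasFDerivAt
  have e : InnerProductSpace.toDual ℝ (EuclideanSpace ℝ (Fin d))
      (WithLp.toLp 2 (grad u (WithLp.ofLp x))) =
      (fderiv ℝ u (WithLp.ofLp x)).comp
        ((PiLp.continuousLinearEquiv 2 ℝ (fun _ : Fin d => ℝ)) :
          EuclideanSpace ℝ (Fin d) →L[ℝ] (Fin d → ℝ)) := by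
    refine ContinuousLinearMap.ext fun v => ?_
    rw [InnerProductSpace.toDual_apply_apply, PiLp.inner_apply]
    have := dotP_eq (WithLp.ofLp v) u (WithLp.ofLp x)
    simp only [ContinuousLinearMap.comp_apply]
    refine Eq.trans ?_ this
    simp [dotP]
  rw [e]
  exact h2

lemma main (ε : ℝ) (hε : 0 < ε)
    (h₁ h₂ U₁ U₂ : (Fin d → ℝ) → ℝ)
    (hm₁ : Measurable h₁) (hm₂ : Measurable h₂)
    (hnn₁ : ∀ x, 0 ≤ h₁ x) (hnn₂ : ∀ x, 0 ≤ h₂ x)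
    (hint₁ : (∫ x, h₁ x ∂(torusMeasure d)) = 1)
    (hint₂ : (∫ x, h₂ x ∂(torusMeasure d)) = 1)
    (hL₁ : MemLp h₁ ⊤ (torusMeasure d)) (hL₂ : MemLp h₂ ⊤ (torusMeasure d))
    (hU₁ : ContDiff ℝ 1 U₁) (hU₂ : ContDiff ℝ 1 U₂)
    (hUper₁ : ZPeriodic U₁) (hUper₂ : ZPeriodic U₂)
    (hw₁ : IsWeakPoisson ε U₁ (fun x => h₁ x - 1))
    (hw₂ : IsWeakPoisson ε U₂ (fun x => h₂ x - 1)) :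
    (∫ x, euclNorm (grad U₁ x - grad U₂ x) ^ 2 ∂(torusMeasure d)) ≤
      1 / ε ^ 4 * max (LpNorm ⊤ h₁) (LpNorm ⊤ h₂) *
        WassPow 2 (densMeasure h₁) (densMeasure h₂) := by
  have := tfin (d := d)
  have hp₁ := dens_prob hm₁ hnn₁ hint₁
  have hp₂ := dens_prob hm₂ hnn₂ hint₂
  set M := max (LpNorm ⊤ h₁) (LpNorm ⊤ h₂) with hMdef
  set tl : (Fin d → ℝ) ≃ᵐ EuclideanSpace ℝ (Fin d) := MeasurableEquiv.toLp 2 (Fin d → ℝ) with htl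
  have htl' : ∀ x, tl x = WithLp.toLp 2 x := fun x => rfl
  have hmp : MeasurePreserving tl volume volume := PiLp.volume_preserving_toLp (Fin d)
  set C : Set (EuclideanSpace ℝ (Fin d)) := WithLp.ofLp ⁻¹' Tcube d with hCdef
  have hpre : tl ⁻¹' C = Tcube d := rfl
  have hC : MeasurableSet C := (WithLp.measurable_ofLp 2 _) tcube_meas
  have hvT : volume (Tcube d) = 1 := by rw [Tcube, Real.volume_pi_Ico]; simp
  have hvC : volume C = 1 := by rw [← hmp.measure_preimage_equiv, hpre, hvT]
  have hcount : Countable (latHom d).range := (Set.countable_range (latHom d)).to_subtype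
  have hR : ∀ x : EuclideanSpace ℝ (Fin d), ∃ l ∈ (latHom d).range, ‖x + l‖ ≤ √d := by
    intro x
    obtain ⟨k, hk⟩ := exists_lat (WithLp.ofLp x)
    refine ⟨latHom d k, ⟨k, rfl⟩, ?_⟩
    have : x + latHom d k = WithLp.toLp 2 (WithLp.ofLp x + latVec k) := by ext i; simp [latHom]
    rw [this, norm_toLp]
    exact tcube_norm hk
  have hμ : ∀ h : (Fin d → ℝ) → ℝ, MemLp h ⊤ (torusMeasure d) → LpNorm ⊤ h ≤ M → ∀ S,
      (densMeasure h).map tl S ≤ (Real.toNNReal M : ℝ≥0∞) * volume (S ∩ C) := by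
    intro h hL hM S
    rw [tl.map_apply, ← hmp.measure_preimage_equiv, preimage_inter, hpre]
    exact dens_le hL hM _
  have q1 : IsProbabilityMeasure ((densMeasure h₁).map tl) :=
    Measure.isProbabilityMeasure_map tl.measurable.aemeasurable
  have q2 : IsProbabilityMeasure ((densMeasure h₂).map tl) :=
    Measure.isProbabilityMeasure_map tl.measurable.aemeasurable
  have hμ1 := hμ h₁ hL₁ (le_max_left _ _)
  have hμ2 := hμ h₂ hL₂ (le_max_right _ _)
  have hMpos : 0 < M := by
    by_contra hc
    have := hμ1 univ
    rw [measure_univ, Real.toNNReal_of_nonpos (not_lt.1 hc)] at this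
    simp at this
  obtain ⟨φ, ψ, hφ, hφp, hψ, hψp, hle, hen⟩ := energy (Real.sqrt_nonneg (d:ℝ)) hR hC
    (by rw [hvC]; simp) lat_fd ((densMeasure h₁).map tl) ((densMeasure h₂).map tl) hμ1 hμ2
  obtain ⟨B1, -, hB1⟩ := per_bdd hR hφp hφ
  obtain ⟨B2, -, hB2⟩ := per_bdd hR hψp hψ
  have hW := wass_ge hφ hψ (B := max B1 B2) (fun x => (hB1 x).trans (le_max_left _ _))
    (fun x => (hB2 x).trans (le_max_right _ _)) hφp hle (densMeasure h₁) (densMeasure h₂)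
  set u : (Fin d → ℝ) → ℝ := fun x => U₁ x - U₂ x with hu
  have huC : ContDiff ℝ 1 u := hU₁.sub hU₂
  have hup : ZPeriodic u := fun x k => by simp only [hu, hUper₁ x k, hUper₂ x k]
  have hgr : ∀ x, grad u x = grad U₁ x - grad U₂ x := by
    intro x
    ext i
    have d1 := hU₁.differentiable (by norm_num) x
    have d2 := hU₂.differentiable (by norm_num) x
    simp only [grad, hu, Pi.sub_apply]
    rw [fderiv_fun_sub d1 d2]
    rfl
  have hgc := grad_cont huC
  have hpr : ∀ (x : EuclideanSpace ℝ (Fin d)), ∀ l ∈ (latHom d).range, ∃ k,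
      WithLp.ofLp (x + l) = WithLp.ofLp x + latVec k := by
    rintro x _ ⟨k, rfl⟩
    exact ⟨k, by ext i; simp [latHom]⟩
  have hs : 0 < ε ^ 2 / M := by positivity
  have hE := hen (fun y => u (WithLp.ofLp y)) (fun y => WithLp.toLp 2 (grad u (WithLp.ofLp y)))
    (hasGrad huC) ((PiLp.continuous_toLp 2 _).comp (hgc.comp (PiLp.continuous_ofLp 2 _)))
    (fun x l hl => by
      obtain ⟨k, hk⟩ := hpr x l hl
      simp only [hk, hup _ k])
    (fun x l hl => by
      obtain ⟨k, hk⟩ := hpr x l hl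
      simp only [hk, grad_per hup _ k]) _ hs
  rw [tl.measurableEmbedding.integral_map, tl.measurableEmbedding.integral_map,
    tl.measurableEmbedding.integral_map, tl.measurableEmbedding.integral_map,
    ← hmp.setIntegral_preimage_emb tl.measurableEmbedding, hpre] at hE
  simp only [htl', norm_toLp] at hE
  set D := ∫ x, φ (WithLp.toLp 2 x) ∂(densMeasure h₁) + ∫ y, ψ (WithLp.toLp 2 y) ∂(densMeasure h₂)
    with hD
  rw [dens_int hm₁ hnn₁, dens_int hm₂ hnn₂] at hE
  have hI : ∫ x in Tcube d, euclNorm (grad u x) ^ 2 =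
    ∫ x, euclNorm (grad U₁ x - grad U₂ x) ^ 2 ∂(torusMeasure d) := by
    simp only [hgr, torusMeasure]
  rw [hI, Real.coe_toNNReal _ hMpos.le] at hE
  set I := ∫ x, euclNorm (grad U₁ x - grad U₂ x) ^ 2 ∂(torusMeasure d) with hIdef
  have ih₁ : Integrable h₁ (torusMeasure d) := hL₁.integrable (by simp)
  have ih₂ : Integrable h₂ (torusMeasure d) := hL₂.integrable (by simp)
  have k1 := weak_ext hU₁ hUper₁ (ih₁.sub (integrable_const 1)) hw₁ huC hup
  have k2 := weak_ext hU₂ hUper₂ (ih₂.sub (integrable_const 1)) hw₂ huC hup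
  obtain ⟨Bu, -, hBu⟩ := zper_bdd huC.continuous hup
  have ibd : ∀ h : (Fin d → ℝ) → ℝ, Integrable h (torusMeasure d) →
      Integrable (fun x => h x * u x) (torusMeasure d) := fun h hh =>
    hh.mul_bdd (c := Bu) huC.continuous.aestronglyMeasurable (Eventually.of_forall hBu)
  have iu : Integrable u (torusMeasure d) :=
    Integrable.of_bound huC.continuous.aestronglyMeasurable Bu (Eventually.of_forall hBu)
  have idot : ∀ U : (Fin d → ℝ) → ℝ, ContDiff ℝ 1 U → ZPeriodic U →
      Integrable (fun x => dotP (grad U x) (grad u x)) (torusMeasure d) := by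
    intro U hU hUp
    have c1 := grad_cont hU
    have cc : Continuous (fun x => dotP (grad U x) (grad u x)) := by unfold dotP; fun_prop
    have cp : ZPeriodic (fun x => dotP (grad U x) (grad u x)) := fun x k => by
      simp only [grad_per hUp x k, grad_per hup x k]
    obtain ⟨b, -, hb⟩ := zper_bdd cc cp
    exact Integrable.of_bound cc.aestronglyMeasurable b (Eventually.of_forall hb)
  have hIe : I = ∫ x, dotP (grad U₁ x) (grad u x) ∂(torusMeasure d) -
      ∫ x, dotP (grad U₂ x) (grad u x) ∂(torusMeasure d) := by
    rw [← integral_sub (idot U₁ hU₁ hUper₁) (idot U₂ hU₂ hUper₂), hIdef]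
    congr 1
    ext x
    rw [hgr, euclNorm, Real.sq_sqrt (Finset.sum_nonneg fun i _ => sq_nonneg _)]
    simp only [dotP, Pi.sub_apply, ← Finset.sum_sub_distrib]
    apply Finset.sum_congr rfl
    intro i _
    ring
  have s1 : ∫ x, (h₁ x - 1) * u x ∂(torusMeasure d) =
      ∫ x, h₁ x * u x ∂(torusMeasure d) - ∫ x, u x ∂(torusMeasure d) := by
    rw [← integral_sub (ibd h₁ ih₁) iu]
    congr 1; ext x; ring
  have s2 : ∫ x, (h₂ x - 1) * u x ∂(torusMeasure d) =
      ∫ x, h₂ x * u x ∂(torusMeasure d) - ∫ x, u x ∂(torusMeasure d) := by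
    rw [← integral_sub (ibd h₂ ih₂) iu]
    congr 1; ext x; ring
  simp only [Pi.sub_apply] at k1 k2
  rw [s1] at k1
  rw [s2] at k2
  have hfin : ε ^ 2 * I ≤ ε ^ 2 / M / 2 * (M * I) + 1 / (ε ^ 2 / M) * D := by
    refine le_trans (le_of_eq ?_) hE
    rw [hIe, mul_sub, k1, k2]; ring
  have e1 : ε ^ 2 / M / 2 * (M * I) = ε ^ 2 * I / 2 := by field_simp
  have e2 : 1 / (ε ^ 2 / M) * D = M * D / ε ^ 2 := by field_simp
  rw [e1, e2] at hfin
  have h3 : ε ^ 2 * I ≤ M * (2 * D) / ε ^ 2 := by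
    have : M * (2 * D) / ε ^ 2 = 2 * (M * D / ε ^ 2) := by ring
    linarith
  rw [le_div_iff₀ (by positivity)] at h3
  have h4 : M * (2 * D) ≤ M * WassPow 2 (densMeasure h₁) (densMeasure h₂) :=
    mul_le_mul_of_nonneg_left hW hMpos.le
  rw [mul_assoc, one_div, inv_mul_eq_div, le_div_iff₀ (by positivity)]
  linarith

end HH
end OTcore

/-- Loeper-type stability estimate: for weak solutions `Ū_i` of
`ε² Δ Ū_i = h_i − 1` with `h_i` probability densities in `L^∞(𝕋^d)`,
`‖∇Ū₁ − ∇Ū₂‖²_{L²} ≤ ε^{-4} maxᵢ ‖h_i‖_{L^∞} W₂²(h₁ dx, h₂ dx)`. -/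
theorem statement8 (d : ℕ) (hd : 1 ≤ d) (ε : ℝ) (hε : 0 < ε)
    (h₁ h₂ U₁ U₂ : (Fin d → ℝ) → ℝ)
    (hm₁ : Measurable h₁) (hm₂ : Measurable h₂)
    (hper₁ : ZPeriodic h₁) (hper₂ : ZPeriodic h₂)
    (hnn₁ : ∀ x, 0 ≤ h₁ x) (hnn₂ : ∀ x, 0 ≤ h₂ x)
    (hint₁ : (∫ x, h₁ x ∂(torusMeasure d)) = 1)
    (hint₂ : (∫ x, h₂ x ∂(torusMeasure d)) = 1)
    (hL₁ : MemLp h₁ ⊤ (torusMeasure d)) (hL₂ : MemLp h₂ ⊤ (torusMeasure d))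
    (hU₁ : ContDiff ℝ 1 U₁) (hU₂ : ContDiff ℝ 1 U₂)
    (hUper₁ : ZPeriodic U₁) (hUper₂ : ZPeriodic U₂)
    (hw₁ : IsWeakPoisson ε U₁ (fun x => h₁ x - 1))
    (hw₂ : IsWeakPoisson ε U₂ (fun x => h₂ x - 1)) :
    (∫ x, euclNorm (grad U₁ x - grad U₂ x) ^ 2 ∂(torusMeasure d)) ≤
      1 / ε ^ 4 * max (LpNorm ⊤ h₁) (LpNorm ⊤ h₂) *
        WassPow 2 (densMeasure h₁) (densMeasure h₂) := by
  exact OTcore.main ε hε h₁ h₂ U₁ U₂ hm₁ hm₂ hnn₁ hnn₂ hint₁ hint₂ hL₁ hL₂ hU₁ hU₂ hUper₁ hUper₂ hw₁ hw₂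
end
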